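/- There are infinitely many integers r ≥ 0 with γ_{r+1} > γ_r, and infinitely many integers r ≥ 0 with γ_{r+1} < γ_r. -/

import Mathlib

open Filter

/-- Generalized Euler constant for a finite set of primes `P`:
`γ(P) = ∏_{p∈P}(1 - 1/p) * (γ + ∑_{p∈P} log p / (p-1))`. -/
noncomputable def gammaP (P : Finset ℕ) : ℝ :=
  (∏ p ∈ P, (1 - 1 / (p : ℝ))) *
    (Real.eulerMascheroniConstant + ∑ p ∈ P, Real.log p / ((p : ℝ) - 1))

/-- `γ_r = γ({p_1, …, p_r})`, the generalized Euler constant for the first `r` primes. -/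
noncomputable def gammaR (r : ℕ) : ℝ :=
  gammaP ((Finset.range r).image (Nat.nth Nat.Prime))

open Topology

section Landau
open MeasureTheory ProbabilityTheory

variable {Ω : Type*} [MeasurableSpace Ω] {μ : Measure Ω} {X : Ω → ℝ}

theorem integrable_exp_mul_of_le_of_nonpos (hX : AEMeasurable X μ) (hX0 : ∀ᵐ ω ∂μ, X ω ≤ 0)
    {s t : ℝ} (hst : s ≤ t) (hs : Integrable (fun ω ↦ Real.exp (s * X ω)) μ) :
    Integrable (fun ω ↦ Real.exp (t * X ω)) μ := by
  refine hs.mono' (by fun_prop) ?_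
  filter_upwards [hX0] with ω h
  rw [Real.norm_eq_abs, Real.abs_exp]
  exact Real.exp_le_exp.2 (mul_le_mul_of_nonpos_right hst h)

theorem ofReal_image_Ioi_isPreconnected (b : ℝ) :
    IsPreconnected (Complex.ofReal '' Set.Ioi b) :=
  isPreconnected_Ioi.image _ Complex.continuous_ofReal.continuousOn

theorem frequently_ofReal_nhdsWithin_ne {p : ℂ → Prop} {t : ℝ}
    (h : ∀ᶠ x : ℝ in 𝓝 t, p x) : ∃ᶠ z in 𝓝[≠] (t : ℂ), p z := by
  have h1 : Tendsto (fun x : ℝ ↦ (x : ℂ)) (𝓝[≠] t) (𝓝[≠] (t : ℂ)) := by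
    refine tendsto_nhdsWithin_iff.2 ⟨(Complex.continuous_ofReal.tendsto t).mono_left
      nhdsWithin_le_nhds, ?_⟩
    filter_upwards [self_mem_nhdsWithin] with x hx
    simpa using hx
  exact h1.frequently (h.filter_mono nhdsWithin_le_nhds).frequently

/-- If a power series with nonnegative coefficients represents an exponential moment, the
moment is finite on the disc of convergence. -/
theorem integrable_exp_of_differentiableOn_ball (hX : AEMeasurable X μ)
    (hX0 : ∀ᵐ ω ∂μ, X ω ≤ 0) {f : ℂ → ℂ} {c ρ r : ℝ} (hr : 0 ≤ r) (hrρ : r < ρ)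
    (hf : DifferentiableOn ℂ f (Metric.ball (c : ℂ) ρ))
    (hc : c ∈ interior (integrableExpSet X μ)) (hfc : f =ᶠ[𝓝 (c : ℂ)] complexMGF X μ) :
    Integrable (fun ω ↦ Real.exp ((c - r) * X ω)) μ := by
  have hz : (c - r : ℂ) ∈ Metric.ball (c : ℂ) ρ := by
    simp [abs_of_nonneg hr, hrρ]
  have hsum := Complex.hasSum_taylorSeries_on_ball hf hz
  set g : ℕ → Ω → ℝ := fun n ω ↦ (-r * X ω) ^ n / n.factorial * Real.exp (c * X ω) with hg
  have hgi : ∀ n, Integrable (g n) μ := by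
    intro n
    have := integrable_pow_mul_exp_of_mem_interior_integrableExpSet hc n
    convert this.const_mul ((-r) ^ n / n.factorial) using 2 with ω
    simp only [hg]; ring
  have hg0 : ∀ n, ∀ᵐ ω ∂μ, 0 ≤ g n ω := by
    intro n
    filter_upwards [hX0] with ω h
    have : 0 ≤ -r * X ω := by nlinarith
    positivity
  have hterm : ∀ n : ℕ, (↑(∫ ω, g n ω ∂μ) : ℂ) =
      ((n.factorial : ℂ)⁻¹ • ((c - r : ℂ) - c) ^ n • iteratedDeriv n f c) := by
    intro n
    rw [hfc.iteratedDeriv_eq, iteratedDeriv_complexMGF (by simpa using hc), ← integral_complex_ofReal,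
      smul_smul, smul_eq_mul, ← integral_const_mul]
    congr 1 with ω
    simp only [hg]
    push_cast
    rw [mul_pow]
    ring
  have hs : Summable fun n ↦ ∫ ω, g n ω ∂μ := by
    have := hsum.summable
    rw [← Complex.summable_ofReal]
    exact this.congr fun n ↦ (hterm n).symm
  have hlin : ∀ᵐ ω ∂μ, HasSum (fun n ↦ g n ω) (Real.exp ((c - r) * X ω)) := by
    refine ae_of_all _ fun ω ↦ ?_
    have h1 := NormedSpace.expSeries_div_hasSum_exp (𝔸 := ℝ) (-r * X ω)
    rw [← Real.exp_eq_exp_ℝ] at h1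
    have h2 : Real.exp ((c - r) * X ω) = Real.exp (-r * X ω) * Real.exp (c * X ω) := by
      rw [← Real.exp_add]; ring_nf
    rw [h2]
    exact h1.mul_right (Real.exp (c * X ω))
  refine ⟨by fun_prop, ?_⟩
  rw [hasFiniteIntegral_iff_ofReal (ae_of_all _ fun _ ↦ (Real.exp_pos _).le)]
  have h2 : ∫⁻ ω, ENNReal.ofReal (Real.exp ((c - r) * X ω)) ∂μ
      = ∑' n, ∫⁻ ω, ENNReal.ofReal (g n ω) ∂μ := by
    rw [← lintegral_tsum fun n ↦ (hgi n).aemeasurable.ennreal_ofReal]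
    refine lintegral_congr_ae ?_
    filter_upwards [hlin, ae_all_iff.2 hg0] with ω h h0
    rw [← h.tsum_eq, ENNReal.ofReal_tsum_of_nonneg h0 h.summable]
  rw [h2]
  have h3 : ∀ n, ∫⁻ ω, ENNReal.ofReal (g n ω) ∂μ = ENNReal.ofReal (∫ ω, g n ω ∂μ) := fun n ↦
    (ofReal_integral_eq_lintegral_ofReal (hgi n) (hg0 n)).symm
  simp_rw [h3]
  rw [← ENNReal.ofReal_tsum_of_nonneg (fun n ↦ integral_nonneg_of_ae (hg0 n)) hs]
  exact ENNReal.ofReal_lt_top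

/-- **Landau's theorem** for exponential moments. -/
theorem Ioi_subset_integrableExpSet_of_analyticAt (hX : AEMeasurable X μ)
    (hX0 : ∀ᵐ ω ∂μ, X ω ≤ 0) {f : ℂ → ℂ} {a b : ℝ}
    (hb : Set.Ioi b ⊆ integrableExpSet X μ) (hf : ∀ t : ℝ, a < t → AnalyticAt ℂ f t)
    (hfm : ∀ t : ℝ, b < t → f t = complexMGF X μ t) :
    Set.Ioi a ⊆ integrableExpSet X μ := by
  by_contra hcon
  obtain ⟨t₀, ht₀, ht₀'⟩ := Set.not_subset.1 hcon
  have hup : ∀ s ∈ integrableExpSet X μ, ∀ t, s ≤ t → t ∈ integrableExpSet X μ :=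
    fun s hs t hst ↦ integrable_exp_mul_of_le_of_nonpos hX hX0 hst hs
  have hlb : ∀ s ∈ integrableExpSet X μ, t₀ ≤ s := by
    intro s hs
    by_contra! h
    exact ht₀' (hup s hs _ h.le)
  have hne : (integrableExpSet X μ).Nonempty := ⟨b + 1, hb (by simp)⟩
  set β := sInf (integrableExpSet X μ)
  have hβ : t₀ ≤ β := le_csInf hne hlb
  have haβ : a < β := lt_of_lt_of_le ht₀ hβ
  have hIoi : Set.Ioi β ⊆ integrableExpSet X μ := by
    intro t ht
    obtain ⟨s, hs, hst⟩ := exists_lt_of_csInf_lt hne ht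
    exact hup s hs t hst.le
  have h_int : ∀ t, β < t → t ∈ interior (integrableExpSet X μ) := fun t ht ↦
    mem_interior.2 ⟨_, hIoi, isOpen_Ioi, ht⟩
  have heq : Set.EqOn f (complexMGF X μ) (Complex.ofReal '' Set.Ioi β) := by
    refine AnalyticOnNhd.eqOn_of_preconnected_of_frequently_eq (z₀ := ((max b β + 1 : ℝ) : ℂ))
      ?_ ?_ (ofReal_image_Ioi_isPreconnected β) ?_ ?_
    · rintro _ ⟨t, ht, rfl⟩
      exact hf t (haβ.trans ht)
    · rintro _ ⟨t, ht, rfl⟩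
      exact analyticAt_complexMGF (by simpa using h_int t ht)
    · exact ⟨_, by simp only [Set.mem_Ioi]; linarith [le_max_right b β], rfl⟩
    · refine frequently_ofReal_nhdsWithin_ne ?_
      filter_upwards [lt_mem_nhds (show b < max b β + 1 by linarith [le_max_left b β])] with t ht
      exact hfm t ht
  obtain ⟨ρ, hρ, hball⟩ := Metric.eventually_nhds_iff_ball.1 (hf β haβ).eventually_analyticAt
  have hcβ : β < β + ρ / 4 := by linarith
  have hfc : f =ᶠ[𝓝 ((β + ρ / 4 : ℝ) : ℂ)] complexMGF X μ := by
    refine ((hf _ (haβ.trans hcβ)).frequently_eq_iff_eventually_eq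
      (analyticAt_complexMGF (by simpa using h_int _ hcβ))).1 (frequently_ofReal_nhdsWithin_ne ?_)
    filter_upwards [lt_mem_nhds hcβ] with t ht
    exact heq ⟨t, ht, rfl⟩
  have hI := integrable_exp_of_differentiableOn_ball hX hX0 (c := β + ρ / 4) (ρ := ρ / 2)
    (r := 3 * ρ / 8) (by linarith) (by linarith) (f := f) (fun z hz ↦ ?_) (h_int _ hcβ) hfc
  · have : β ≤ β + ρ / 4 - 3 * ρ / 8 := csInf_le ⟨t₀, hlb⟩ hI
    linarith
  · refine (hball z ?_).differentiableAt.differentiableWithinAt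
    rw [Metric.mem_ball] at hz ⊢
    calc dist z β ≤ dist z ((β + ρ / 4 : ℝ) : ℂ) + dist ((β + ρ / 4 : ℝ) : ℂ) β :=
          dist_triangle _ _ _
      _ < ρ / 2 + ρ / 4 := by
        refine add_lt_add_of_lt_of_le hz (le_of_eq ?_)
        rw [Complex.dist_of_im_eq (by simp), Real.dist_eq]
        simp
        positivity
      _ < ρ := by linarith

end Landau

section PrimeSums

open ArithmeticFunction Nat.Primes Complex

theorem one_lt_norm_prime_cpow (p : Nat.Primes) {w : ℂ} (hw : 0 < w.re) :
    1 < ‖((p : ℕ) : ℂ) ^ w‖ := by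
  rw [norm_natCast_cpow_of_pos p.2.pos]
  exact Real.one_lt_rpow (by exact_mod_cast p.2.one_lt) hw

theorem hasSum_neg_logDeriv_riemannZeta {w : ℂ} (hw : 1 < w.re) :
    HasSum (fun p : Nat.Primes ↦ (Real.log p : ℂ) / (((p : ℕ) : ℂ) ^ w - 1))
      (-deriv riemannZeta w / riemannZeta w) := by
  have h1 : HasSum (fun n ↦ LSeries.term (fun n ↦ (Λ n : ℂ)) w n)
      (-deriv riemannZeta w / riemannZeta w) := by
    rw [← LSeries_vonMangoldt_eq_deriv_riemannZeta_div hw]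
    exact (LSeriesSummable_vonMangoldt hw).hasSum
  have h2 : Function.support (fun n ↦ LSeries.term (fun n ↦ (Λ n : ℂ)) w n) ⊆
      {n | IsPrimePow n} := by
    intro n hn
    contrapose! hn
    have : Λ n = 0 := vonMangoldt_eq_zero_iff.mpr hn
    simp [LSeries.term_def, this]
  rw [← hasSum_subtype_iff_of_support_subset h2] at h1
  replace h1 := prodNatEquiv.hasSum_iff.mpr h1
  refine h1.prod_fiberwise fun p ↦ ?_
  have hp := one_lt_norm_prime_cpow p (w := w) (by linarith)
  have hq0 : ((p : ℕ) : ℂ) ^ w ≠ 0 := by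
    intro h; rw [h] at hp; simp at hp; linarith
  have hq1 : ((p : ℕ) : ℂ) ^ w - 1 ≠ 0 := by
    intro h; rw [sub_eq_zero.mp h] at hp; simp at hp
  have hg := (hasSum_geometric_of_norm_lt_one (ξ := (((p : ℕ) : ℂ) ^ w)⁻¹)
    (by rw [norm_inv]; exact inv_lt_one_of_one_lt₀ hp)).mul_left
      ((Real.log p : ℂ) * (((p : ℕ) : ℂ) ^ w)⁻¹)
  have key : ∀ k : ℕ, LSeries.term (fun n ↦ (Λ n : ℂ)) w ((p : ℕ) ^ (k + 1)) =
      (Real.log p : ℂ) * (((p : ℕ) : ℂ) ^ w)⁻¹ * (((p : ℕ) : ℂ) ^ w)⁻¹ ^ k := by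
    intro k
    have hpk : ((p : ℕ) ^ (k + 1)) ≠ 0 := pow_ne_zero _ p.2.ne_zero
    rw [LSeries.term_of_ne_zero hpk, vonMangoldt_apply_pow (Nat.succ_ne_zero k),
      vonMangoldt_apply_prime p.2, Nat.cast_pow, ← natCast_cpow_natCast_mul, mul_comm _ w,
      cpow_mul_nat, inv_pow, pow_succ]
    field_simp
  have hv : (Real.log p : ℂ) / (((p : ℕ) : ℂ) ^ w - 1) =
      (Real.log p : ℂ) * (((p : ℕ) : ℂ) ^ w)⁻¹ * (1 - (((p : ℕ) : ℂ) ^ w)⁻¹)⁻¹ := by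
    have : 1 - (((p : ℕ) : ℂ) ^ w)⁻¹ = (((p : ℕ) : ℂ) ^ w - 1) * (((p : ℕ) : ℂ) ^ w)⁻¹ := by
      field_simp
    rw [this]
    field_simp
  rw [hv]
  exact (funext key : (fun k : ℕ ↦ _) = _) ▸ hg

/-- The coefficients `log p / (p - 1)`, supported on the primes. -/
noncomputable def primeCoeff (n : ℕ) : ℝ := if n.Prime then Real.log n / ((n : ℝ) - 1) else 0

theorem primeCoeff_nonneg (n : ℕ) : 0 ≤ primeCoeff n := by
  unfold primeCoeff
  split_ifs with h
  · have : (1 : ℝ) < n := by exact_mod_cast h.one_lt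
    exact div_nonneg (Real.log_nonneg this.le) (by linarith)
  · exact le_rfl

/-- The summand of `primeRemainder`. -/
noncomputable def primeRemainderTerm (p : Nat.Primes) (w : ℂ) : ℂ :=
  (Real.log p : ℂ) * ((((p : ℕ) : ℂ) ^ w)⁻¹ *
    ((((p : ℕ) : ℂ) - 1)⁻¹ - ((((p : ℕ) : ℂ) ^ w) ^ 2 - 1)⁻¹))

/-- The difference between the Dirichlet series of `primeCoeff` at `w - 1` and
the logarithmic derivatives `-logDeriv ζ w + logDeriv ζ (2w)`. -/
noncomputable def primeRemainder (w : ℂ) : ℂ := ∑' p, primeRemainderTerm p w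

theorem norm_primeRemainderTerm_le (p : Nat.Primes) {w : ℂ} (hw : 2 / 5 ≤ w.re) :
    ‖primeRemainderTerm p w‖ ≤ 50 * ((p : ℕ) : ℝ) ^ (-(11 / 10) : ℝ) := by
  have hp2 : (2 : ℝ) ≤ (p : ℕ) := by exact_mod_cast p.2.two_le
  have hp0 : (0 : ℝ) < (p : ℕ) := by linarith
  have hq : ((p : ℕ) : ℝ) ^ (2 / 5 : ℝ) ≤ ‖((p : ℕ) : ℂ) ^ w‖ := by
    rw [norm_natCast_cpow_of_pos p.2.pos]
    exact Real.rpow_le_rpow_of_exponent_le (by linarith) hw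
  set q := ((p : ℕ) : ℂ) ^ w
  set t := ((p : ℕ) : ℝ) ^ (2 / 5 : ℝ) with ht
  have ht5 : t ^ 5 = ((p : ℕ) : ℝ) ^ 2 := by
    rw [ht, ← Real.rpow_natCast, ← Real.rpow_mul hp0.le, ← Real.rpow_natCast]; norm_num
  have ht0 : 0 < t := Real.rpow_pos_of_pos hp0 _
  have ht1 : 5 / 4 ≤ t := by
    by_contra! h
    have : t ^ 5 < (5 / 4) ^ 5 := by gcongr
    nlinarith
  have hqt : 3 / 2 ≤ ‖q‖ ^ 2 := by nlinarith
  have hq0 : 0 < ‖q‖ := by linarith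
  have h1 : ‖q‖ ^ 2 / 3 ≤ ‖q ^ 2 - 1‖ := by
    have := norm_sub_norm_le (q ^ 2) 1
    rw [norm_pow, norm_one] at this
    linarith
  have hpm : ‖((p : ℕ) : ℂ) - 1‖ = (p : ℕ) - 1 := by
    rw [show ((p : ℕ) : ℂ) - 1 = (((p : ℕ) - 1 : ℝ) : ℂ) by push_cast; rfl, norm_real,
      Real.norm_of_nonneg (by linarith)]
  have h2 : ‖q⁻¹ * ((((p : ℕ) : ℂ) - 1)⁻¹ - (q ^ 2 - 1)⁻¹)‖ ≤ 5 * (t ^ 3)⁻¹ := by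
    rw [norm_mul, norm_inv]
    have hA : ‖(((p : ℕ) : ℂ) - 1)⁻¹‖ ≤ 2 * (t ^ 2)⁻¹ := by
      rw [norm_inv, hpm, ← div_eq_mul_inv, inv_le_comm₀ (by linarith) (by positivity), inv_div]
      have : t ^ 2 ≤ (p : ℕ) := by
        have : t ^ 2 = ((p : ℕ) : ℝ) ^ (4 / 5 : ℝ) := by
          rw [ht, ← Real.rpow_natCast, ← Real.rpow_mul hp0.le]; norm_num
        rw [this]
        exact Real.rpow_le_self_of_one_le (by linarith) (by norm_num)
      linarith
    have hB : ‖(q ^ 2 - 1)⁻¹‖ ≤ 3 * (t ^ 2)⁻¹ := by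
      rw [norm_inv, ← div_eq_mul_inv, inv_le_comm₀ (by nlinarith) (by positivity), inv_div]
      refine le_trans ?_ h1
      gcongr
    calc _ ≤ t⁻¹ * (2 * (t ^ 2)⁻¹ + 3 * (t ^ 2)⁻¹) := by
          gcongr
          exact (norm_sub_le _ _).trans (add_le_add hA hB)
      _ = _ := by field_simp; norm_num
  have h3 : Real.log (p : ℕ) ≤ ((p : ℕ) : ℝ) ^ (1 / 10 : ℝ) / (1 / 10) :=
    Real.log_le_rpow_div hp0.le (by norm_num)
  rw [primeRemainderTerm, norm_mul, norm_real, Real.norm_of_nonneg (Real.log_nonneg (by linarith))]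
  calc _ ≤ ((p : ℕ) : ℝ) ^ (1 / 10 : ℝ) / (1 / 10) * (5 * (t ^ 3)⁻¹) := by gcongr
    _ = 50 * (((p : ℕ) : ℝ) ^ (1 / 10 : ℝ) * (t ^ 3)⁻¹) := by ring
    _ = _ := by
      congr 1
      rw [ht, ← Real.rpow_natCast, ← Real.rpow_mul hp0.le, ← Real.rpow_neg hp0.le,
        ← Real.rpow_add hp0]
      norm_num

theorem summable_primeRemainder_bound :
    Summable fun p : Nat.Primes ↦ 50 * ((p : ℕ) : ℝ) ^ (-(11 / 10) : ℝ) :=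
  (Nat.Primes.summable_rpow.mpr (by norm_num)).mul_left _

theorem differentiableOn_primeRemainder :
    DifferentiableOn ℂ primeRemainder {w | 2 / 5 < w.re} := by
  refine Complex.differentiableOn_tsum_of_summable_norm summable_primeRemainder_bound
    (fun p w hw ↦ ?_) (isOpen_lt continuous_const continuous_re)
    fun p w hw ↦ norm_primeRemainderTerm_le p (le_of_lt hw)
  have hw' : 2 / 5 < w.re := hw
  have hp := one_lt_norm_prime_cpow p (w := w) (by linarith)
  have hq0 : ((p : ℕ) : ℂ) ^ w ≠ 0 := by
    intro h; rw [h] at hp; simp at hp; linarith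
  have hq1 : (((p : ℕ) : ℂ) ^ w) ^ 2 - 1 ≠ 0 := by
    intro h
    have h := congrArg norm (sub_eq_zero.mp h)
    rw [norm_pow, norm_one] at h
    nlinarith
  have hd : DifferentiableAt ℂ (fun w : ℂ ↦ ((p : ℕ) : ℂ) ^ w) w :=
    differentiableAt_id.const_cpow (Or.inl (by exact_mod_cast p.2.ne_zero))
  unfold primeRemainderTerm
  exact ((hd.inv hq0).mul ((differentiableAt_const _).sub
    (((hd.pow 2).sub_const 1).inv hq1))).const_mul _ |>.differentiableWithinAt

theorem exists_norm_primeRemainder_le : ∃ C, ∀ w : ℂ, 2 / 5 ≤ w.re → ‖primeRemainder w‖ ≤ C :=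
  ⟨_, fun _ hw ↦ tsum_of_norm_bounded summable_primeRemainder_bound.hasSum
    fun p ↦ norm_primeRemainderTerm_le p hw⟩

theorem hasSum_primeRemainder {w : ℂ} (hw : 2 / 5 ≤ w.re) :
    HasSum (fun p ↦ primeRemainderTerm p w) (primeRemainder w) :=
  (summable_primeRemainder_bound.of_norm_bounded
    fun p ↦ norm_primeRemainderTerm_le p hw).hasSum

theorem primeRemainder_one :
    primeRemainder 1 = -deriv riemannZeta 2 / riemannZeta 2 := by
  refine (hasSum_primeRemainder (w := 1) (by norm_num)).unique ?_
  convert hasSum_neg_logDeriv_riemannZeta (w := 2) (by norm_num) using 2 with p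
  have h1 : ((p : ℕ) : ℂ) ≠ 0 := by exact_mod_cast p.2.ne_zero
  have h2 : ((p : ℕ) : ℂ) - 1 ≠ 0 := sub_ne_zero.mpr (by exact_mod_cast p.2.one_lt.ne')
  have h3 : ((p : ℕ) : ℂ) ^ 2 - 1 ≠ 0 := by
    have : (p : ℕ) ^ 2 ≠ 1 := by have := p.2.two_le; nlinarith
    exact sub_ne_zero.mpr (by exact_mod_cast this)
  simp only [primeRemainderTerm, cpow_one, cpow_ofNat]
  field_simp
  ring

theorem hasSum_primeCoeff {w : ℂ} (hw : 1 < w.re) :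
    HasSum (fun n ↦ LSeries.term (fun n ↦ (primeCoeff n : ℂ)) (w - 1) n)
      (-deriv riemannZeta w / riemannZeta w + deriv riemannZeta (2 * w) / riemannZeta (2 * w)
        + primeRemainder w) := by
  have h2 : Function.support (fun n ↦ LSeries.term (fun n ↦ (primeCoeff n : ℂ)) (w - 1) n) ⊆
      {n | Nat.Prime n} := by
    intro n hn
    contrapose! hn
    have : ¬ n.Prime := hn
    simp [LSeries.term_def, primeCoeff, this]
  rw [← hasSum_subtype_iff_of_support_subset h2]
  have h := ((hasSum_neg_logDeriv_riemannZeta hw).add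
    (hasSum_neg_logDeriv_riemannZeta (w := 2 * w) (by simp; linarith)).neg).add
    (hasSum_primeRemainder (w := w) (by linarith))
  have key : ∀ p : Nat.Primes, LSeries.term (fun n ↦ (primeCoeff n : ℂ)) (w - 1) p =
      (Real.log p : ℂ) / (((p : ℕ) : ℂ) ^ w - 1) + -((Real.log p : ℂ) /
        (((p : ℕ) : ℂ) ^ (2 * w) - 1)) + primeRemainderTerm p w := by
    rintro ⟨p, hp'⟩
    have hq := one_lt_norm_prime_cpow ⟨p, hp'⟩ (w := w) (by linarith)
    have hp0 : (p : ℂ) ≠ 0 := by exact_mod_cast hp'.ne_zero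
    have e1 : (p : ℂ) ^ (2 * w) = ((p : ℂ) ^ w) ^ 2 := by rw [mul_comm, ← cpow_mul_ofNat]
    simp only [LSeries.term_of_ne_zero hp'.ne_zero, primeCoeff, if_pos hp',
      primeRemainderTerm, e1, cpow_sub _ _ hp0, cpow_one] at hq ⊢
    set q := (p : ℂ) ^ w
    have hq0 : q ≠ 0 := by
      intro h; rw [h] at hq; simp at hq; linarith
    have hq1 : q ^ 2 - 1 ≠ 0 := by
      intro h
      have h := congrArg norm (sub_eq_zero.mp h)
      rw [norm_pow, norm_one] at h
      nlinarith
    have hq2 : q - 1 ≠ 0 := by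
      intro h; apply hq1; linear_combination (q + 1) * h
    have h2 : (p : ℂ) - 1 ≠ 0 := sub_ne_zero.mpr (by exact_mod_cast hp'.one_lt.ne')
    push_cast
    field_simp
    ring
  have hv : ∀ a b c : ℂ, a + b + c = a + -(-b) + c := fun a b c ↦ by ring
  rw [hv, ← neg_div]
  rw [← funext key] at h
  exact h

end PrimeSums

section MellinMeasure

open MeasureTheory ProbabilityTheory Set

/-- The measure `H(x) dx / x` on `(1, ∞)`. -/
noncomputable def mellinMeasure (H : ℝ → ℝ) : Measure ℝ :=
  (volume.restrict (Ioi 1)).withDensity fun x ↦ ENNReal.ofReal (H x / x)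

/-- The integral `∫_1^∞ H(x) x^(-s-1) dx` as an exponential moment. -/
noncomputable def mellinMGF (H : ℝ → ℝ) : ℂ → ℂ :=
  complexMGF (fun x ↦ -Real.log x) (mellinMeasure H)

/-- The set of convergence of `mellinMGF` on the real line. -/
abbrev mellinSet (H : ℝ → ℝ) : Set ℝ :=
  integrableExpSet (fun x ↦ -Real.log x) (mellinMeasure H)

variable {H : ℝ → ℝ}

theorem cexp_mul_neg_log {x : ℝ} (hx : 0 < x) (s : ℂ) :
    Complex.exp (s * ((-Real.log x : ℝ) : ℂ)) = (x : ℂ) ^ (-s) := by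
  rw [Complex.cpow_def_of_ne_zero (by exact_mod_cast hx.ne'), Complex.ofReal_neg,
    Complex.ofReal_log hx.le]
  ring_nf

theorem neg_log_nonpos_ae (H : ℝ → ℝ) : ∀ᵐ x ∂(mellinMeasure H), -Real.log x ≤ 0 := by
  refine (withDensity_absolutelyContinuous _ _).ae_le ?_
  filter_upwards [ae_restrict_mem measurableSet_Ioi] with x hx
  have := Real.log_nonneg (le_of_lt hx)
  linarith

theorem integral_mellinMeasure (hm : Measurable H) (h0 : ∀ x, 1 < x → 0 ≤ H x) {E : Type*}
    [NormedAddCommGroup E] [NormedSpace ℝ E] (g : ℝ → E) :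
    ∫ x, g x ∂(mellinMeasure H) = ∫ x in Ioi 1, (H x / x) • g x := by
  rw [mellinMeasure, integral_withDensity_eq_integral_toReal_smul (by fun_prop) (by simp)]
  refine setIntegral_congr_fun measurableSet_Ioi fun x hx ↦ ?_
  have hx1 : (1 : ℝ) < x := hx
  have := h0 x hx
  rw [ENNReal.toReal_ofReal (by positivity)]

theorem integrable_mellinMeasure_iff (hm : Measurable H) (h0 : ∀ x, 1 < x → 0 ≤ H x) {E : Type*}
    [NormedAddCommGroup E] [NormedSpace ℝ E] (g : ℝ → E) :
    Integrable g (mellinMeasure H) ↔ IntegrableOn (fun x ↦ (H x / x) • g x) (Ioi 1) := by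
  rw [mellinMeasure, integrable_withDensity_iff_integrable_smul' (by fun_prop) (by simp),
    ← IntegrableOn]
  refine integrableOn_congr_fun (fun x hx ↦ ?_) measurableSet_Ioi
  have hx1 : (1 : ℝ) < x := hx
  have := h0 x hx
  rw [ENNReal.toReal_ofReal (by positivity)]

theorem cpow_neg_add_one {x : ℝ} (hx : 0 < x) (s : ℂ) :
    (x : ℂ) ^ (-(s + 1)) = (x : ℂ) ^ (-s) / x := by
  have : (x : ℂ) ≠ 0 := by exact_mod_cast hx.ne'
  rw [neg_add, ← sub_eq_add_neg, Complex.cpow_sub _ _ this, Complex.cpow_one]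

theorem mellinMGF_eq (hm : Measurable H) (h0 : ∀ x, 1 < x → 0 ≤ H x) (s : ℂ) :
    mellinMGF H s = ∫ x in Ioi (1 : ℝ), (H x : ℂ) * (x : ℂ) ^ (-(s + 1)) := by
  rw [mellinMGF, complexMGF, integral_mellinMeasure hm h0]
  refine setIntegral_congr_fun measurableSet_Ioi fun x hx ↦ ?_
  have hx1 : (1 : ℝ) < x := hx
  rw [cexp_mul_neg_log (by linarith), cpow_neg_add_one (by linarith), Complex.real_smul]
  push_cast
  ring

theorem integrableOn_mul_cpow {f : ℝ → ℝ} (hm : Measurable f) {K r : ℝ}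
    (hb : ∀ x, 1 < x → |f x| ≤ K * x ^ r) {s : ℂ} (hs : r < s.re) :
    IntegrableOn (fun x : ℝ ↦ (f x : ℂ) * (x : ℂ) ^ (-(s + 1))) (Ioi 1) := by
  refine Integrable.mono' (g := fun x ↦ K * x ^ (r - s.re - 1))
    ((integrableOn_Ioi_rpow_of_lt (by linarith) one_pos).const_mul K) ?_ ?_
  · refine AEStronglyMeasurable.mul (by fun_prop) (Measurable.aestronglyMeasurable ?_)
    exact Complex.measurable_ofReal.pow_const _
  · filter_upwards [ae_restrict_mem measurableSet_Ioi] with x hx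
    have hx1 : (1 : ℝ) < x := hx
    rw [norm_mul, Complex.norm_cpow_eq_rpow_re_of_pos (by linarith), Complex.norm_real,
      Real.norm_eq_abs]
    calc _ ≤ K * x ^ r * x ^ (-(s + 1)).re := by gcongr; exact hb x hx
      _ = _ := by
        rw [mul_assoc, ← Real.rpow_add (by linarith)]
        congr 2
        simp
        ring

theorem Ioi_subset_mellinSet (hm : Measurable H) (h0 : ∀ x, 1 < x → 0 ≤ H x) {K r : ℝ}
    (hb : ∀ x, 1 < x → H x ≤ K * x ^ r) : Ioi r ⊆ mellinSet H := by
  intro t ht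
  have h1 := integrableOn_mul_cpow hm (K := K) (r := r)
    (fun x hx ↦ by rw [abs_of_nonneg (h0 x hx)]; exact hb x hx) (s := (t : ℂ)) (by simpa using ht)
  rw [mellinSet, integrableExpSet, mem_ofPred_eq, integrable_mellinMeasure_iff hm h0]
  refine (IntegrableOn.congr_fun (f := fun x : ℝ ↦ ‖(H x : ℂ) * (x : ℂ) ^ (-((t : ℂ) + 1))‖)
    h1.norm (fun x hx ↦ ?_) measurableSet_Ioi)
  have hx1 : (1 : ℝ) < x := hx
  have hx0 : 0 < x := by linarith
  beta_reduce
  rw [norm_mul, Complex.norm_cpow_eq_rpow_re_of_pos hx0, Complex.norm_real,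
    Real.norm_of_nonneg (h0 x hx), smul_eq_mul, show (-((t : ℂ) + 1)).re = -t - 1 by simp; ring,
    Real.rpow_sub hx0, Real.rpow_one, Real.rpow_def_of_pos hx0]
  ring_nf

theorem mellinMGF_one {s : ℂ} (hs : 0 < s.re) : mellinMGF (fun _ ↦ 1) s = 1 / s := by
  rw [mellinMGF_eq measurable_const (by simp)]
  have h := integral_Ioi_cpow_of_lt (a := -(s + 1)) (by simp; linarith) one_pos
  simp only [Complex.ofReal_one, one_mul, Complex.one_cpow] at h ⊢
  rw [h]
  have : s ≠ 0 := by rintro rfl; simp at hs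
  rw [show -(s + 1) + 1 = -s by ring]
  field_simp

theorem integral_log_mul_cpow {s : ℂ} (hs : 0 < s.re) :
    ∫ x in Ioi (1 : ℝ), (Real.log x : ℂ) * (x : ℂ) ^ (-(s + 1)) = 1 / s ^ 2 := by
  have hset : Ioi (0 : ℝ) ⊆ mellinSet (fun _ ↦ 1) :=
    Ioi_subset_mellinSet measurable_const (by simp) (K := 1) (by simp)
  have hd : HasDerivAt (mellinMGF fun _ ↦ 1) _ s :=
    hasDerivAt_complexMGF (interior_maximal hset isOpen_Ioi hs)
  rw [integral_mellinMeasure measurable_const (by simp)] at hd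
  have hs0 : s ≠ 0 := by rintro rfl; simp at hs
  have hd2 : HasDerivAt (mellinMGF fun _ ↦ 1) (-(s ^ 2)⁻¹) s := by
    refine (hasDerivAt_inv hs0).congr_of_eventuallyEq ?_
    filter_upwards [(isOpen_lt continuous_const Complex.continuous_re).mem_nhds hs] with z hz
    rw [mellinMGF_one hz, one_div]
  have := hd.unique hd2
  rw [one_div, ← neg_eq_iff_eq_neg.mpr this, ← integral_neg]
  refine setIntegral_congr_fun measurableSet_Ioi fun x hx ↦ ?_
  have hx1 : (1 : ℝ) < x := hx
  rw [cexp_mul_neg_log (by linarith), cpow_neg_add_one (by linarith), Complex.real_smul]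
  push_cast
  ring

theorem measurable_sum_Icc_floor (a : ℕ → ℝ) :
    Measurable fun x : ℝ ↦ ∑ n ∈ Finset.Icc 1 ⌊x⌋₊, a n :=
  (measurable_of_countable fun m : ℕ ↦ ∑ n ∈ Finset.Icc 1 m, a n).comp Nat.measurable_floor

theorem mellinMGF_fract {s : ℂ} (hs : 1 < s.re) :
    riemannZeta₁ s = s - s * (s - 1) * mellinMGF Int.fract s := by
  have h1 : s ≠ 1 := by rintro rfl; simp at hs
  have h1' : s - 1 ≠ 0 := sub_ne_zero.mpr h1
  have hs0 : s ≠ 0 := by rintro rfl; norm_num at hs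
  have hz : riemannZeta s = s * ∫ x in Ioi (1 : ℝ), (⌊x⌋₊ : ℂ) * (x : ℂ) ^ (-(s + 1)) := by
    rw [← LSeries_one_eq_riemannZeta hs, LSeries_eq_mul_integral 1 zero_le_one hs
      (LSeriesSummable_one_iff.mpr hs)]
    · simp
    · simp only [Pi.one_apply, Finset.sum_const, Nat.card_Icc, add_tsub_cancel_right,
        nsmul_eq_mul, mul_one, Real.rpow_one]
      exact Asymptotics.isBigO_of_le _ fun n ↦ by simp
  have hx : ∫ x in Ioi (1 : ℝ), (x : ℂ) * (x : ℂ) ^ (-(s + 1)) = 1 / (s - 1) := by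
    have h := integral_Ioi_cpow_of_lt (a := -s) (by simpa using hs) one_pos
    simp only [Complex.ofReal_one, Complex.one_cpow] at h
    rw [show -(1 : ℂ) / (-s + 1) = 1 / (s - 1) by
      rw [show -s + 1 = -(s - 1) by ring]; field_simp] at h
    rw [← h]
    refine setIntegral_congr_fun measurableSet_Ioi fun x hx ↦ ?_
    have hx1 : (1 : ℝ) < x := hx
    have : (x : ℂ) ≠ 0 := by exact_mod_cast (by linarith : x ≠ 0)
    rw [cpow_neg_add_one (by linarith)]
    field_simp
  have hE : mellinMGF Int.fract s = 1 / (s - 1) - riemannZeta s / s := by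
    rw [mellinMGF_eq measurable_fract (fun x _ ↦ Int.fract_nonneg x), hz,
      mul_div_cancel_left₀ _ hs0, ← hx, ← integral_sub]
    · refine setIntegral_congr_fun measurableSet_Ioi fun x hx ↦ ?_
      have hx1 : (1 : ℝ) < x := hx
      have hfl : (Int.fract x : ℝ) = x - ⌊x⌋₊ := by
        rw [← Int.self_sub_floor, natCast_floor_eq_intCast_floor (by linarith : (0 : ℝ) ≤ x)]
      simp only [hfl]
      push_cast
      ring
    · exact integrableOn_mul_cpow (f := fun x ↦ x) measurable_id (K := 1) (r := 1)
        (fun x hx ↦ by rw [abs_of_pos (by linarith)]; simp) hs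
    · have := integrableOn_mul_cpow (f := fun x ↦ (⌊x⌋₊ : ℝ)) (by fun_prop) (K := 1) (r := 1)
        (fun x hx ↦ by
          rw [abs_of_nonneg (by positivity), Real.rpow_one, one_mul]
          exact Nat.floor_le (by linarith)) hs
      simpa [IntegrableOn] using this
  rw [hE, riemannZeta_eq_inv_sub_mul h1]
  field_simp
  ring

end MellinMeasure

section PrimeDelta

open MeasureTheory ProbabilityTheory Set

theorem riemannZeta₁_eq_fract {s : ℂ} (hs : 0 < s.re) :
    riemannZeta₁ s = s - s * (s - 1) * mellinMGF Int.fract s := by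
  have hset : Ioi (0 : ℝ) ⊆ mellinSet Int.fract :=
    Ioi_subset_mellinSet measurable_fract (fun x _ ↦ Int.fract_nonneg x) (K := 1)
      (fun x _ ↦ by simpa using (Int.fract_lt_one x).le)
  have hpre : IsPreconnected {z : ℂ | 0 < z.re} := (convex_halfSpace_re_gt 0).isPreconnected
  have h1 : AnalyticOnNhd ℂ (mellinMGF Int.fract) {z : ℂ | 0 < z.re} :=
    analyticOnNhd_complexMGF.mono fun z hz ↦ interior_maximal hset isOpen_Ioi hz
  have h2 : AnalyticOnNhd ℂ (fun s ↦ s - s * (s - 1) * mellinMGF Int.fract s)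
      {z : ℂ | 0 < z.re} :=
    analyticOnNhd_id.sub ((analyticOnNhd_id.mul (analyticOnNhd_id.sub analyticOnNhd_const)).mul h1)
  have h3 : AnalyticOnNhd ℂ riemannZeta₁ {z : ℂ | 0 < z.re} := fun z _ ↦
    differentiable_riemannZeta₁.analyticAt z
  refine h3.eqOn_of_preconnected_of_eventuallyEq h2 hpre (z₀ := 2) (by simp) ?_ hs
  filter_upwards [(isOpen_lt continuous_const Complex.continuous_re).mem_nhds
    (show (1 : ℝ) < (2 : ℂ).re by norm_num)] with z hz using mellinMGF_fract hz

theorem riemannZeta₁_ne_zero_of_one_le_re {s : ℂ} (hs : 1 ≤ s.re) : riemannZeta₁ s ≠ 0 := by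
  rcases eq_or_ne s 1 with rfl | h
  · simp
  · have := riemannZeta_ne_zero_of_one_le_re hs
    rw [riemannZeta_eq_inv_sub_mul h] at this
    exact right_ne_zero_of_mul this

theorem riemannZeta₁_ofReal_ne_zero {t : ℝ} (ht : 0 < t) : riemannZeta₁ t ≠ 0 := by
  rcases le_or_gt 1 t with h | h
  · exact riemannZeta₁_ne_zero_of_one_le_re (by simpa using h)
  · intro h0
    rw [riemannZeta₁_eq_fract (by simpa using ht), mellinMGF, complexMGF_ofReal] at h0
    set m := mgf (fun x ↦ -Real.log x) (mellinMeasure Int.fract) t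
    have hm : 0 ≤ m := mgf_nonneg
    have h1 : t - t * (t - 1) * m = 0 := by exact_mod_cast h0
    nlinarith [mul_nonneg (mul_nonneg ht.le (sub_nonneg.mpr h.le)) hm]

/-- The sum of `log p / (p - 1)` over primes up to `x`, compared to its expected size. -/
noncomputable def primeDelta (x : ℝ) : ℝ :=
  Real.eulerMascheroniConstant + ∑ n ∈ Finset.Icc 1 ⌊x⌋₊, primeCoeff n - Real.log x

theorem measurable_primeDelta : Measurable primeDelta :=
  ((measurable_sum_Icc_floor _).const_add _).sub Real.measurable_log

theorem primeCoeff_le_one (n : ℕ) : primeCoeff n ≤ 1 := by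
  unfold primeCoeff
  split_ifs with h
  · have h1 : (1 : ℝ) < n := by exact_mod_cast h.one_lt
    rw [div_le_one (by linarith)]
    exact Real.log_le_sub_one_of_pos (by linarith)
  · exact zero_le_one

theorem sum_primeCoeff_le (m : ℕ) : ∑ n ∈ Finset.Icc 1 m, primeCoeff n ≤ m := by
  refine (Finset.sum_le_sum fun n _ ↦ primeCoeff_le_one n).trans ?_
  simp

theorem abs_sum_primeCoeff_floor_le {x : ℝ} (hx : 1 < x) :
    |∑ n ∈ Finset.Icc 1 ⌊x⌋₊, primeCoeff n| ≤ 1 * x ^ (1 : ℝ) := by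
  rw [abs_of_nonneg (Finset.sum_nonneg fun n _ ↦ primeCoeff_nonneg n), Real.rpow_one, one_mul]
  exact (sum_primeCoeff_le _).trans (Nat.floor_le (by linarith))

theorem abs_log_le {x : ℝ} (hx : 1 < x) : |Real.log x| ≤ 1 * x ^ (1 : ℝ) := by
  rw [abs_of_nonneg (Real.log_nonneg hx.le), Real.rpow_one, one_mul]
  linarith [Real.log_le_sub_one_of_pos (by linarith : 0 < x)]

/-- `s` times the Mellin transform of `primeDelta`. -/
noncomputable def deltaTransform (s : ℂ) : ℂ :=
  Real.eulerMascheroniConstant - logDeriv riemannZeta₁ (s + 1) +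
    logDeriv riemannZeta (2 * (s + 1)) + primeRemainder (s + 1)

theorem logDeriv_riemannZeta_eq {s : ℂ} (hs : s ≠ 1) (h0 : riemannZeta₁ s ≠ 0) :
    logDeriv riemannZeta s = logDeriv riemannZeta₁ s - 1 / (s - 1) := by
  have hs' : s - 1 ≠ 0 := sub_ne_zero.mpr hs
  have h : riemannZeta =ᶠ[𝓝 s] fun s ↦ (s - 1)⁻¹ * riemannZeta₁ s := by
    filter_upwards [isOpen_ne.mem_nhds hs] with z hz using riemannZeta_eq_inv_sub_mul hz
  have hd := (((hasDerivAt_id s).sub_const 1).fun_inv hs').fun_mul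
    (differentiable_riemannZeta₁ s).hasDerivAt
  simp only [id] at hd
  rw [logDeriv_apply, h.deriv_eq, h.eq_of_nhds, hd.deriv, logDeriv_apply]
  field_simp
  ring

theorem integral_primeDelta {s : ℂ} (hs : 1 < s.re) :
    ∫ x in Ioi (1 : ℝ), (primeDelta x : ℂ) * (x : ℂ) ^ (-(s + 1)) = deltaTransform s / s := by
  have hs0 : s ≠ 0 := by rintro rfl; norm_num at hs
  have hw : 1 < (s + 1).re := by simp; linarith
  have hsum := hasSum_primeCoeff hw
  rw [add_sub_cancel_right] at hsum
  have hL := LSeries_eq_mul_integral (fun n ↦ (primeCoeff n : ℂ)) zero_le_one hs hsum.summable (by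
    refine Asymptotics.isBigO_of_le _ fun n ↦ ?_
    rw [← Complex.ofReal_sum, Complex.norm_real, Real.rpow_one, Real.norm_of_nonneg
      (Finset.sum_nonneg fun n _ ↦ primeCoeff_nonneg n), Real.norm_of_nonneg (by positivity)]
    exact sum_primeCoeff_le n)
  have hL' : LSeries (fun n ↦ (primeCoeff n : ℂ)) s = _ := hsum.tsum_eq
  have hA : IntegrableOn (fun x : ℝ ↦ ((Real.eulerMascheroniConstant : ℝ) : ℂ) *
      (x : ℂ) ^ (-(s + 1))) (Ioi 1) :=
    integrableOn_mul_cpow (f := fun _ ↦ Real.eulerMascheroniConstant) measurable_const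
      (K := |Real.eulerMascheroniConstant|) (r := 0) (by simp) (by linarith)
  have hB := integrableOn_mul_cpow (measurable_sum_Icc_floor primeCoeff)
    (fun x hx ↦ abs_sum_primeCoeff_floor_le hx) hs
  have hC := integrableOn_mul_cpow Real.measurable_log (fun x hx ↦ abs_log_le hx) hs
  have h1 : ∫ x in Ioi (1 : ℝ), ((Real.eulerMascheroniConstant : ℝ) : ℂ) *
      (x : ℂ) ^ (-(s + 1)) = Real.eulerMascheroniConstant / s := by
    have := mellinMGF_one (s := s) (by linarith)
    rw [mellinMGF_eq measurable_const (by simp)] at this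
    simp only [Complex.ofReal_one, one_mul] at this
    rw [integral_const_mul, this]
    ring
  have h2 : ∫ x in Ioi (1 : ℝ), ((∑ n ∈ Finset.Icc 1 ⌊x⌋₊, primeCoeff n : ℝ) : ℂ) *
      (x : ℂ) ^ (-(s + 1)) = LSeries (fun n ↦ (primeCoeff n : ℂ)) s / s := by
    rw [hL, mul_div_cancel_left₀ _ hs0]
    simp
  have hsplit : ∫ x in Ioi (1 : ℝ), (primeDelta x : ℂ) * (x : ℂ) ^ (-(s + 1)) =
      Real.eulerMascheroniConstant / s + LSeries (fun n ↦ (primeCoeff n : ℂ)) s / s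
        - 1 / s ^ 2 := by
    rw [← h1, ← h2, ← integral_log_mul_cpow (by linarith : 0 < s.re), ← integral_add hA hB,
      ← integral_sub (Integrable.fun_add hA hB) hC]
    refine setIntegral_congr_fun measurableSet_Ioi fun x hx ↦ ?_
    simp only [primeDelta]
    push_cast
    ring
  rw [hsplit, hL', deltaTransform, neg_div, ← logDeriv_apply, ← logDeriv_apply,
    logDeriv_riemannZeta_eq (s := s + 1) (by simpa using hs0)
      (riemannZeta₁_ne_zero_of_one_le_re hw.le), add_sub_cancel_right]
  field_simp
  ring

theorem deltaTransform_zero : deltaTransform 0 = 0 := by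
  rw [deltaTransform, zero_add, mul_one, primeRemainder_one, logDeriv_apply, logDeriv_apply,
    riemannZeta₁_one, deriv_riemannZeta₁_one]
  ring

theorem analyticAt_deltaTransform {s : ℂ} (hs : -1 / 2 < s.re) (h0 : riemannZeta₁ (s + 1) ≠ 0) :
    AnalyticAt ℂ deltaTransform s := by
  have hlin : AnalyticAt ℂ (fun s : ℂ ↦ s + 1) s := by fun_prop
  have hlin2 : AnalyticAt ℂ (fun s : ℂ ↦ 2 * (s + 1)) s := by fun_prop
  have h1 : AnalyticAt ℂ (logDeriv riemannZeta₁) (s + 1) := by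
    have := differentiable_riemannZeta₁.analyticAt (s + 1)
    exact this.deriv.div this h0
  have hre : 1 < (2 * (s + 1)).re := by simp; linarith
  have h2 : AnalyticAt ℂ (logDeriv riemannZeta) (2 * (s + 1)) := by
    have : AnalyticAt ℂ riemannZeta (2 * (s + 1)) := by
      have hd : DifferentiableOn ℂ riemannZeta {1}ᶜ := fun z hz ↦
        (differentiableAt_riemannZeta hz).differentiableWithinAt
      refine hd.analyticAt (isOpen_compl_singleton.mem_nhds ?_)
      rintro h
      rw [h] at hre
      simp at hre
    exact this.deriv.div this (riemannZeta_ne_zero_of_one_le_re hre.le)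
  have h3 : AnalyticAt ℂ primeRemainder (s + 1) :=
    differentiableOn_primeRemainder.analyticAt
      ((isOpen_lt continuous_const Complex.continuous_re).mem_nhds (by
        show 2 / 5 < (s + 1).re
        simp; linarith))
  exact ((analyticAt_const.sub (AnalyticAt.fun_comp (f := fun s : ℂ ↦ s + 1) h1 hlin)).add
    (AnalyticAt.fun_comp (f := fun s : ℂ ↦ 2 * (s + 1)) h2 hlin2)).add
    (AnalyticAt.fun_comp (f := fun s : ℂ ↦ s + 1) h3 hlin)

end PrimeDelta

section SignHypothesis

open MeasureTheory ProbabilityTheory Set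

/-- The function `ε Δ(x) + C x^(-3/4)`. -/
noncomputable def shiftedDelta (ε C x : ℝ) : ℝ := ε * primeDelta x + C * x ^ (-(3 / 4) : ℝ)

/-- `ε Δ(x) + C x^(-3/4)` is nonnegative on `(1, ∞)`. -/
structure SignHypothesis (ε C : ℝ) : Prop where
  abs_eq_one : |ε| = 1
  const_nonneg : 0 ≤ C
  nonneg : ∀ x, 1 < x → 0 ≤ shiftedDelta ε C x

theorem measurable_shiftedDelta (ε C : ℝ) : Measurable (shiftedDelta ε C) :=
  (measurable_primeDelta.const_mul _).add ((measurable_id.pow_const _).const_mul _)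

theorem abs_primeDelta_le {x : ℝ} (hx : 1 < x) :
    |primeDelta x| ≤ (|Real.eulerMascheroniConstant| + 2) * x ^ (1 : ℝ) := by
  have h1 := abs_sum_primeCoeff_floor_le hx
  have h2 := abs_log_le hx
  rw [Real.rpow_one] at *
  have h3 : |Real.eulerMascheroniConstant| ≤ |Real.eulerMascheroniConstant| * x :=
    le_mul_of_one_le_right (abs_nonneg _) hx.le
  rw [primeDelta]
  refine (abs_sub _ _).trans ?_
  have := abs_add_le Real.eulerMascheroniConstant (∑ n ∈ Finset.Icc 1 ⌊x⌋₊, primeCoeff n)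
  linarith

namespace SignHypothesis

variable {ε C : ℝ} (h : SignHypothesis ε C)
include h

theorem Ioi_one_subset : Ioi 1 ⊆ mellinSet (shiftedDelta ε C) := by
  refine Ioi_subset_mellinSet (measurable_shiftedDelta ε C) h.nonneg
    (K := |Real.eulerMascheroniConstant| + 2 + C) fun x hx ↦ ?_
  have h1 := abs_primeDelta_le hx
  have h2 : x ^ (-(3 / 4) : ℝ) ≤ x ^ (1 : ℝ) := Real.rpow_le_rpow_of_exponent_le hx.le (by norm_num)
  have h3 : ε * primeDelta x ≤ |primeDelta x| := by
    refine (le_abs_self _).trans ?_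
    rw [abs_mul, h.abs_eq_one, one_mul]
  have h4 := mul_le_mul_of_nonneg_left h2 h.const_nonneg
  rw [shiftedDelta, add_mul]
  linarith

theorem mellinMGF_eq_of_one_lt {s : ℂ} (hs : 1 < s.re) :
    mellinMGF (shiftedDelta ε C) s = ε * (deltaTransform s / s) + C / (s + 3 / 4) := by
  have e1 : ∀ x ∈ Ioi (1 : ℝ), (x : ℂ) ^ (-((s + 3 / 4) + 1)) =
      ((x ^ (-(3 / 4) : ℝ) : ℝ) : ℂ) * (x : ℂ) ^ (-(s + 1)) := by
    intro x hx
    have hx1 : (1 : ℝ) < x := hx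
    have hx0 : (x : ℂ) ≠ 0 := by exact_mod_cast (by linarith : x ≠ 0)
    rw [Complex.ofReal_cpow (by linarith), ← Complex.cpow_add _ _ hx0]
    congr 1
    push_cast
    ring
  have h1 := mellinMGF_one (s := s + 3 / 4) (by
    rw [Complex.add_re]; norm_num; linarith)
  rw [mellinMGF_eq measurable_const (by simp)] at h1
  simp only [Complex.ofReal_one, one_mul] at h1
  rw [setIntegral_congr_fun measurableSet_Ioi e1] at h1
  have i1 := integrableOn_mul_cpow (f := fun x ↦ x ^ (-(3 / 4) : ℝ)) (measurable_id.pow_const _)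
    (K := 1) (r := -(3 / 4)) (s := s) (fun x hx ↦ by
      rw [one_mul, abs_of_nonneg (Real.rpow_nonneg (by linarith) _)]) (by linarith)
  have i2 := integrableOn_mul_cpow measurable_primeDelta (fun x hx ↦ abs_primeDelta_le hx) hs
  rw [mellinMGF_eq (measurable_shiftedDelta ε C) h.nonneg, div_eq_mul_one_div (C : ℂ), ← h1,
    ← integral_primeDelta hs, ← integral_const_mul, ← integral_const_mul,
    ← integral_add (i2.const_mul _) (i1.const_mul _)]
  refine setIntegral_congr_fun measurableSet_Ioi fun x hx ↦ ?_
  simp only [shiftedDelta]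
  push_cast
  ring

theorem Ioi_subset : Ioi (-1 / 2) ⊆ mellinSet (shiftedDelta ε C) := by
  have hU : IsOpen {s : ℂ | -1 / 2 < s.re ∧ riemannZeta₁ (s + 1) ≠ 0} :=
    (isOpen_lt continuous_const Complex.continuous_re).inter
      (isOpen_ne.preimage (differentiable_riemannZeta₁.continuous.comp (continuous_add_const 1)))
  have hd : DifferentiableOn ℂ deltaTransform {s : ℂ | -1 / 2 < s.re ∧ riemannZeta₁ (s + 1) ≠ 0} :=
    fun s hs ↦ (analyticAt_deltaTransform hs.1 hs.2).differentiableAt.differentiableWithinAt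
  have hmem : ∀ t : ℝ, -1 / 2 < t →
      (t : ℂ) ∈ {s : ℂ | -1 / 2 < s.re ∧ riemannZeta₁ (s + 1) ≠ 0} := fun t ht ↦ by
    refine ⟨by simpa using ht, ?_⟩
    have := riemannZeta₁_ofReal_ne_zero (t := t + 1) (by linarith)
    simpa using this
  have h0 : {s : ℂ | -1 / 2 < s.re ∧ riemannZeta₁ (s + 1) ≠ 0} ∈ 𝓝 (0 : ℂ) :=
    hU.mem_nhds (by simpa using hmem 0 (by norm_num))
  have hds := (Complex.differentiableOn_dslope h0).mpr hd
  refine Ioi_subset_integrableExpSet_of_analyticAt (b := 1)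
    (X := fun x ↦ -Real.log x) (f := fun s ↦ ε * dslope deltaTransform 0 s + C / (s + 3 / 4))
    Real.measurable_log.neg.aemeasurable (neg_log_nonpos_ae _) h.Ioi_one_subset ?_ ?_
  · intro t ht
    have h1 : AnalyticAt ℂ (dslope deltaTransform 0) t := hds.analyticAt (hU.mem_nhds (hmem t ht))
    refine (analyticAt_const.mul h1).add (analyticAt_const.div (by fun_prop) ?_)
    have : ((t + 3 / 4 : ℝ) : ℂ) ≠ 0 := Complex.ofReal_ne_zero.mpr (by linarith)
    simpa using this
  · intro t ht
    have ht0 : (t : ℂ) ≠ 0 := by exact_mod_cast (by linarith : t ≠ 0)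
    have := h.mellinMGF_eq_of_one_lt (s := t) (by simpa using ht)
    rw [mellinMGF] at this
    rw [this, dslope_of_ne _ ht0, slope_def_field, deltaTransform_zero, sub_zero, sub_zero]

theorem analyticOnNhd : AnalyticOnNhd ℂ (mellinMGF (shiftedDelta ε C)) {s | -1 / 2 < s.re} :=
  analyticOnNhd_complexMGF.mono fun _ hz ↦ interior_maximal h.Ioi_subset isOpen_Ioi hz

end SignHypothesis

theorem ne_zero_of_deriv_eq_mul {f a : ℂ → ℂ} (hf : Differentiable ℂ f) {z₁ : ℂ} (hz₁ : f z₁ ≠ 0)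
    {z : ℂ} (ha : AnalyticAt ℂ a z) (h : deriv f =ᶠ[𝓝 z] a * f) : f z ≠ 0 := by
  intro h0
  have h1 := (hf.analyticAt z).analyticOrderAt_deriv_add_one
  rw [h0] at h1
  simp only [sub_zero] at h1
  rw [analyticOrderAt_congr h, analyticOrderAt_mul ha (hf.analyticAt z)] at h1
  have hne : analyticOrderAt f z ≠ ⊤ := by
    intro ht
    rw [analyticOrderAt_eq_top] at ht
    have := AnalyticOnNhd.eqOn_of_preconnected_of_eventuallyEq (U := univ) (f := f)
      (g := fun _ ↦ 0) (fun z _ ↦ hf.analyticAt z) (fun _ _ ↦ analyticAt_const)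
      isPreconnected_univ (mem_univ z) ht (mem_univ z₁)
    exact hz₁ this
  have h2 : analyticOrderAt f z + 1 ≤ analyticOrderAt f z := by
    calc _ ≤ analyticOrderAt a z + analyticOrderAt f z + 1 := by gcongr; exact le_add_self
      _ = _ := h1
  lift analyticOrderAt f z to ℕ using hne with n
  norm_cast at h2
  omega

namespace SignHypothesis

variable {ε C : ℝ} (h : SignHypothesis ε C)
include h

theorem sq_eq_one : (ε : ℂ) * ε = 1 := by
  have : ε * ε = 1 := by
    rw [← abs_mul_abs_self, h.abs_eq_one, one_mul]
  exact_mod_cast this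

theorem riemannZeta₁_ne_zero {w : ℂ} (hw : 1 / 2 < w.re) : riemannZeta₁ w ≠ 0 := by
  set V : Set ℂ := {s | -1 / 2 < s.re}
  have hV : IsOpen V := isOpen_lt continuous_const Complex.continuous_re
  set a : ℂ → ℂ := fun s ↦ Real.eulerMascheroniConstant + logDeriv riemannZeta (2 * (s + 1)) +
    primeRemainder (s + 1) - ε * (s * mellinMGF (shiftedDelta ε C) s - s * (C / (s + 3 / 4)))
  have ha : AnalyticOnNhd ℂ a V := by
    intro s hs
    have hs' : -1 / 2 < s.re := hs
    have hre : 1 < (2 * (s + 1)).re := by simp; linarith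
    have h2 : AnalyticAt ℂ (logDeriv riemannZeta) (2 * (s + 1)) := by
      have : AnalyticAt ℂ riemannZeta (2 * (s + 1)) := by
        have hd : DifferentiableOn ℂ riemannZeta {1}ᶜ := fun z hz ↦
          (differentiableAt_riemannZeta hz).differentiableWithinAt
        refine hd.analyticAt (isOpen_compl_singleton.mem_nhds ?_)
        rintro h
        rw [h] at hre
        simp at hre
      exact this.deriv.div this (riemannZeta_ne_zero_of_one_le_re hre.le)
    have h3 : AnalyticAt ℂ primeRemainder (s + 1) :=
      differentiableOn_primeRemainder.analyticAt
        ((isOpen_lt continuous_const Complex.continuous_re).mem_nhds (by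
          show 2 / 5 < (s + 1).re
          simp; linarith))
    have h4 : s + 3 / 4 ≠ 0 := by
      intro h
      have := congrArg Complex.re h
      rw [Complex.add_re] at this
      norm_num at this
      linarith
    have h5 := h.analyticOnNhd s hs
    exact ((analyticAt_const.add
      (AnalyticAt.fun_comp (f := fun s : ℂ ↦ 2 * (s + 1)) h2 (by fun_prop))).add
      (AnalyticAt.fun_comp (f := fun s : ℂ ↦ s + 1) h3 (by fun_prop))).sub
      (analyticAt_const.mul ((analyticAt_id.mul h5).sub (analyticAt_id.mul
        (analyticAt_const.div (by fun_prop) h4))))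
  set f : ℂ → ℂ := fun s ↦ riemannZeta₁ (s + 1)
  have hf : Differentiable ℂ f := differentiable_riemannZeta₁.comp (by fun_prop)
  have hf' : ∀ s, deriv f s = deriv riemannZeta₁ (s + 1) := fun s ↦ deriv_comp_add_const ..
  have key : EqOn (deriv f) (a * f) V := by
    refine AnalyticOnNhd.eqOn_of_preconnected_of_eventuallyEq (z₀ := 2)
      (fun s _ ↦ (hf.analyticAt s).deriv) (ha.mul fun s _ ↦ hf.analyticAt s)
      (convex_halfSpace_re_gt _).isPreconnected (by show -1 / 2 < (2 : ℂ).re; norm_num) ?_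
    filter_upwards [(isOpen_lt continuous_const Complex.continuous_re).mem_nhds
      (show (1 : ℝ) < (2 : ℂ).re by norm_num)] with s hs
    have hs' : 1 < s.re := hs
    have hs0 : s ≠ 0 := by rintro rfl; norm_num at hs'
    have hz : riemannZeta₁ (s + 1) ≠ 0 := riemannZeta₁_ne_zero_of_one_le_re (by simp; linarith)
    have e1 : ε * (s * mellinMGF (shiftedDelta ε C) s - s * (C / (s + 3 / 4))) =
        deltaTransform s := by
      rw [h.mellinMGF_eq_of_one_lt hs']
      have : s * (ε * (deltaTransform s / s) + C / (s + 3 / 4)) - s * (C / (s + 3 / 4)) =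
        ε * deltaTransform s := by field_simp; ring
      rw [this, ← mul_assoc, h.sq_eq_one, one_mul]
    simp only [Pi.mul_apply, a, e1, hf', f, deltaTransform]
    rw [logDeriv_apply riemannZeta₁]
    field_simp
    ring
  have hwV : w - 1 ∈ V := by show -1 / 2 < (w - 1).re; simp; linarith
  have := ne_zero_of_deriv_eq_mul hf (z₁ := 0) (by simp [f]) (ha _ hwV)
    (key.eventuallyEq_of_mem (hV.mem_nhds hwV))
  simpa [f] using this

theorem mul_mellinMGF_eq {s : ℂ} (hs : -1 / 2 < s.re) :
    s * mellinMGF (shiftedDelta ε C) s = ε * deltaTransform s + s * (C / (s + 3 / 4)) := by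
  refine AnalyticOnNhd.eqOn_of_preconnected_of_eventuallyEq (z₀ := 2) (U := {s | -1 / 2 < s.re})
    (f := fun s ↦ s * mellinMGF (shiftedDelta ε C) s)
    (g := fun s ↦ ε * deltaTransform s + s * (C / (s + 3 / 4)))
    (analyticOnNhd_id.mul h.analyticOnNhd) (fun s hs ↦ ?_)
    (convex_halfSpace_re_gt _).isPreconnected (by show -1 / 2 < (2 : ℂ).re; norm_num) ?_ hs
  · have hs' : -1 / 2 < s.re := hs
    have h4 : s + 3 / 4 ≠ 0 := by
      intro h
      have := congrArg Complex.re h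
      rw [Complex.add_re] at this
      norm_num at this
      linarith
    exact (analyticAt_const.mul (analyticAt_deltaTransform hs'
      (h.riemannZeta₁_ne_zero (by simp; linarith)))).add
        (analyticAt_id.mul (analyticAt_const.div (by fun_prop) h4))
  · filter_upwards [(isOpen_lt continuous_const Complex.continuous_re).mem_nhds
      (show (1 : ℝ) < (2 : ℂ).re by norm_num)] with s hs
    have hs' : 1 < s.re := hs
    have hs0 : s ≠ 0 := by rintro rfl; norm_num at hs'
    rw [h.mellinMGF_eq_of_one_lt hs']
    field_simp

end SignHypothesis

end SignHypothesis

section BoundaryLimits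

open MeasureTheory ProbabilityTheory Set

theorem tendsto_sub_mul_logDeriv {f : ℂ → ℂ} {z : ℂ} (hf : AnalyticAt ℂ f z)
    (hz : analyticOrderAt f z ≠ ⊤) :
    Tendsto (fun w ↦ (w - z) * logDeriv f w) (𝓝[≠] z) (𝓝 (analyticOrderNatAt f z)) := by
  obtain ⟨g, hg, hg0, he⟩ := hf.analyticOrderAt_ne_top.mp hz
  set n := analyticOrderNatAt f z
  have hlim : Tendsto (fun w ↦ (n : ℂ) + (w - z) * logDeriv g w) (𝓝[≠] z) (𝓝 n) := by
    have hc : ContinuousAt (fun w ↦ (n : ℂ) + (w - z) * logDeriv g w) z :=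
      continuousAt_const.add ((continuousAt_id.sub continuousAt_const).mul
        (hg.deriv.continuousAt.div hg.continuousAt hg0))
    have := hc.tendsto
    simp only [sub_self, zero_mul, add_zero] at this
    exact this.mono_left nhdsWithin_le_nhds
  refine hlim.congr' ?_
  filter_upwards [he.eventually_nhds.filter_mono nhdsWithin_le_nhds,
    hg.eventually_analyticAt.filter_mono nhdsWithin_le_nhds,
    (hg.continuousAt.eventually_ne hg0).filter_mono nhdsWithin_le_nhds,
    self_mem_nhdsWithin] with w hw hgw hgw0 hwz
  have hwz' : w - z ≠ 0 := sub_ne_zero.mpr hwz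
  have hp : HasDerivAt (fun w : ℂ ↦ (w - z) ^ n) (n * (w - z) ^ (n - 1) * 1) w :=
    ((hasDerivAt_id w).sub_const z).pow n
  have hd := hp.fun_mul hgw.differentiableAt.hasDerivAt
  have hw' : f =ᶠ[𝓝 w] fun w ↦ (w - z) ^ n * g w := hw
  rw [logDeriv_apply, logDeriv_apply, hw'.deriv_eq, hw'.eq_of_nhds, hd.deriv]
  rcases Nat.eq_zero_or_pos n with h0 | h0
  · rw [h0]
    simp
  · obtain ⟨k, hk⟩ := Nat.exists_eq_add_of_le' h0
    rw [hk, Nat.add_sub_cancel, pow_succ]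
    field_simp

theorem analyticOrderAt_riemannZeta₁_ne_top (z : ℂ) : analyticOrderAt riemannZeta₁ z ≠ ⊤ := by
  intro ht
  rw [analyticOrderAt_eq_top] at ht
  have := AnalyticOnNhd.eqOn_of_preconnected_of_eventuallyEq (U := univ) (f := riemannZeta₁)
    (g := fun _ ↦ 0) (fun z _ ↦ differentiable_riemannZeta₁.analyticAt z)
    (fun _ _ ↦ analyticAt_const) isPreconnected_univ (mem_univ z) ht (mem_univ 1)
  simp at this

/-- The multiplicity of `1/2 + iτ` as a zero of the zeta function. -/
noncomputable def zetaMult (τ : ℝ) : ℕ := analyticOrderNatAt riemannZeta₁ (1 / 2 + Complex.I * τ)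

namespace SignHypothesis

variable {ε C : ℝ} (h : SignHypothesis ε C)
include h

theorem tendsto_mul_mellinMGF (τ : ℝ) :
    Tendsto (fun δ : ℝ ↦ (δ : ℂ) * mellinMGF (shiftedDelta ε C) (-1 / 2 + δ + Complex.I * τ))
      (𝓝[>] 0) (𝓝 (ε * (zetaMult τ + if τ = 0 then 1 / 2 else 0) / (1 / 2 - Complex.I * τ))) := by
  set z : ℂ := 1 / 2 + Complex.I * τ with hz
  have hzre : z.re = 1 / 2 := by simp [hz]
  have hδ : Tendsto (fun δ : ℝ ↦ (δ : ℂ)) (𝓝[>] 0) (𝓝 0) := by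
    have : Tendsto (fun δ : ℝ ↦ (δ : ℂ)) (𝓝 0) (𝓝 ((0 : ℝ) : ℂ)) :=
      Complex.continuous_ofReal.tendsto 0
    exact (by simpa using this : Tendsto (fun δ : ℝ ↦ (δ : ℂ)) (𝓝 0) (𝓝 0)).mono_left
      nhdsWithin_le_nhds
  have hw : Tendsto (fun δ : ℝ ↦ z + δ) (𝓝[>] 0) (𝓝 z) := by
    simpa using hδ.const_add z
  have hw' : Tendsto (fun δ : ℝ ↦ z + δ) (𝓝[>] 0) (𝓝[≠] z) := by
    refine tendsto_nhdsWithin_iff.mpr ⟨hw, ?_⟩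
    filter_upwards [self_mem_nhdsWithin] with δ hδ
    have : δ ≠ 0 := (ne_of_gt hδ)
    simpa using this
  have l1 : Tendsto (fun δ : ℝ ↦ (δ : ℂ) * logDeriv riemannZeta₁ (z + δ)) (𝓝[>] 0)
      (𝓝 (zetaMult τ)) := by
    have := (tendsto_sub_mul_logDeriv (differentiable_riemannZeta₁.analyticAt z)
      (analyticOrderAt_riemannZeta₁_ne_top z)).comp hw'
    refine this.congr fun δ ↦ ?_
    simp
  have h2z : riemannZeta₁ (2 * z) ≠ 0 := riemannZeta₁_ne_zero_of_one_le_re (by simp [hzre])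
  have l2 : Tendsto (fun δ : ℝ ↦ (δ : ℂ) * logDeriv riemannZeta₁ (2 * (z + δ))) (𝓝[>] 0)
      (𝓝 0) := by
    have hc : ContinuousAt (logDeriv riemannZeta₁) (2 * z) := by
      have := differentiable_riemannZeta₁.analyticAt (2 * z)
      exact this.deriv.continuousAt.div this.continuousAt h2z
    have := hδ.mul (hc.tendsto.comp (hw.const_mul 2))
    simpa using this
  have l3 : Tendsto (fun δ : ℝ ↦ (δ : ℂ) / (2 * (z + δ) - 1)) (𝓝[>] 0)
      (𝓝 (if τ = 0 then 1 / 2 else 0)) := by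
    split_ifs with hτ
    · refine tendsto_const_nhds.congr' ?_
      filter_upwards [self_mem_nhdsWithin] with δ hδ
      have : (δ : ℂ) ≠ 0 := by exact_mod_cast (ne_of_gt hδ)
      rw [hz, hτ]
      simp only [Complex.ofReal_zero, mul_zero, add_zero]
      field_simp
      ring
    · have h0 : 2 * z - 1 ≠ 0 := by
        rw [hz]
        have : (τ : ℂ) ≠ 0 := by exact_mod_cast hτ
        have : 2 * (1 / 2 + Complex.I * τ) - 1 = 2 * Complex.I * τ := by ring
        rw [this]
        simp [hτ]
      have : Tendsto (fun δ : ℝ ↦ (δ : ℂ) / (2 * (z + δ) - 1)) (𝓝[>] 0) (𝓝 (0 / (2 * z - 1))) :=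
        hδ.div ((hw.const_mul 2).sub_const 1) h0
      simpa using this
  have l4 : Tendsto (fun δ : ℝ ↦ (δ : ℂ) * primeRemainder (z + δ)) (𝓝[>] 0) (𝓝 0) := by
    have hc : ContinuousAt primeRemainder z :=
      (differentiableOn_primeRemainder.analyticAt
      ((isOpen_lt continuous_const Complex.continuous_re).mem_nhds (by
        show 2 / 5 < z.re
        rw [hzre]; norm_num))).continuousAt
    have := hδ.mul (hc.tendsto.comp hw)
    simpa using this
  have hs : Tendsto (fun δ : ℝ ↦ z + δ - 1) (𝓝[>] 0) (𝓝 (z - 1)) := hw.sub_const 1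
  have hz1 : z - 1 ≠ 0 := by
    intro h
    have := congrArg Complex.re h
    rw [Complex.sub_re, hzre] at this
    norm_num at this
  have hz2 : z - 1 + 3 / 4 ≠ 0 := by
    intro h
    have := congrArg Complex.re h
    rw [Complex.add_re, Complex.sub_re, hzre] at this
    norm_num at this
  have l5 : Tendsto (fun δ : ℝ ↦ (δ : ℂ) * (C / (z + δ - 1 + 3 / 4))) (𝓝[>] 0) (𝓝 0) := by
    have := hδ.mul (tendsto_const_nhds (x := (C : ℂ)) |>.div (hs.add_const (3 / 4)) hz2)
    simpa using this
  have l6 := ((((((hδ.mul_const (Real.eulerMascheroniConstant : ℂ)).sub l1).add l2).sub l3).add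
    l4).const_mul (ε : ℂ)).div hs hz1 |>.add l5
  have e : ε * (zetaMult τ + if τ = 0 then 1 / 2 else 0) / (1 / 2 - Complex.I * τ) =
      ε * (0 * (Real.eulerMascheroniConstant : ℂ) - zetaMult τ + 0 -
        (if τ = 0 then 1 / 2 else 0) + 0) / (z - 1) + 0 := by
    have : 1 / 2 - Complex.I * τ = -(z - 1) := by rw [hz]; ring
    rw [this]
    field_simp
    ring
  rw [e]
  refine l6.congr' ?_
  filter_upwards [self_mem_nhdsWithin, mem_nhdsWithin_of_mem_nhds (Iio_mem_nhds
    (show (0 : ℝ) < 1 / 2 by norm_num))] with δ hδ0 hδ1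
  have hδ0' : 0 < δ := hδ0
  have hδ1' : δ < 1 / 2 := hδ1
  have hre : (z + δ).re = 1 / 2 + δ := by rw [Complex.add_re, hzre, Complex.ofReal_re]
  have hs0 : z + δ - 1 ≠ 0 := by
    intro h
    have := congrArg Complex.re h
    rw [Complex.sub_re, hre] at this
    norm_num at this
    linarith
  have hM := h.mul_mellinMGF_eq (s := z + δ - 1) (by
    rw [Complex.sub_re, hre]; norm_num; linarith)
  have h2 : 2 * (z + δ) ≠ 1 := by
    intro h
    have := congrArg Complex.re h
    rw [Complex.mul_re, hre] at this
    norm_num at this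
    linarith
  have h3 : riemannZeta₁ (2 * (z + δ)) ≠ 0 := riemannZeta₁_ne_zero_of_one_le_re (by
    rw [Complex.mul_re, hre]; norm_num; linarith)
  have e2 : -1 / 2 + (δ : ℂ) + Complex.I * τ = z + δ - 1 := by rw [hz]; ring
  rw [e2, ← mul_div_cancel_left₀ (mellinMGF (shiftedDelta ε C) (z + δ - 1)) hs0, hM,
    deltaTransform, sub_add_cancel, logDeriv_riemannZeta_eq h2 h3]
  rw [add_div, mul_div_cancel_left₀ _ hs0, mul_add]
  simp only [Pi.div_apply]
  ring

end SignHypothesis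

end BoundaryLimits

section LogDerivBound

open MeasureTheory ProbabilityTheory Set

theorem exists_le_mul_one_add_inv {F : ℝ → ℝ} {a l : ℝ} (hF : AntitoneOn F (Ioi a))
    (hl : Tendsto (fun δ ↦ δ * F (a + δ)) (𝓝[>] 0) (𝓝 l)) :
    ∃ K, 0 ≤ K ∧ ∀ x, a < x → F x ≤ K * (1 + 1 / (x - a)) := by
  have h1 := hl.eventually (Iio_mem_nhds (lt_add_one l))
  obtain ⟨d, hd, hsub⟩ := mem_nhdsGT_iff_exists_Ioo_subset.mp h1
  have hd0 : (0 : ℝ) < d := hd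
  refine ⟨max (|l| + 1) |F (a + d / 2)|, by positivity, fun x hx ↦ ?_⟩
  set K := max (|l| + 1) |F (a + d / 2)|
  have hK1 : |l| + 1 ≤ K := le_max_left _ _
  have hK2 : |F (a + d / 2)| ≤ K := le_max_right _ _
  have hK0 : 0 ≤ K := by positivity
  have hx' : 0 < x - a := sub_pos.mpr hx
  rcases lt_or_ge (x - a) d with h | h
  · have h2 : (x - a) * F (a + (x - a)) < l + 1 := hsub ⟨hx', h⟩
    rw [add_sub_cancel] at h2
    have h3 : F x ≤ (l + 1) / (x - a) := by
      rw [le_div_iff₀ hx']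
      linarith
    have h4 : (l + 1) / (x - a) ≤ K / (x - a) := by
      gcongr
      linarith [le_abs_self l]
    rw [mul_add, mul_one_div, mul_one]
    linarith
  · have h2 : F x ≤ F (a + d / 2) := hF (by simp [hd0]) hx (by linarith)
    have h3 : 0 ≤ K * (1 / (x - a)) := by positivity
    rw [mul_add, mul_one]
    linarith [le_abs_self (F (a + d / 2))]

theorem norm_logDeriv_riemannZeta_le {w : ℂ} (hw : 1 < w.re) :
    ‖logDeriv riemannZeta w‖ ≤
      ∑' p : Nat.Primes, Real.log p / (((p : ℕ) : ℝ) ^ w.re - 1) ∧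
    Summable fun p : Nat.Primes ↦ Real.log p / (((p : ℕ) : ℝ) ^ w.re - 1) := by
  have h1 := hasSum_neg_logDeriv_riemannZeta hw
  have h2 := hasSum_neg_logDeriv_riemannZeta (w := (w.re : ℂ)) (by simpa using hw)
  have h3 : Summable fun p : Nat.Primes ↦ Real.log p / (((p : ℕ) : ℝ) ^ w.re - 1) := by
    have := h2.summable
    rw [← Complex.summable_ofReal]
    refine this.congr fun p ↦ ?_
    push_cast
    rw [Complex.ofReal_cpow (by positivity)]
    simp
  refine ⟨?_, h3⟩
  rw [← norm_neg, logDeriv_apply, ← neg_div, ← h1.tsum_eq]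
  refine tsum_of_norm_bounded h3.hasSum fun p ↦ ?_
  have hp : (1 : ℝ) < (p : ℕ) := by exact_mod_cast p.2.one_lt
  have h4 : 1 < ((p : ℕ) : ℝ) ^ w.re := Real.one_lt_rpow hp (by linarith)
  rw [norm_div, Complex.norm_real, Real.norm_of_nonneg (Real.log_nonneg hp.le)]
  have h5 : ((p : ℕ) : ℝ) ^ w.re - 1 ≤ ‖((p : ℕ) : ℂ) ^ w - 1‖ := by
    have := norm_sub_norm_le (((p : ℕ) : ℂ) ^ w) 1
    rwa [norm_one, Complex.norm_natCast_cpow_of_pos p.2.pos] at this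
  have := Real.log_nonneg hp.le
  gcongr

theorem exists_norm_logDeriv_riemannZeta_le :
    ∃ K, 0 ≤ K ∧ ∀ w : ℂ, 1 < w.re → ‖logDeriv riemannZeta w‖ ≤ K * (1 + 1 / (w.re - 1)) := by
  set F : ℝ → ℝ := fun σ ↦ ∑' p : Nat.Primes, Real.log p / (((p : ℕ) : ℝ) ^ σ - 1) with hF
  have hs : ∀ σ : ℝ, 1 < σ →
      Summable fun p : Nat.Primes ↦ Real.log p / (((p : ℕ) : ℝ) ^ σ - 1) := fun σ hσ ↦ by
    simpa using (norm_logDeriv_riemannZeta_le (w := σ) (by simpa using hσ)).2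
  have hanti : AntitoneOn F (Ioi 1) := by
    intro s hs1 t ht hst
    have hs1 : 1 < s := hs1
    refine (hs t ht).tsum_le_tsum (fun p ↦ ?_) (hs s hs1)
    have hp : (1 : ℝ) < (p : ℕ) := by exact_mod_cast p.2.one_lt
    have h4 : 1 < ((p : ℕ) : ℝ) ^ s := Real.one_lt_rpow hp (by linarith)
    have := Real.log_nonneg hp.le
    have h5 : ((p : ℕ) : ℝ) ^ s ≤ ((p : ℕ) : ℝ) ^ t := Real.rpow_le_rpow_of_exponent_le hp.le hst
    gcongr
  have hFeq : ∀ σ : ℝ, 1 < σ → (F σ : ℂ) = -logDeriv riemannZeta σ := fun σ hσ ↦ by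
    rw [logDeriv_apply, ← neg_div,
      ← (hasSum_neg_logDeriv_riemannZeta (w := (σ : ℂ)) (by simpa using hσ)).tsum_eq, hF,
      Complex.ofReal_tsum]
    refine tsum_congr fun p ↦ ?_
    push_cast
    rw [Complex.ofReal_cpow (by positivity)]
    simp
  have hlim : Tendsto (fun δ ↦ δ * F (1 + δ)) (𝓝[>] 0) (𝓝 1) := by
    have hc : ContinuousAt (fun δ : ℝ ↦ (1 : ℂ) - δ * logDeriv riemannZeta₁ (1 + δ)) 0 := by
      have h1 : ContinuousAt (logDeriv riemannZeta₁) (1 + ((0 : ℝ) : ℂ)) := by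
        have := differentiable_riemannZeta₁.analyticAt (1 + ((0 : ℝ) : ℂ))
        exact this.deriv.continuousAt.div this.continuousAt (by simp)
      have h2 : ContinuousAt (fun δ : ℝ ↦ (1 : ℂ) + δ) 0 := by fun_prop
      exact continuousAt_const.sub (Complex.continuous_ofReal.continuousAt.mul
        (ContinuousAt.comp (f := fun δ : ℝ ↦ (1 : ℂ) + δ) h1 h2))
    have h1 := hc.tendsto.mono_left (nhdsWithin_le_nhds (s := Ioi (0 : ℝ)))
    have h2 := (Complex.continuous_re.tendsto _).comp h1
    simp only [Complex.ofReal_zero, zero_mul, sub_zero, Complex.one_re] at h2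
    refine h2.congr' ?_
    filter_upwards [self_mem_nhdsWithin] with δ hδ
    have hδ : 0 < δ := hδ
    have hδ' : (δ : ℂ) ≠ 0 := by exact_mod_cast hδ.ne'
    have h3 := hFeq (1 + δ) (by linarith)
    rw [logDeriv_riemannZeta_eq (by simpa using hδ.ne')
      (riemannZeta₁_ne_zero_of_one_le_re (by simp [hδ.le]))] at h3
    rw [Function.comp_apply, ← Complex.ofReal_re (δ * F (1 + δ)), Complex.ofReal_mul, h3]
    congr 1
    push_cast
    rw [add_sub_cancel_left]
    linear_combination -mul_one_div_cancel hδ'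
  obtain ⟨K, hK0, hK⟩ := exists_le_mul_one_add_inv hanti hlim
  exact ⟨K, hK0, fun w hw ↦ (norm_logDeriv_riemannZeta_le hw).1.trans (hK _ hw)⟩

namespace SignHypothesis

variable {ε C : ℝ} (h : SignHypothesis ε C)
include h

omit h in
theorem ofReal_mellinMGF (σ : ℝ) : mellinMGF (shiftedDelta ε C) σ =
    (mgf (fun x ↦ -Real.log x) (mellinMeasure (shiftedDelta ε C)) σ : ℝ) :=
  complexMGF_ofReal ..

theorem tendsto_mul_mgf :
    Tendsto (fun δ ↦ δ * mgf (fun x ↦ -Real.log x) (mellinMeasure (shiftedDelta ε C)) (-1 / 2 + δ))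
      (𝓝[>] 0) (𝓝 (ε * (2 * zetaMult 0 + 1))) := by
  have h1 := (Complex.continuous_re.tendsto _).comp (h.tendsto_mul_mellinMGF 0)
  have e : ε * (zetaMult 0 + if (0 : ℝ) = 0 then 1 / 2 else 0) / (1 / 2 - Complex.I * (0 : ℝ)) =
      ((ε * (2 * zetaMult 0 + 1) : ℝ) : ℂ) := by
    push_cast
    simp
    ring
  rw [e, Complex.ofReal_re] at h1
  refine h1.congr fun δ ↦ ?_
  rw [Function.comp_apply, Complex.ofReal_zero, mul_zero, add_zero,
    show (-1 / 2 + (δ : ℂ)) = ((-1 / 2 + δ : ℝ) : ℂ) by push_cast; ring, ofReal_mellinMGF,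
    ← Complex.ofReal_mul, Complex.ofReal_re]

theorem eq_one : ε = 1 := by
  rcases eq_or_eq_neg_of_abs_eq h.abs_eq_one with h1 | h1
  · exact h1
  · exfalso
    have h2 : 0 ≤ ε * (2 * zetaMult 0 + 1) := by
      refine ge_of_tendsto h.tendsto_mul_mgf ?_
      filter_upwards [self_mem_nhdsWithin] with δ hδ
      exact mul_nonneg (le_of_lt hδ) mgf_nonneg
    have h3 : (0 : ℝ) ≤ zetaMult 0 := Nat.cast_nonneg _
    rw [h1] at h2
    linarith

theorem exists_norm_mellinMGF_le : ∃ K, 0 ≤ K ∧ ∀ s : ℂ, -1 / 2 < s.re →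
    ‖mellinMGF (shiftedDelta ε C) s‖ ≤ K * (1 + 1 / (s.re + 1 / 2)) := by
  have hanti : AntitoneOn (mgf (fun x ↦ -Real.log x) (mellinMeasure (shiftedDelta ε C)))
      (Ioi (-1 / 2)) := by
    intro s hs t ht hst
    refine integral_mono_ae (h.Ioi_subset ht) (h.Ioi_subset hs) ?_
    filter_upwards [neg_log_nonpos_ae (shiftedDelta ε C)] with x hx
    exact Real.exp_le_exp.mpr (mul_le_mul_of_nonpos_right hst hx)
  obtain ⟨K, hK0, hK⟩ := exists_le_mul_one_add_inv hanti h.tendsto_mul_mgf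
  refine ⟨K, hK0, fun s hs ↦ ?_⟩
  have := hK _ hs
  rw [show s.re - -1 / 2 = s.re + 1 / 2 by ring] at this
  exact norm_complexMGF_le_mgf.trans this

theorem exists_norm_logDeriv_riemannZeta₁_le : ∃ K, 0 ≤ K ∧ ∀ w : ℂ, 1 / 2 < w.re →
    ‖logDeriv riemannZeta₁ w‖ ≤ K * (1 + ‖w‖) * (1 + 1 / (w.re - 1 / 2)) := by
  obtain ⟨K₁, hK₁, h₁⟩ := h.exists_norm_mellinMGF_le
  obtain ⟨K₂, hK₂, h₂⟩ := exists_norm_logDeriv_riemannZeta_le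
  obtain ⟨K₃, h₃⟩ := exists_norm_primeRemainder_le
  have hK₃ : 0 ≤ K₃ := (norm_nonneg _).trans (h₃ 1 (by norm_num))
  have hC := h.const_nonneg
  refine ⟨|Real.eulerMascheroniConstant| + K₁ + K₂ + K₃ + 4 * C, by positivity, fun w hw ↦ ?_⟩
  have hM := h.mul_mellinMGF_eq (s := w - 1) (by rw [Complex.sub_re]; norm_num; linarith)
  have b₁ := h₁ (w - 1) (by rw [Complex.sub_re]; norm_num; linarith)
  have b₂ := h₂ (2 * w) (by rw [Complex.mul_re]; norm_num; linarith)
  have b₃ := h₃ w (by linarith)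
  have e1 : (w - 1).re + 1 / 2 = w.re - 1 / 2 := by rw [Complex.sub_re, Complex.one_re]; ring
  have e2 : (2 * w).re - 1 = 2 * (w.re - 1 / 2) := by
    rw [Complex.mul_re]; norm_num; ring
  rw [e1] at b₁
  rw [e2] at b₂
  set d := w.re - 1 / 2 with hd
  have hd0 : 0 < d := by linarith
  have b₂' : ‖logDeriv riemannZeta (2 * w)‖ ≤ K₂ * (1 + 1 / d) := by
    refine b₂.trans ?_
    gcongr
    linarith
  have hs34 : 1 / 4 ≤ ‖w - 1 + 3 / 4‖ := by
    refine le_trans ?_ (Complex.re_le_norm _)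
    rw [Complex.add_re, Complex.sub_re]
    norm_num
    linarith
  have hs0 : w - 1 + 3 / 4 ≠ 0 := by
    rw [← norm_pos_iff]; linarith
  have b₄ : ‖(w - 1) * (C / (w - 1 + 3 / 4))‖ ≤ 4 * C := by
    have : (w - 1) * (C / (w - 1 + 3 / 4)) = C * (1 - (3 / 4) / (w - 1 + 3 / 4)) := by
      linear_combination C * mul_inv_cancel₀ hs0
    rw [this, norm_mul, Complex.norm_real, Real.norm_of_nonneg hC, mul_comm (4 : ℝ)]
    gcongr
    refine (norm_sub_le _ _).trans ?_
    rw [norm_div, norm_one]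
    have : ‖(3 / 4 : ℂ)‖ = 3 / 4 := by norm_num
    rw [this]
    have : 3 / 4 / ‖w - 1 + 3 / 4‖ ≤ 3 / 4 / (1 / 4) := by gcongr
    linarith
  have hε := h.eq_one
  subst hε
  have key : logDeriv riemannZeta₁ w = Real.eulerMascheroniConstant +
      logDeriv riemannZeta (2 * w) + primeRemainder w -
      (w - 1) * mellinMGF (shiftedDelta 1 C) (w - 1) + (w - 1) * (C / (w - 1 + 3 / 4)) := by
    rw [hM, deltaTransform, sub_add_cancel, Complex.ofReal_one]
    ring
  have b₅ : ‖(w - 1) * mellinMGF (shiftedDelta 1 C) (w - 1)‖ ≤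
      (1 + ‖w‖) * (K₁ * (1 + 1 / d)) := by
    rw [norm_mul]
    gcongr
    refine (norm_sub_le _ _).trans ?_
    rw [norm_one, add_comm]
  have hbd : ‖logDeriv riemannZeta₁ w‖ ≤ |Real.eulerMascheroniConstant| + K₂ * (1 + 1 / d) + K₃ +
      (1 + ‖w‖) * (K₁ * (1 + 1 / d)) + 4 * C := by
    rw [key]
    refine (norm_add_le _ _).trans (add_le_add ((norm_sub_le _ _).trans (add_le_add
      ((norm_add_le _ _).trans (add_le_add ((norm_add_le _ _).trans (add_le_add ?_ b₂')) b₃))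
      b₅)) b₄)
    rw [Complex.norm_real, Real.norm_eq_abs]
  refine hbd.trans ?_
  have hu : 1 ≤ 1 + ‖w‖ := by linarith [norm_nonneg w]
  have hv : 1 ≤ 1 + 1 / d := by have : 0 < 1 / d := by positivity
                                linarith
  generalize 1 + ‖w‖ = u at *
  generalize 1 + 1 / d = v at *
  have huv : 1 ≤ u * v := one_le_mul_of_one_le_of_one_le hu hv
  have hvuv : v ≤ u * v := le_mul_of_one_le_left (by linarith) hu
  have g0 := abs_nonneg Real.eulerMascheroniConstant
  have i1 := mul_le_mul_of_nonneg_left huv g0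
  have i2 := mul_le_mul_of_nonneg_left hvuv hK₂
  have i3 := mul_le_mul_of_nonneg_left huv hK₃
  have i4 := mul_le_mul_of_nonneg_left huv hC
  linarith

end SignHypothesis

end LogDerivBound

section Digamma

open Set

theorem hasDerivAt_log_Gamma {x : ℝ} (hx : 0 < x) :
    HasDerivAt (fun y ↦ Real.log (Real.Gamma y)) (deriv (fun y ↦ Real.log (Real.Gamma y)) x) x := by
  refine DifferentiableAt.hasDerivAt ?_
  refine (Real.differentiableAt_Gamma ?_).log (Real.Gamma_ne_zero ?_) <;>
  exact fun m ↦ ne_of_gt (by linarith [(Nat.cast_nonneg m : (0 : ℝ) ≤ m)])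

theorem log_Gamma_add_one {x : ℝ} (hx : 0 < x) :
    Real.log (Real.Gamma (x + 1)) = Real.log (Real.Gamma x) + Real.log x := by
  rw [Real.Gamma_add_one hx.ne', Real.log_mul hx.ne' (Real.Gamma_pos_of_pos hx).ne', add_comm]

theorem deriv_log_Gamma_le {x : ℝ} (hx : 0 < x) :
    deriv (fun y ↦ Real.log (Real.Gamma y)) x ≤ Real.log x := by
  have hc : ConvexOn ℝ (Ioi 0) (fun y ↦ Real.log (Real.Gamma y)) := Real.convexOn_log_Gamma
  refine (hc.deriv_le_slope hx (show (0 : ℝ) < x + 1 by linarith) (by linarith)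
    (hasDerivAt_log_Gamma hx).differentiableAt).trans (le_of_eq ?_)
  rw [slope_def_field, log_Gamma_add_one hx]
  ring_nf

theorem log_le_deriv_log_Gamma {x : ℝ} (hx : 0 < x) :
    Real.log x ≤ deriv (fun y ↦ Real.log (Real.Gamma y)) (x + 1) := by
  have hc : ConvexOn ℝ (Ioi 0) (fun y ↦ Real.log (Real.Gamma y)) := Real.convexOn_log_Gamma
  refine (le_of_eq ?_).trans (hc.slope_le_deriv hx (show (0 : ℝ) < x + 1 by linarith)
    (by linarith) (hasDerivAt_log_Gamma (by linarith)).differentiableAt)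
  rw [slope_def_field, log_Gamma_add_one hx]
  ring_nf

theorem deriv_log_Gamma_add_one {x : ℝ} (hx : 0 < x) :
    deriv (fun y ↦ Real.log (Real.Gamma y)) (x + 1) =
      deriv (fun y ↦ Real.log (Real.Gamma y)) x + 1 / x := by
  rw [← deriv_comp_add_const, one_div, ← Real.deriv_log,
    ← deriv_add (hasDerivAt_log_Gamma hx).differentiableAt (Real.differentiableAt_log hx.ne')]
  apply EventuallyEq.deriv_eq
  filter_upwards [eventually_gt_nhds hx] with y hy using log_Gamma_add_one hy

theorem deriv_log_Gamma_add_natCast {x : ℝ} (hx : 0 < x) (N : ℕ) :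
    deriv (fun y ↦ Real.log (Real.Gamma y)) (x + N) =
      deriv (fun y ↦ Real.log (Real.Gamma y)) x + ∑ n ∈ Finset.range N, 1 / (n + x) := by
  induction N with
  | zero => simp
  | succ N ih =>
    rw [Nat.cast_add_one, ← add_assoc, deriv_log_Gamma_add_one (by positivity), ih,
      Finset.sum_range_succ, add_assoc, add_comm x]

theorem digamma_ofReal {x : ℝ} (hx : 0 < x) :
    Complex.digamma x = (deriv (fun y ↦ Real.log (Real.Gamma y)) x : ℝ) := by
  have h1 : ∀ m : ℕ, x ≠ -m := fun m ↦ ne_of_gt (by linarith [(Nat.cast_nonneg m : (0 : ℝ) ≤ m)])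
  have hf : DifferentiableAt ℂ Complex.Gamma x := Complex.differentiableAt_Gamma _ fun m ↦ by
    exact_mod_cast h1 m
  have hg := Real.differentiableAt_Gamma h1
  have h2 : deriv Complex.Gamma x = (deriv Real.Gamma x : ℝ) := by
    rw [← (funext Complex.Gamma_ofReal ▸ hf.hasDerivAt.comp_ofReal.deriv :)]
    exact hg.hasDerivAt.ofReal_comp.deriv
  rw [Complex.digamma_def, logDeriv_apply, h2, Complex.Gamma_ofReal,
    deriv.log hg (Real.Gamma_ne_zero h1)]
  push_cast
  rfl

/-- The general term of the series for the digamma function. -/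
noncomputable def digammaTerm (n : ℕ) (z : ℂ) : ℂ := 1 / (n + 1) - 1 / (n + z)

theorem norm_digammaTerm_le (n : ℕ) {z : ℂ} (hz : 1 / 4 < z.re) :
    ‖digammaTerm n z‖ ≤ 10 * √‖z‖ * (1 / ((n : ℝ) + 1) ^ (3 / 2 : ℝ)) := by
  have hn0 : (0 : ℝ) ≤ n := n.cast_nonneg
  have hzn : 1 / 4 < ‖z‖ := hz.trans_le (Complex.re_le_norm z)
  have hne : (n : ℂ) + z ≠ 0 := fun h ↦ by
    have := congrArg Complex.re h
    simp at this
    linarith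
  have hne1 : (n : ℂ) + 1 ≠ 0 := by exact_mod_cast Nat.succ_ne_zero n
  have e : digammaTerm n z = (z - 1) / ((n + 1) * (n + z)) := by
    rw [digammaTerm]
    field_simp
    ring
  have hlow : √((n : ℝ) + 1) * √‖z‖ / 2 ≤ ‖(n : ℂ) + z‖ := by
    refine abs_le_of_sq_le_sq' ?_ (norm_nonneg _) |>.2
    rw [div_pow, mul_pow, Real.sq_sqrt (by positivity), Real.sq_sqrt (by positivity),
      ← Complex.normSq_eq_norm_sq, Complex.normSq_apply]
    have h1 : ‖z‖ ^ 2 = z.re * z.re + z.im * z.im := by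
      rw [← Complex.normSq_eq_norm_sq, Complex.normSq_apply]
    simp only [Complex.add_re, Complex.natCast_re, Complex.add_im, Complex.natCast_im, zero_add]
    have h2 : (n : ℝ) ^ 2 + ‖z‖ ^ 2 ≤ (n + z.re) * (n + z.re) + z.im * z.im := by
      rw [h1]
      nlinarith
    refine le_trans ?_ h2
    rcases Nat.eq_zero_or_pos n with h | h
    · rw [h]
      norm_num
      nlinarith
    · have : (1 : ℝ) ≤ n := by exact_mod_cast h
      nlinarith [sq_nonneg ((n : ℝ) - ‖z‖)]
  have hup : ‖z - 1‖ ≤ 5 * (√‖z‖ * √‖z‖) := by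
    rw [Real.mul_self_sqrt (norm_nonneg _)]
    refine (norm_sub_le _ _).trans ?_
    rw [norm_one]
    linarith
  have hsz : 0 < √‖z‖ := Real.sqrt_pos.mpr (by linarith)
  have hsn : 0 < √((n : ℝ) + 1) := Real.sqrt_pos.mpr (by linarith)
  have hpow : ((n : ℝ) + 1) ^ (3 / 2 : ℝ) = (n + 1) * √((n : ℝ) + 1) := by
    rw [Real.sqrt_eq_rpow, ← Real.rpow_one_add' (by positivity) (by norm_num)]
    norm_num
  have hn1 : ‖(n : ℂ) + 1‖ = n + 1 := by
    exact_mod_cast Complex.norm_natCast (n + 1)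
  rw [e, norm_div, norm_mul, hn1, hpow]
  calc ‖z - 1‖ / ((n + 1) * ‖(n : ℂ) + z‖)
      ≤ 5 * (√‖z‖ * √‖z‖) / ((n + 1) * (√((n : ℝ) + 1) * √‖z‖ / 2)) := by gcongr
    _ = 10 * √‖z‖ * (1 / ((n + 1) * √((n : ℝ) + 1))) := by
      field_simp
      norm_num

theorem summable_one_div_add_one_rpow :
    Summable fun n : ℕ ↦ 1 / ((n : ℝ) + 1) ^ (3 / 2 : ℝ) := by
  have := (summable_nat_add_iff 1).mpr (Real.summable_one_div_nat_rpow (p := 3 / 2).mpr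
    (by norm_num))
  simpa using this

theorem summable_digammaTerm {z : ℂ} (hz : 1 / 4 < z.re) : Summable fun n ↦ digammaTerm n z :=
  (summable_one_div_add_one_rpow.mul_left _).of_norm_bounded fun n ↦ norm_digammaTerm_le n hz

theorem differentiableOn_tsum_digammaTerm :
    DifferentiableOn ℂ (fun z ↦ ∑' n, digammaTerm n z) {z | 1 / 4 < z.re} := by
  intro z hz
  have hU : IsOpen ({z : ℂ | 1 / 4 < z.re} ∩ Metric.ball 0 (‖z‖ + 1)) :=
    (isOpen_lt continuous_const Complex.continuous_re).inter Metric.isOpen_ball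
  have hd : DifferentiableOn ℂ (fun z ↦ ∑' n, digammaTerm n z)
      ({z : ℂ | 1 / 4 < z.re} ∩ Metric.ball 0 (‖z‖ + 1)) := by
    refine Complex.differentiableOn_tsum_of_summable_norm
      (summable_one_div_add_one_rpow.mul_left (10 * √(‖z‖ + 1))) (fun n w hw ↦ ?_) hU
      fun n w hw ↦ (norm_digammaTerm_le n hw.1).trans ?_
    · have hw1 : 1 / 4 < w.re := hw.1
      have hne : (n : ℂ) + w ≠ 0 := fun h ↦ by
        have h1 : (n : ℝ) + w.re = 0 := by simpa using congrArg Complex.re h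
        linarith [(Nat.cast_nonneg n : (0 : ℝ) ≤ n)]
      exact ((differentiableAt_const _).sub ((differentiableAt_const _).div
        ((differentiableAt_const _).add differentiableAt_id) hne)).differentiableWithinAt
    · have := hw.2
      rw [mem_ball_zero_iff] at this
      gcongr
  exact (hd.differentiableAt (hU.mem_nhds ⟨hz, by simp⟩)).differentiableWithinAt

theorem tsum_digammaTerm_ofReal {x : ℝ} (hx : 1 / 4 < x) :
    ∑' n, digammaTerm n x = Real.eulerMascheroniConstant + Complex.digamma x := by
  have hx0 : 0 < x := by linarith
  set ψ := deriv (fun y ↦ Real.log (Real.Gamma y)) with hψ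
  have h1 : Tendsto (fun N : ℕ ↦ ψ (x + (N + 1 : ℕ)) - Real.log (N + 1 : ℕ)) atTop (𝓝 0) := by
    have hl : ∀ y : ℝ, Tendsto (fun N : ℕ ↦ Real.log (y + N) - Real.log N) atTop (𝓝 0) := by
      intro y
      have := (Real.tendsto_log_comp_add_sub_log y).comp tendsto_natCast_atTop_atTop
      refine this.congr fun N ↦ ?_
      simp [add_comm]
    have hl1 : Tendsto (fun N : ℕ ↦ Real.log (x + (N + 1 : ℕ)) - Real.log (N + 1 : ℕ)) atTop
        (𝓝 0) := (hl x).comp (tendsto_add_atTop_nat 1)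
    have hl2 : Tendsto (fun N : ℕ ↦ Real.log (x - 1 + (N + 1 : ℕ)) - Real.log (N + 1 : ℕ)) atTop
        (𝓝 0) := (hl (x - 1)).comp (tendsto_add_atTop_nat 1)
    refine tendsto_of_tendsto_of_tendsto_of_le_of_le hl2 hl1 (fun N ↦ ?_) fun N ↦ ?_
    · have := log_le_deriv_log_Gamma (x := x + N) (by positivity)
      have e1 : x - 1 + ((N + 1 : ℕ) : ℝ) = x + N := by push_cast; ring
      have e2 : x + ((N + 1 : ℕ) : ℝ) = x + N + 1 := by push_cast; ring
      beta_reduce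
      rw [e1, e2]
      linarith
    · have := deriv_log_Gamma_le (x := x + (N + 1 : ℕ)) (by positivity)
      beta_reduce
      linarith
  have h2 := (summable_digammaTerm (z := x) (by simpa using hx)).hasSum.tendsto_sum_nat.comp
    (tendsto_add_atTop_nat 1)
  have h3 := ((Real.tendsto_harmonic_sub_log.comp (tendsto_add_atTop_nat 1)).sub h1).add_const
    (ψ x)
  have h4 := (Complex.continuous_ofReal.tendsto _).comp h3
  refine (tendsto_nhds_unique h2 (h4.congr fun N ↦ ?_)).trans ?_
  · have h5 := deriv_log_Gamma_add_natCast hx0 (N + 1)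
    simp only [Function.comp_apply, digammaTerm, hψ]
    rw [h5, Finset.sum_sub_distrib, harmonic]
    push_cast
    simp only [one_div]
    ring
  · rw [digamma_ofReal hx0]
    push_cast
    ring

theorem differentiableAt_digamma {z : ℂ} (hz : 0 < z.re) :
    DifferentiableAt ℂ Complex.digamma z := by
  have hd : DifferentiableOn ℂ Complex.Gamma {z | 0 < z.re} := fun w hw ↦
    (Complex.differentiableAt_Gamma w fun m h ↦ by
      have hw : 0 < w.re := hw
      rw [h] at hw
      simp at hw
      linarith [(Nat.cast_nonneg m : (0 : ℝ) ≤ m)]).differentiableWithinAt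
  have ha := hd.analyticAt ((isOpen_lt continuous_const Complex.continuous_re).mem_nhds hz)
  exact ha.deriv.differentiableAt.div ha.differentiableAt (Complex.Gamma_ne_zero_of_re_pos hz)

theorem tsum_digammaTerm {z : ℂ} (hz : 1 / 4 < z.re) :
    ∑' n, digammaTerm n z = Real.eulerMascheroniConstant + Complex.digamma z := by
  have hU : IsOpen {z : ℂ | 1 / 4 < z.re} := isOpen_lt continuous_const Complex.continuous_re
  refine AnalyticOnNhd.eqOn_of_preconnected_of_frequently_eq (z₀ := ((1 : ℝ) : ℂ))
    (U := {z | 1 / 4 < z.re}) (f := fun z ↦ ∑' n, digammaTerm n z)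
    (g := fun z ↦ Real.eulerMascheroniConstant + Complex.digamma z)
    (differentiableOn_tsum_digammaTerm.analyticOnNhd hU)
    (DifferentiableOn.analyticOnNhd (fun w hw ↦ ?_) hU)
    (convex_halfSpace_re_gt _).isPreconnected (by norm_num) ?_ hz
  · have hw : 1 / 4 < w.re := hw
    exact ((differentiableAt_digamma (by linarith)).const_add _).differentiableWithinAt
  · refine frequently_ofReal_nhdsWithin_ne ?_
    filter_upwards [lt_mem_nhds (show (1 / 4 : ℝ) < 1 by norm_num)] with t ht
    exact tsum_digammaTerm_ofReal ht

theorem exists_norm_digamma_le :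
    ∃ K, 0 ≤ K ∧ ∀ z : ℂ, 1 / 4 < z.re → ‖Complex.digamma z‖ ≤ K * (1 + √‖z‖) := by
  set S := ∑' n : ℕ, 1 / ((n : ℝ) + 1) ^ (3 / 2 : ℝ)
  have hS : 0 ≤ S := tsum_nonneg fun n ↦ by positivity
  refine ⟨|Real.eulerMascheroniConstant| + 10 * S, by positivity, fun z hz ↦ ?_⟩
  have h1 : ‖∑' n, digammaTerm n z‖ ≤ 10 * √‖z‖ * S :=
    tsum_of_norm_bounded (summable_one_div_add_one_rpow.hasSum.mul_left _)
      fun n ↦ norm_digammaTerm_le n hz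
  have h2 : Complex.digamma z = ∑' n, digammaTerm n z - Real.eulerMascheroniConstant := by
    rw [tsum_digammaTerm hz]
    ring
  rw [h2]
  refine (norm_sub_le _ _).trans ?_
  rw [Complex.norm_real, Real.norm_eq_abs]
  have : 0 ≤ |Real.eulerMascheroniConstant| * √‖z‖ := by positivity
  nlinarith

end Digamma

section Contour

open Metric

theorem exists_eq_sub_pow_mul {f : ℂ → ℂ} (hf : Differentiable ℂ f) {ρ : ℂ}
    (hne : analyticOrderAt f ρ ≠ ⊤) :
    ∃ g : ℂ → ℂ, Differentiable ℂ g ∧ (∀ w, f w = (w - ρ) ^ analyticOrderNatAt f ρ * g w) ∧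
      g ρ ≠ 0 := by
  obtain ⟨g, hg, hg0, he⟩ := (hf.analyticAt ρ).analyticOrderAt_ne_top.mp hne
  set n := analyticOrderNatAt f ρ
  set q : ℂ → ℂ := fun w ↦ if w = ρ then g ρ else f w / (w - ρ) ^ n with hq
  refine ⟨q, fun w ↦ ?_, fun w ↦ ?_, by simpa [hq] using hg0⟩
  · rcases eq_or_ne w ρ with rfl | hw
    · refine hg.differentiableAt.congr_of_eventuallyEq ?_
      filter_upwards [he] with z hz
      rcases eq_or_ne z w with rfl | hzw
      · simp [hq]
      · have := pow_ne_zero n (sub_ne_zero.mpr hzw)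
        simp only [hq, if_neg hzw, hz, smul_eq_mul]
        field_simp
    · have h1 : DifferentiableAt ℂ (fun w ↦ f w / (w - ρ) ^ n) w :=
        (hf w).div (by fun_prop) (pow_ne_zero n (sub_ne_zero.mpr hw))
      refine h1.congr_of_eventuallyEq ?_
      filter_upwards [isOpen_ne.mem_nhds hw] with z hz
      simp only [hq]
      rw [if_neg hz]
  · rcases eq_or_ne w ρ with rfl | hw
    · simpa [hq] using he.self_of_nhds
    · have := pow_ne_zero n (sub_ne_zero.mpr hw)
      simp only [hq, if_neg hw]
      field_simp

theorem exists_eq_prod_mul {f : ℂ → ℂ} (hf : Differentiable ℂ f)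
    (hne : ∀ z, analyticOrderAt f z ≠ ⊤) (S : Finset ℂ) :
    ∃ g : ℂ → ℂ, Differentiable ℂ g ∧
      (∀ w, f w = (∏ ρ ∈ S, (w - ρ) ^ analyticOrderNatAt f ρ) * g w) ∧ ∀ ρ ∈ S, g ρ ≠ 0 := by
  classical
  induction S using Finset.induction_on with
  | empty => exact ⟨f, hf, by simp, by simp⟩
  | insert ρ S hρ ih =>
    obtain ⟨g, hg, hfg, hg0⟩ := ih
    set P : ℂ → ℂ := fun w ↦ ∏ ρ ∈ S, (w - ρ) ^ analyticOrderNatAt f ρ with hP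
    have hPd : Differentiable ℂ P := by fun_prop
    have hP0 : ∀ w, w ∉ S → P w ≠ 0 := fun w hw ↦ Finset.prod_ne_zero_iff.mpr fun σ hσ ↦
      pow_ne_zero _ (sub_ne_zero.mpr fun h ↦ hw (h ▸ hσ))
    have hfP : f = P * g := funext hfg
    have hord : analyticOrderAt f ρ = analyticOrderAt g ρ := by
      rw [hfP, analyticOrderAt_mul (hPd.analyticAt ρ) (hg.analyticAt ρ),
        (hPd.analyticAt ρ).analyticOrderAt_eq_zero.mpr (hP0 ρ hρ), zero_add]
    obtain ⟨q, hq, hgq, hq0⟩ := exists_eq_sub_pow_mul hg (hord ▸ hne ρ)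
    refine ⟨q, hq, fun w ↦ ?_, fun σ hσ ↦ ?_⟩
    · have : analyticOrderNatAt f ρ = analyticOrderNatAt g ρ := by
        rw [analyticOrderNatAt, analyticOrderNatAt, hord]
      rw [Finset.prod_insert hρ, hfg w, hgq w, this]
      ring
    · rcases Finset.mem_insert.mp hσ with rfl | hσ
      · exact hq0
      · intro h0
        refine hg0 σ hσ ?_
        rw [hgq, h0, mul_zero]

theorem circleIntegral_sub_inv_mul_sub_inv {R : ℝ} {a ρ : ℂ} (ha : a ∈ ball (0 : ℂ) R)
    (hρ : ρ ∈ ball (0 : ℂ) R) (h : a ≠ ρ) : ∮ w in C(0, R), (w - a)⁻¹ * (w - ρ)⁻¹ = 0 := by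
  have hR : 0 < R := dist_nonneg.trans_lt ha
  have hne : ∀ b ∈ ball (0 : ℂ) R, ∀ w ∈ sphere (0 : ℂ) R, w - b ≠ 0 := fun b hb w hw ↦
    sub_ne_zero.mpr (ne_of_mem_of_not_mem hw (ne_of_lt hb))
  have hi : ∀ b ∈ ball (0 : ℂ) R, CircleIntegrable (fun w ↦ (w - b)⁻¹) 0 R := fun b hb ↦
    ((continuousOn_id.sub continuousOn_const).inv₀ (hne b hb)).circleIntegrable hR.le
  have h1 : Set.EqOn (fun w ↦ (w - a)⁻¹ * (w - ρ)⁻¹)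
      (fun w ↦ (a - ρ)⁻¹ * ((w - a)⁻¹ - (w - ρ)⁻¹)) (sphere 0 R) := by
    intro w hw
    have := hne a ha w hw
    have := hne ρ hρ w hw
    have := sub_ne_zero.mpr h
    beta_reduce
    field_simp
    ring
  rw [circleIntegral.integral_congr hR.le h1, circleIntegral.integral_const_mul,
    circleIntegral.integral_sub (hi a ha) (hi ρ hρ),
    circleIntegral.integral_sub_inv_of_mem_ball ha, circleIntegral.integral_sub_inv_of_mem_ball hρ,
    sub_self, mul_zero]

theorem circleIntegral_sub_inv_mul_logDeriv {f : ℂ → ℂ} (hf : Differentiable ℂ f)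
    (hne : ∀ z, analyticOrderAt f z ≠ ⊤) {R : ℝ} {S : Finset ℂ} (hS : ∀ ρ ∈ S, ρ ∈ ball (0 : ℂ) R)
    (hS0 : ∀ ρ ∈ S, f ρ = 0) (hz : ∀ w ∈ closedBall (0 : ℂ) R, f w = 0 → w ∈ S) {a : ℂ}
    (ha : a ∈ ball (0 : ℂ) R) (ha0 : f a ≠ 0) (b : ℂ) :
    ∮ w in C(0, R), (w - a)⁻¹ * ((1 + b * w ^ 2) * logDeriv f w) =
      2 * Real.pi * Complex.I * ((1 + b * a ^ 2) * logDeriv f a -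
        ∑ ρ ∈ S, analyticOrderNatAt f ρ * (1 + b * ρ ^ 2) / (a - ρ)) := by
  have hR : 0 < R := dist_nonneg.trans_lt ha
  obtain ⟨g, hg, hfg, hg0⟩ := exists_eq_prod_mul hf hne S
  set m : ℂ → ℂ := fun ρ ↦ analyticOrderNatAt f ρ
  have hgz : ∀ w ∈ closedBall (0 : ℂ) R, g w ≠ 0 := fun w hw h0 ↦
    hg0 w (hz w hw (by rw [hfg, h0, mul_zero])) h0
  have hlog : ∀ w, f w ≠ 0 → logDeriv f w = logDeriv g w + ∑ ρ ∈ S, m ρ * (w - ρ)⁻¹ := by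
    intro w hw
    have hw' := hw
    rw [hfg w] at hw'
    have hp := left_ne_zero_of_mul hw'
    have e : f = fun w ↦ (∏ ρ ∈ S, (w - ρ) ^ analyticOrderNatAt f ρ) * g w := funext hfg
    have : logDeriv f w =
        logDeriv (fun w ↦ (∏ ρ ∈ S, (w - ρ) ^ analyticOrderNatAt f ρ) * g w) w := by
      congr 1
    rw [this, logDeriv_mul w hp (right_ne_zero_of_mul hw') (by fun_prop) (hg w),
      logDeriv_prod (Finset.prod_ne_zero_iff.mp hp) (by fun_prop), add_comm]
    congr 1
    refine Finset.sum_congr rfl fun ρ _ ↦ ?_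
    rw [logDeriv_fun_pow (by fun_prop)]
    congr 1
    rw [logDeriv_apply]
    simp
  set F : ℂ → ℂ := fun w ↦ (1 + b * w ^ 2) * logDeriv g w + ∑ ρ ∈ S, m ρ * b * (w + ρ) with hF
  have hdec : ∀ w, f w ≠ 0 → (1 + b * w ^ 2) * logDeriv f w =
      F w + ∑ ρ ∈ S, m ρ * (1 + b * ρ ^ 2) * (w - ρ)⁻¹ := by
    intro w hw
    rw [hlog w hw, mul_add, hF]
    simp only
    rw [add_assoc, ← Finset.sum_add_distrib, Finset.mul_sum]
    congr 1
    refine Finset.sum_congr rfl fun ρ hρ ↦ ?_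
    have : w - ρ ≠ 0 := sub_ne_zero.mpr fun h ↦ hw (h ▸ hS0 ρ hρ)
    field_simp
    ring
  have hFd : ∀ w ∈ closedBall (0 : ℂ) R, DifferentiableAt ℂ F w := fun w hw ↦ by
    have h1 : DifferentiableAt ℂ (logDeriv g) w :=
      (hg.analyticAt w).deriv.differentiableAt.div (hg w) (hgz w hw)
    fun_prop
  have hFc : ContinuousOn F (closedBall 0 R) := fun w hw ↦
    (hFd w hw).continuousAt.continuousWithinAt
  have hfs : ∀ w ∈ sphere (0 : ℂ) R, f w ≠ 0 := fun w hw h0 ↦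
    (ne_of_lt (hS w (hz w (sphere_subset_closedBall hw) h0))) hw
  have hne' : ∀ b ∈ ball (0 : ℂ) R, ∀ w ∈ sphere (0 : ℂ) R, w - b ≠ 0 := fun b hb w hw ↦
    sub_ne_zero.mpr (ne_of_mem_of_not_mem hw (ne_of_lt hb))
  have hci : ∀ b ∈ ball (0 : ℂ) R, ContinuousOn (fun w : ℂ ↦ (w - b)⁻¹) (sphere 0 R) := fun b hb ↦
    (continuousOn_id.sub continuousOn_const).inv₀ (hne' b hb)
  have h1 : Set.EqOn (fun w ↦ (w - a)⁻¹ * ((1 + b * w ^ 2) * logDeriv f w))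
      (fun w ↦ (w - a)⁻¹ • F w + ∑ ρ ∈ S, m ρ * (1 + b * ρ ^ 2) * ((w - a)⁻¹ * (w - ρ)⁻¹))
      (sphere 0 R) := by
    intro w hw
    beta_reduce
    rw [hdec w (hfs w hw), mul_add, Finset.mul_sum, smul_eq_mul]
    congr 1
    refine Finset.sum_congr rfl fun ρ _ ↦ ?_
    ring
  have hi : ∀ ρ ∈ S, CircleIntegrable
      (fun w ↦ m ρ * (1 + b * ρ ^ 2) * ((w - a)⁻¹ * (w - ρ)⁻¹)) 0 R := fun ρ hρ ↦
    (continuousOn_const.mul ((hci a ha).mul (hci ρ (hS ρ hρ)))).circleIntegrable hR.le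
  have hsum : CircleIntegrable
      (fun w ↦ ∑ ρ ∈ S, m ρ * (1 + b * ρ ^ 2) * ((w - a)⁻¹ * (w - ρ)⁻¹)) 0 R :=
    (continuousOn_finsetSum S fun ρ hρ ↦ continuousOn_const.mul
      ((hci a ha).mul (hci ρ (hS ρ hρ)))).circleIntegrable hR.le
  have hF1 : CircleIntegrable (fun w ↦ (w - a)⁻¹ • F w) 0 R :=
    ((hci a ha).smul (hFc.mono sphere_subset_closedBall)).circleIntegrable hR.le
  rw [circleIntegral.integral_congr hR.le h1, circleIntegral.integral_add hF1 hsum,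
    Complex.circleIntegral_sub_inv_smul_of_differentiable_on_off_countable
      Set.countable_empty ha hFc (fun w hw ↦ hFd w (ball_subset_closedBall hw.1)),
    circleIntegral.integral_fun_sum hi, Finset.sum_eq_zero, add_zero, smul_eq_mul, hdec a ha0]
  · simp only [div_eq_mul_inv]
    rw [add_sub_cancel_right]
  · intro ρ hρ
    rw [circleIntegral.integral_const_mul, circleIntegral_sub_inv_mul_sub_inv ha (hS ρ hρ)
      (fun h ↦ ha0 (h ▸ hS0 ρ hρ)), mul_zero]

end Contour

section Xi

open Set

/-- Riemann's entire function `s (s - 1) Λ(s)` with `s = 1/2 + w`, even in `w`. -/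
noncomputable def xiFun (w : ℂ) : ℂ :=
  (1 / 2 + w) * (w - 1 / 2) * completedRiemannZeta₀ (1 / 2 + w) + 1

theorem differentiable_xiFun : Differentiable ℂ xiFun := by
  have := differentiable_completedZeta₀
  unfold xiFun
  fun_prop

theorem xiFun_neg (w : ℂ) : xiFun (-w) = xiFun w := by
  have := completedRiemannZeta₀_one_sub (1 / 2 + w)
  rw [show 1 - (1 / 2 + w) = 1 / 2 + -w by ring] at this
  rw [xiFun, xiFun, this]
  ring

theorem logDeriv_xiFun_neg (w : ℂ) : logDeriv xiFun (-w) = -logDeriv xiFun w := by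
  have h : deriv (fun w ↦ xiFun (-w)) w = deriv xiFun w := by
    congr 1
    exact funext xiFun_neg
  rw [deriv_comp_neg] at h
  rw [logDeriv_apply, logDeriv_apply, xiFun_neg, ← h, neg_div, neg_neg]

theorem xiFun_eq {w : ℂ} (hw : -1 / 2 < w.re) :
    xiFun w = (1 / 2 + w) * Complex.Gammaℝ (1 / 2 + w) * riemannZeta₁ (1 / 2 + w) := by
  set s := 1 / 2 + w with hs
  have hre : 0 < s.re := by
    simp [hs]
    linarith
  have hs0 : s ≠ 0 := by
    rintro h
    simp [h] at hre
  have hw' : w - 1 / 2 = s - 1 := by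
    rw [hs]
    ring
  have hG := Complex.Gammaℝ_ne_zero_of_re_pos hre
  rw [xiFun, ← hs, hw']
  rcases eq_or_ne s 1 with h1 | h1
  · simp [h1, Complex.Gammaℝ_one]
  · have h2 := riemannZeta_def_of_ne_zero hs0
    rw [riemannZeta_eq_inv_sub_mul h1, completedRiemannZeta_eq] at h2
    have h3 : s - 1 ≠ 0 := sub_ne_zero.mpr h1
    have h4 : 1 - s ≠ 0 := sub_ne_zero.mpr h1.symm
    have h5 : Complex.Gammaℝ s * riemannZeta₁ s =
        (s - 1) * (completedRiemannZeta₀ s - 1 / s - 1 / (1 - s)) := by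
      field_simp at h2 ⊢
      linear_combination h2
    rw [mul_assoc, mul_assoc, h5]
    have h6 : (1 - s)⁻¹ = -(s - 1)⁻¹ := by rw [← inv_neg, neg_sub]
    rw [one_div (1 - s), h6]
    field_simp
    ring

theorem xiFun_half_ne_zero : xiFun (1 / 2) ≠ 0 := by
  simp [xiFun]

theorem analyticOrderAt_xiFun_ne_top (z : ℂ) : analyticOrderAt xiFun z ≠ ⊤ := by
  intro ht
  rw [analyticOrderAt_eq_top] at ht
  exact xiFun_half_ne_zero <| AnalyticOnNhd.eqOn_of_preconnected_of_eventuallyEq (U := univ)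
    (f := xiFun) (g := fun _ ↦ 0) (fun z _ ↦ differentiable_xiFun.analyticAt z)
    (fun _ _ ↦ analyticAt_const) isPreconnected_univ (mem_univ z) ht (mem_univ (1 / 2))

theorem differentiableAt_Gammaℝ {s : ℂ} (hs : 0 < s.re) : DifferentiableAt ℂ Complex.Gammaℝ s := by
  have := (Complex.differentiable_Gammaℝ_inv s).inv
    (inv_ne_zero (Complex.Gammaℝ_ne_zero_of_re_pos hs))
  rwa [show (fun s ↦ (Complex.Gammaℝ s)⁻¹)⁻¹ = Complex.Gammaℝ from
    funext fun s ↦ inv_inv _] at this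

theorem analyticOrderNatAt_xiFun (τ : ℝ) :
    analyticOrderNatAt xiFun (Complex.I * τ) = zetaMult τ := by
  set z := Complex.I * (τ : ℂ) with hz
  have hV : IsOpen {w : ℂ | -1 / 2 < w.re} := isOpen_lt continuous_const Complex.continuous_re
  have hzV : z ∈ {w : ℂ | -1 / 2 < w.re} := by
    change -1 / 2 < z.re
    norm_num [hz]
  have he : xiFun =ᶠ[𝓝 z] (fun w ↦ (1 / 2 + w) * Complex.Gammaℝ (1 / 2 + w)) *
      (riemannZeta₁ ∘ fun w ↦ 1 / 2 + w) := by
    filter_upwards [hV.mem_nhds hzV] with w hw using xiFun_eq hw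
  have hA : AnalyticAt ℂ (fun w ↦ (1 / 2 + w) * Complex.Gammaℝ (1 / 2 + w)) z := by
    refine DifferentiableOn.analyticAt (s := {w : ℂ | -1 / 2 < w.re}) (fun w hw ↦ ?_)
      (hV.mem_nhds hzV)
    have hw : -1 / 2 < w.re := hw
    have h0 : 0 < (1 / 2 + w).re := by
      simp
      linarith
    have h1 : DifferentiableAt ℂ (fun w ↦ Complex.Gammaℝ (1 / 2 + w)) w :=
      DifferentiableAt.comp w (differentiableAt_Gammaℝ h0) (by fun_prop)
    exact (DifferentiableAt.mul (by fun_prop) h1).differentiableWithinAt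
  have hA0 : (1 / 2 + z) * Complex.Gammaℝ (1 / 2 + z) ≠ 0 := by
    have h0 : 0 < (1 / 2 + z).re := by simp [hz]
    refine mul_ne_zero (fun h ↦ ?_) (Complex.Gammaℝ_ne_zero_of_re_pos h0)
    rw [h] at h0
    simp at h0
  have hB : AnalyticAt ℂ (riemannZeta₁ ∘ fun w ↦ 1 / 2 + w) z := by
    refine Differentiable.analyticAt ?_ z
    exact differentiable_riemannZeta₁.comp (by fun_prop)
  rw [zetaMult, analyticOrderNatAt, analyticOrderNatAt, analyticOrderAt_congr he,
    analyticOrderAt_mul hA hB, hA.analyticOrderAt_eq_zero.mpr hA0, zero_add,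
    analyticOrderAt_comp_of_deriv_ne_zero (by fun_prop) (by simp)]

theorem logDeriv_Gammaℝ {s : ℂ} (hs : 0 < s.re) :
    logDeriv Complex.Gammaℝ s = -(Real.log Real.pi / 2 : ℝ) + Complex.digamma (s / 2) / 2 := by
  have hs2 : 0 < (s / 2).re := by simpa using hs
  have hpi : (Real.pi : ℂ) ≠ 0 := by simp [Real.pi_ne_zero]
  have hne : ∀ m : ℕ, s / 2 ≠ -m := fun m h ↦ by
    rw [h] at hs2
    have : (0 : ℝ) ≤ m := m.cast_nonneg
    simp at hs2
    linarith
  have h1 : HasDerivAt (fun s : ℂ ↦ (Real.pi : ℂ) ^ (-s / 2))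
      ((Real.pi : ℂ) ^ (-s / 2) * Complex.log Real.pi * (-1 / 2)) s :=
    HasDerivAt.const_cpow (((hasDerivAt_id s).neg).div_const 2) (Or.inl hpi)
  have h2 : HasDerivAt (fun s : ℂ ↦ Complex.Gamma (s / 2))
      (deriv Complex.Gamma (s / 2) * (1 / 2)) s :=
    (Complex.differentiableAt_Gamma _ hne).hasDerivAt.comp s ((hasDerivAt_id s).div_const 2)
  have e : Complex.Gammaℝ = fun s ↦ (Real.pi : ℂ) ^ (-s / 2) * Complex.Gamma (s / 2) :=
    funext fun s ↦ Complex.Gammaℝ_def s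
  have hp : (Real.pi : ℂ) ^ (-s / 2) ≠ 0 := by
    rw [Ne, Complex.cpow_eq_zero_iff]
    exact fun h ↦ hpi h.1
  have hG := Complex.Gamma_ne_zero hne
  rw [e, logDeriv_mul (f := fun s : ℂ ↦ (Real.pi : ℂ) ^ (-s / 2))
      (g := fun s : ℂ ↦ Complex.Gamma (s / 2)) s hp hG h1.differentiableAt h2.differentiableAt,
    logDeriv_apply, logDeriv_apply, h1.deriv, h2.deriv, Complex.digamma_def, logDeriv_apply,
    ← Complex.ofReal_log Real.pi_pos.le]
  push_cast
  field_simp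

namespace SignHypothesis

variable {ε C : ℝ} (h : SignHypothesis ε C)
include h

theorem xiFun_ne_zero {w : ℂ} (hw : w.re ≠ 0) : xiFun w ≠ 0 := by
  wlog hw' : 0 < w.re generalizing w with H
  · rw [← xiFun_neg]
    have : w.re < 0 := lt_of_le_of_ne (not_lt.mp hw') hw
    exact H (by simpa using hw) (by simpa using this)
  have h0 : 0 < (1 / 2 + w).re := by
    simp
    linarith
  rw [xiFun_eq (by linarith)]
  refine mul_ne_zero (mul_ne_zero (fun h ↦ ?_) (Complex.Gammaℝ_ne_zero_of_re_pos h0))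
    (h.riemannZeta₁_ne_zero (by simpa using hw'))
  rw [h] at h0
  simp at h0

theorem logDeriv_xiFun_eq {w : ℂ} (hw : 0 < w.re) :
    logDeriv xiFun w = 1 / (1 / 2 + w) - (Real.log Real.pi / 2 : ℝ) +
      Complex.digamma ((1 / 2 + w) / 2) / 2 + logDeriv riemannZeta₁ (1 / 2 + w) := by
  have hV : IsOpen {w : ℂ | 0 < w.re} := isOpen_lt continuous_const Complex.continuous_re
  have h0 : 0 < (1 / 2 + w).re := by
    simp
    linarith
  have hs0 : 1 / 2 + w ≠ 0 := fun h ↦ by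
    rw [h] at h0
    simp at h0
  have hG := Complex.Gammaℝ_ne_zero_of_re_pos h0
  have hz := h.riemannZeta₁_ne_zero (w := 1 / 2 + w) (by simpa using hw)
  set F : ℂ → ℂ := fun s ↦ s * Complex.Gammaℝ s * riemannZeta₁ s with hF
  have he : xiFun =ᶠ[𝓝 w] F ∘ fun w ↦ 1 / 2 + w := by
    filter_upwards [hV.mem_nhds hw] with z hz
    have hz : 0 < z.re := hz
    exact xiFun_eq (by linarith)
  have d1 : DifferentiableAt ℂ (fun s ↦ s * Complex.Gammaℝ s) (1 / 2 + w) :=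
    differentiableAt_id.mul (differentiableAt_Gammaℝ h0)
  have d2 := differentiable_riemannZeta₁ (1 / 2 + w)
  have e1 : logDeriv F (1 / 2 + w) = 1 / (1 / 2 + w) + logDeriv Complex.Gammaℝ (1 / 2 + w) +
      logDeriv riemannZeta₁ (1 / 2 + w) := by
    rw [hF, logDeriv_mul (f := fun s ↦ s * Complex.Gammaℝ s) (g := riemannZeta₁) _
      (mul_ne_zero hs0 hG) hz d1 d2, logDeriv_mul (f := fun s ↦ s) (g := Complex.Gammaℝ) _ hs0 hG differentiableAt_fun_id (differentiableAt_Gammaℝ h0)]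
    simp [logDeriv_apply]
  have e2 : logDeriv xiFun w = logDeriv (F ∘ fun w ↦ 1 / 2 + w) w := by
    rw [logDeriv_apply, logDeriv_apply, he.deriv_eq, he.eq_of_nhds]
  rw [e2, logDeriv_comp (f := F) (g := fun w ↦ 1 / 2 + w) (d1.mul d2) (by fun_prop), e1, logDeriv_Gammaℝ h0]
  simp
  ring

end SignHypothesis

end Xi

section XiBound

open Set

namespace SignHypothesis

variable {ε C : ℝ} (h : SignHypothesis ε C)
include h

theorem exists_norm_logDeriv_riemannZeta₁_le_of_two_lt : ∃ K, 0 ≤ K ∧ ∀ s : ℂ, 2 < s.re →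
    ‖logDeriv riemannZeta₁ s‖ ≤ K := by
  obtain ⟨K, hK, hb⟩ := exists_norm_logDeriv_riemannZeta_le
  refine ⟨2 * K + 1, by positivity, fun s hs ↦ ?_⟩
  have h1 : s ≠ 1 := by
    rintro rfl
    norm_num at hs
  have e : logDeriv riemannZeta₁ s = logDeriv riemannZeta s + 1 / (s - 1) := by
    rw [logDeriv_riemannZeta_eq h1 (h.riemannZeta₁_ne_zero (by linarith))]
    ring
  have h2 : 1 ≤ ‖s - 1‖ := by
    refine le_trans ?_ ((le_abs_self _).trans (Complex.abs_re_le_norm (s - 1)))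
    simp
    linarith
  have h3 : ‖1 / (s - 1)‖ ≤ 1 := by
    rw [norm_div, norm_one]
    exact div_le_one_of_le₀ h2 (norm_nonneg _)
  have h4 : 1 / (s.re - 1) ≤ 1 := (div_le_one (by linarith)).mpr (by linarith)
  have h5 := hb s (by linarith)
  have h6 : K * (1 + 1 / (s.re - 1)) ≤ K * 2 := by gcongr; linarith
  rw [e]
  linarith [norm_add_le (logDeriv riemannZeta s) (1 / (s - 1))]

theorem exists_re_mul_norm_logDeriv_xiFun_le : ∃ K, 0 ≤ K ∧ ∀ w : ℂ, w.re ≠ 0 →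
    |w.re| * ‖logDeriv xiFun w‖ ≤ K * ((1 + ‖w‖) * √(1 + ‖w‖)) := by
  obtain ⟨K₁, hK₁, h₁⟩ := h.exists_norm_logDeriv_riemannZeta₁_le_of_two_lt
  obtain ⟨K₂, hK₂, h₂⟩ := h.exists_norm_logDeriv_riemannZeta₁_le
  obtain ⟨K₃, hK₃, h₃⟩ := exists_norm_digamma_le
  refine ⟨2 + |Real.log Real.pi / 2| + K₃ + K₁ + 5 * K₂, by positivity, fun w hw ↦ ?_⟩
  wlog hw' : 0 < w.re generalizing w with H
  · have h1 : w.re < 0 := lt_of_le_of_ne (not_lt.mp hw') hw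
    have := H (-w) (by simpa using hw) (by simpa using h1)
    simpa [logDeriv_xiFun_neg] using this
  set X := 1 + ‖w‖ with hX
  have hX1 : 1 ≤ X := by linarith [norm_nonneg w]
  have hY1 : 1 ≤ √X := Real.one_le_sqrt.mpr hX1
  have hwX : w.re ≤ X := by linarith [Complex.re_le_norm w]
  set s := 1 / 2 + w with hs
  have hsre : s.re = 1 / 2 + w.re := by simp [hs]
  have hsX : ‖s‖ ≤ X := by
    refine (norm_add_le _ _).trans ?_
    rw [hX]
    gcongr
    norm_num
  have hs1 : ‖1 / s‖ ≤ 2 := by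
    have : 1 / 2 ≤ ‖s‖ := by linarith [Complex.re_le_norm s]
    rw [norm_div, norm_one, div_le_iff₀ (by linarith)]
    linarith
  have hdg : ‖Complex.digamma (s / 2) / 2‖ ≤ K₃ * √X := by
    have h1 := h₃ (s / 2) (by simp; linarith)
    have h2 : √‖s / 2‖ ≤ √X := by
      refine Real.sqrt_le_sqrt ?_
      rw [norm_div, Complex.norm_ofNat]
      linarith [norm_nonneg s]
    rw [norm_div, Complex.norm_ofNat]
    have h3 : K₃ * (1 + √‖s / 2‖) ≤ K₃ * (2 * √X) := by gcongr; linarith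
    linarith
  have hz : w.re * ‖logDeriv riemannZeta₁ s‖ ≤ (K₁ + 5 * K₂) * X := by
    rcases lt_or_ge 2 s.re with h2 | h2
    · calc w.re * ‖logDeriv riemannZeta₁ s‖ ≤ X * K₁ := by
            gcongr
            exact h₁ s h2
        _ ≤ _ := by nlinarith [mul_nonneg hK₂ (zero_le_one.trans hX1)]
    · calc w.re * ‖logDeriv riemannZeta₁ s‖
          ≤ w.re * (K₂ * (1 + ‖s‖) * (1 + 1 / (s.re - 1 / 2))) := by
            gcongr
            exact h₂ s (by linarith)
        _ = K₂ * (1 + ‖s‖) * (w.re + 1) := by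
            rw [hsre, add_sub_cancel_left]
            field_simp
        _ ≤ K₂ * (2 * X) * (5 / 2) := by
            gcongr <;> linarith
        _ ≤ _ := by nlinarith [mul_nonneg hK₁ (zero_le_one.trans hX1)]
  rw [abs_of_pos hw', h.logDeriv_xiFun_eq hw']
  have hXY : X ≤ X * √X := le_mul_of_one_le_right (by linarith) hY1
  have hn : ‖1 / s - (Real.log Real.pi / 2 : ℝ) + Complex.digamma (s / 2) / 2 +
      logDeriv riemannZeta₁ s‖ ≤ 2 + |Real.log Real.pi / 2| + K₃ * √X +
        ‖logDeriv riemannZeta₁ s‖ := by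
    refine norm_add_le_of_le (norm_add_le_of_le (norm_sub_le_of_le hs1 ?_) hdg) le_rfl
    rw [Complex.norm_real, Real.norm_eq_abs]
  calc w.re * _ ≤ w.re * (2 + |Real.log Real.pi / 2| + K₃ * √X +
        ‖logDeriv riemannZeta₁ s‖) := by gcongr
    _ = w.re * (2 + |Real.log Real.pi / 2| + K₃ * √X) +
        w.re * ‖logDeriv riemannZeta₁ s‖ := by ring
    _ ≤ X * ((2 + |Real.log Real.pi / 2|) * √X + K₃ * √X) + (K₁ + 5 * K₂) * (X * √X) := by
        refine add_le_add ?_ (hz.trans (by gcongr))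
        gcongr
        exact le_mul_of_one_le_right (by positivity) hY1
    _ = _ := by ring

theorem tendsto_re_logDeriv_xiFun :
    Tendsto (fun σ : ℝ ↦ (logDeriv xiFun σ).re) atTop atTop := by
  obtain ⟨K, hK, hb⟩ := h.exists_norm_logDeriv_riemannZeta₁_le_of_two_lt
  have hl : Tendsto (fun σ : ℝ ↦ Real.log (σ / 2 - 3 / 4) / 2 - Real.log Real.pi / 2 - K)
      atTop atTop := by
    have h1 : Tendsto (fun σ : ℝ ↦ σ / 2 - 3 / 4) atTop atTop :=
      tendsto_atTop_add_const_right _ _ (tendsto_id.atTop_div_const (by norm_num))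
    have h2 := (Real.tendsto_log_atTop.comp h1).atTop_div_const (show (0 : ℝ) < 2 by norm_num)
    exact tendsto_atTop_add_const_right _ _ (tendsto_atTop_add_const_right _ _ h2)
  refine tendsto_atTop_mono' _ ?_ hl
  filter_upwards [eventually_gt_atTop 2] with σ hσ
  have h0 : 0 < (σ : ℂ).re := by
    simp
    linarith
  have e1 : (1 / 2 + (σ : ℂ)) = ((1 / 2 + σ : ℝ) : ℂ) := by push_cast; ring
  have e2 : (1 / 2 + (σ : ℂ)) / 2 = ((σ / 2 - 3 / 4 + 1 : ℝ) : ℂ) := by push_cast; ring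
  have h1 := hb (1 / 2 + σ) (by simp; linarith)
  have h2 := (abs_le.mp ((Complex.abs_re_le_norm _).trans h1)).1
  have h3 := log_le_deriv_log_Gamma (x := σ / 2 - 3 / 4) (by linarith)
  rw [h.logDeriv_xiFun_eq h0, e2, digamma_ofReal (by linarith)]
  have h4 : 0 ≤ (1 / (1 / 2 + (σ : ℂ))).re := by
    rw [e1, ← Complex.ofReal_one, ← Complex.ofReal_div, Complex.ofReal_re]
    positivity
  have h5 : ∀ x : ℝ, ((x : ℂ) / 2).re = x / 2 := fun x ↦ by simp
  rw [Complex.add_re, Complex.add_re, Complex.sub_re, h5, Complex.ofReal_re]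
  linarith

end SignHypothesis

end XiBound

section XiContour

open Set Metric

theorem finite_inter_zeros_of_isCompact {f : ℂ → ℂ} (hf : Differentiable ℂ f)
    (hne : ∀ z, analyticOrderAt f z ≠ ⊤) {K : Set ℂ} (hK : IsCompact K) :
    {z ∈ K | f z = 0}.Finite := by
  by_contra hinf
  obtain ⟨z, -, hz⟩ := Set.Infinite.exists_accPt_of_subset_isCompact hinf hK (sep_subset _ _)
  rw [accPt_iff_frequently_nhdsNE] at hz
  refine hne z (analyticOrderAt_eq_top.mpr ?_)
  exact (hf.analyticAt z).frequently_zero_iff_eventually_zero.mp (hz.mono fun w hw ↦ hw.2)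

theorem xiFun_I_mul_eq_zero_iff {γ : ℝ} : xiFun (Complex.I * γ) = 0 ↔ zetaMult γ ≠ 0 := by
  rw [← analyticOrderNatAt_xiFun, ← (differentiable_xiFun.analyticAt _).analyticOrderAt_ne_zero,
    analyticOrderNatAt, Ne, Ne, ENat.toNat_eq_zero]
  simp [analyticOrderAt_xiFun_ne_top]

theorem finite_zetaMult_ne_zero (R : ℝ) : {γ : ℝ | zetaMult γ ≠ 0 ∧ |γ| ≤ R}.Finite := by
  refine Set.Finite.of_injOn (f := fun γ : ℝ ↦ Complex.I * γ) (t := {z ∈ closedBall (0 : ℂ) R |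
    xiFun z = 0}) ?_ ?_ (finite_inter_zeros_of_isCompact differentiable_xiFun
      analyticOrderAt_xiFun_ne_top (isCompact_closedBall 0 R))
  · rintro γ ⟨h1, h2⟩
    exact ⟨by simpa using h2, xiFun_I_mul_eq_zero_iff.mpr h1⟩
  · intro x _ y _ hxy
    simpa using hxy

theorem exists_zetaMult_eq_zero (N : ℝ) : ∃ R, N ≤ R ∧ ∀ γ : ℝ, |γ| = R → zetaMult γ = 0 := by
  have h1 : ((fun γ : ℝ ↦ |γ|) '' {γ : ℝ | zetaMult γ ≠ 0 ∧ |γ| ≤ N + 1}).Finite :=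
    (finite_zetaMult_ne_zero (N + 1)).image _
  have h2 : (Icc N (N + 1)).Infinite := Icc_infinite (by linarith)
  obtain ⟨R, hR, hR'⟩ := h2.exists_notMem_finite h1
  refine ⟨R, hR.1, fun γ hγ ↦ ?_⟩
  by_contra h0
  exact hR' ⟨γ, ⟨h0, hγ ▸ hR.2⟩, hγ⟩

theorem norm_one_add_inv_sq_mul_sq {R : ℝ} (hR : 0 < R) {w : ℂ} (hw : ‖w‖ = R) :
    ‖1 + ((R ^ 2)⁻¹ : ℝ) * w ^ 2‖ = 2 * |w.re| / R := by
  have h1 : (1 : ℂ) + ((R ^ 2)⁻¹ : ℝ) * w ^ 2 = ((R ^ 2)⁻¹ : ℝ) * (w * ((2 * w.re : ℝ) : ℂ)) := by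
    rw [← Complex.add_conj, mul_add, Complex.mul_conj, Complex.normSq_eq_norm_sq, hw, mul_add,
      ← Complex.ofReal_mul, inv_mul_cancel₀ (by positivity)]
    push_cast
    ring
  rw [h1, norm_mul, norm_mul, hw, Complex.norm_real, Complex.norm_real]
  simp only [norm_inv, norm_pow, norm_mul, Real.norm_eq_abs, abs_two, abs_of_pos hR]
  field_simp

namespace SignHypothesis

variable {ε C : ℝ} (h : SignHypothesis ε C)
include h

theorem exists_abs_sum_sub_le : ∃ K, 0 ≤ K ∧ ∀ R σ : ℝ, 0 < σ → 2 * σ ≤ R → 1 ≤ R →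
    (∀ γ : ℝ, |γ| = R → zetaMult γ = 0) → ∀ A : Finset ℝ,
    (∀ γ, γ ∈ A ↔ zetaMult γ ≠ 0 ∧ |γ| ≤ R) →
    |(1 + σ ^ 2 / R ^ 2) * ((logDeriv xiFun σ).re / σ) -
      ∑ γ ∈ A, zetaMult γ * (1 - γ ^ 2 / R ^ 2) / (σ ^ 2 + γ ^ 2)| ≤ K / √R := by
  obtain ⟨K, hK, hb⟩ := h.exists_re_mul_norm_logDeriv_xiFun_le
  refine ⟨16 * K, by positivity, fun R σ hσ hσR hR1 hgood A hA ↦ ?_⟩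
  have hR : 0 < R := by linarith
  set S : Finset ℂ := A.image fun γ : ℝ ↦ Complex.I * γ with hS
  have hSmem : ∀ ρ ∈ S, ρ ∈ ball (0 : ℂ) R := by
    intro ρ hρ
    obtain ⟨γ, hγ, rfl⟩ := Finset.mem_image.mp hρ
    have := (hA γ).mp hγ
    have h2 : |γ| ≠ R := fun h2 ↦ this.1 (hgood γ h2)
    simpa using lt_of_le_of_ne this.2 h2
  have hS0 : ∀ ρ ∈ S, xiFun ρ = 0 := by
    intro ρ hρ
    obtain ⟨γ, hγ, rfl⟩ := Finset.mem_image.mp hρ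
    exact xiFun_I_mul_eq_zero_iff.mpr ((hA γ).mp hγ).1
  have hz : ∀ w ∈ closedBall (0 : ℂ) R, xiFun w = 0 → w ∈ S := by
    intro w hw hw0
    have hre : w.re = 0 := by
      by_contra hre
      exact h.xiFun_ne_zero hre hw0
    have hw' : w = Complex.I * (w.im : ℝ) := by
      apply Complex.ext <;> simp [hre]
    rw [hw'] at hw0
    refine Finset.mem_image.mpr ⟨w.im, (hA _).mpr ⟨xiFun_I_mul_eq_zero_iff.mp hw0, ?_⟩, hw'.symm⟩
    exact (Complex.abs_im_le_norm w).trans (by simpa using hw)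
  set b : ℂ := (((R ^ 2)⁻¹ : ℝ) : ℂ) with hbdef
  have hσ0 : xiFun σ ≠ 0 := h.xiFun_ne_zero (by simpa using hσ.ne')
  have hσ0' : xiFun (-σ) ≠ 0 := by rwa [xiFun_neg]
  have hσb : (σ : ℂ) ∈ ball (0 : ℂ) R := by
    simp [abs_of_pos hσ]
    linarith
  have hσb' : -(σ : ℂ) ∈ ball (0 : ℂ) R := by simpa using hσb
  have i1 := circleIntegral_sub_inv_mul_logDeriv differentiable_xiFun analyticOrderAt_xiFun_ne_top
    hSmem hS0 hz hσb hσ0 b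
  have i2 := circleIntegral_sub_inv_mul_logDeriv differentiable_xiFun analyticOrderAt_xiFun_ne_top
    hSmem hS0 hz hσb' hσ0' b
  have hfs : ∀ w ∈ sphere (0 : ℂ) R, xiFun w ≠ 0 := fun w hw h0 ↦
    (ne_of_lt (hSmem w (hz w (sphere_subset_closedBall hw) h0))) hw
  have hLc : ContinuousOn (fun w ↦ (1 + b * w ^ 2) * logDeriv xiFun w) (sphere 0 R) := by
    refine ContinuousOn.mul (by fun_prop) fun w hw ↦ ?_
    have := differentiable_xiFun.analyticAt w
    exact (this.deriv.continuousAt.div this.continuousAt (hfs w hw)).continuousWithinAt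
  have hci : ∀ a ∈ ball (0 : ℂ) R, CircleIntegrable
      (fun w : ℂ ↦ (w - a)⁻¹ * ((1 + b * w ^ 2) * logDeriv xiFun w)) 0 R := fun a ha ↦ by
    have h1 : ContinuousOn (fun w : ℂ ↦ (w - a)⁻¹) (sphere 0 R) :=
      (continuousOn_id.sub continuousOn_const).inv₀ fun w hw ↦
        sub_ne_zero.mpr (ne_of_mem_of_not_mem hw (ne_of_lt ha))
    exact (h1.mul hLc).circleIntegrable hR.le
  have hdiff := circleIntegral.integral_sub (hci _ hσb) (hci _ hσb')
  rw [i1, i2, logDeriv_xiFun_neg] at hdiff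
  have hRσ : 0 < R ^ 2 - σ ^ 2 := by nlinarith
  have hnorm := circleIntegral.norm_integral_le_of_norm_le_const (c := 0) hR.le
    (C := 2 * σ / (R ^ 2 - σ ^ 2) * (2 / R * (K * ((1 + R) * √(1 + R)))))
    (f := fun w : ℂ ↦ (w - σ)⁻¹ * ((1 + b * w ^ 2) * logDeriv xiFun w) -
      (w - -σ)⁻¹ * ((1 + b * w ^ 2) * logDeriv xiFun w)) (by
    intro w hw
    have hw' : ‖w‖ = R := by simpa using hw
    have e1 : w - σ ≠ 0 := sub_ne_zero.mpr (ne_of_mem_of_not_mem hw (ne_of_lt hσb))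
    have e2 : w - -σ ≠ 0 := sub_ne_zero.mpr (ne_of_mem_of_not_mem hw (ne_of_lt hσb'))
    have e3 : w ^ 2 - (σ : ℂ) ^ 2 ≠ 0 := by
      rw [show w ^ 2 - (σ : ℂ) ^ 2 = (w - σ) * (w - -σ) by ring]
      exact mul_ne_zero e1 e2
    have e4 : (w - σ)⁻¹ * ((1 + b * w ^ 2) * logDeriv xiFun w) -
        (w - -σ)⁻¹ * ((1 + b * w ^ 2) * logDeriv xiFun w) =
        (2 * σ / (w ^ 2 - (σ : ℂ) ^ 2)) * ((1 + b * w ^ 2) * logDeriv xiFun w) := by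
      rw [← sub_mul]
      congr 1
      rw [show w ^ 2 - (σ : ℂ) ^ 2 = (w - σ) * (w - -σ) by ring]
      field_simp
      ring
    rw [e4, norm_mul]
    gcongr
    · rw [norm_div, norm_mul, Complex.norm_ofNat, Complex.norm_real, Real.norm_eq_abs,
        abs_of_pos hσ]
      gcongr
      refine le_trans (le_of_eq ?_) (norm_sub_norm_le _ _)
      rw [norm_pow, norm_pow, hw', Complex.norm_real, Real.norm_eq_abs, sq_abs]
    · rw [norm_mul, hbdef, norm_one_add_inv_sq_mul_sq hR hw']
      rcases eq_or_ne w.re 0 with h0 | h0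
      · simp only [h0, abs_zero, mul_zero, zero_div, zero_mul]
        positivity
      · have := hb w h0
        rw [hw'] at this
        calc 2 * |w.re| / R * ‖logDeriv xiFun w‖ = 2 / R * (|w.re| * ‖logDeriv xiFun w‖) := by ring
          _ ≤ _ := by gcongr)
  rw [hdiff] at hnorm
  set D : ℝ := (1 + σ ^ 2 / R ^ 2) * ((logDeriv xiFun σ).re / σ) -
      ∑ γ ∈ A, zetaMult γ * (1 - γ ^ 2 / R ^ 2) / (σ ^ 2 + γ ^ 2) with hD
  set E : ℂ := (1 + b * (σ : ℂ) ^ 2) * logDeriv xiFun σ / σ -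
      ∑ γ ∈ A, ((zetaMult γ * (1 - γ ^ 2 / R ^ 2) / (σ ^ 2 + γ ^ 2) : ℝ) : ℂ) with hE
  have hσc : (σ : ℂ) ≠ 0 := by exact_mod_cast hσ.ne'
  have hDE : D = E.re := by
    have e1 : (1 + b * (σ : ℂ) ^ 2) * logDeriv xiFun σ / σ =
        (((1 + σ ^ 2 / R ^ 2) / σ : ℝ) : ℂ) * logDeriv xiFun σ := by
      rw [hbdef]
      push_cast
      ring
    rw [hE, e1, ← Complex.ofReal_sum, Complex.sub_re, Complex.re_ofReal_mul, Complex.ofReal_re, hD]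
    ring
  have hsumS : ∀ F : ℂ → ℂ, ∑ ρ ∈ S, F ρ = ∑ γ ∈ A, F (Complex.I * γ) := fun F ↦
    Finset.sum_image fun x _ y _ hxy ↦ by simpa using hxy
  have hI : Complex.I ^ 2 = -1 := Complex.I_sq
  have h_int : (2 * Real.pi * Complex.I * ((1 + b * (σ : ℂ) ^ 2) * logDeriv xiFun σ -
        ∑ ρ ∈ S, analyticOrderNatAt xiFun ρ * (1 + b * ρ ^ 2) / (σ - ρ)) -
      2 * Real.pi * Complex.I * ((1 + b * (-(σ : ℂ)) ^ 2) * -logDeriv xiFun σ -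
        ∑ ρ ∈ S, analyticOrderNatAt xiFun ρ * (1 + b * ρ ^ 2) / (-σ - ρ)) : ℂ) =
      ((2 * Real.pi : ℝ) : ℂ) * Complex.I * (((2 * σ : ℝ) : ℂ) * E) := by
    have e1 : ∑ ρ ∈ S, analyticOrderNatAt xiFun ρ * (1 + b * ρ ^ 2) / (σ - ρ) -
        ∑ ρ ∈ S, analyticOrderNatAt xiFun ρ * (1 + b * ρ ^ 2) / (-σ - ρ) = ((2 * σ : ℝ) : ℂ) *
        ∑ γ ∈ A, ((zetaMult γ * (1 - γ ^ 2 / R ^ 2) / (σ ^ 2 + γ ^ 2) : ℝ) : ℂ) := by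
      rw [hsumS, hsumS, ← Finset.sum_sub_distrib, Finset.mul_sum]
      refine Finset.sum_congr rfl fun γ _ ↦ ?_
      have n1 : (σ : ℂ) - Complex.I * γ ≠ 0 := fun h ↦ hσ.ne' (by simpa using congrArg Complex.re h)
      have n2 : -(σ : ℂ) - Complex.I * γ ≠ 0 := fun h ↦
        hσ.ne' (by simpa using congrArg Complex.re h)
      have n3 : (σ : ℂ) ^ 2 + (γ : ℂ) ^ 2 ≠ 0 := by
        have : 0 < σ ^ 2 + γ ^ 2 := by positivity
        exact_mod_cast this.ne'
      have n4 : ((σ : ℂ) - Complex.I * γ)⁻¹ - (-(σ : ℂ) - Complex.I * γ)⁻¹ =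
          2 * σ / ((σ : ℂ) ^ 2 + (γ : ℂ) ^ 2) := by
        field_simp
        linear_combination (-2 * (σ : ℂ) * (γ : ℂ) ^ 2) * hI
      rw [analyticOrderNatAt_xiFun, hbdef, div_eq_mul_inv, div_eq_mul_inv, ← mul_sub, n4, mul_pow,
        hI]
      push_cast
      ring
    have e2 : (1 + b * (σ : ℂ) ^ 2) * logDeriv xiFun σ =
        σ * ((1 + b * (σ : ℂ) ^ 2) * logDeriv xiFun σ / σ) := by field_simp
    rw [hE, ← mul_sub]
    push_cast at e1 ⊢
    linear_combination (-(2 * Real.pi * Complex.I)) * e1 + (4 * Real.pi * Complex.I) * e2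
  rw [h_int, norm_mul, norm_mul, norm_mul, Complex.norm_I, Complex.norm_real, Complex.norm_real,
    Real.norm_eq_abs, Real.norm_eq_abs, abs_of_pos (by positivity : (0 : ℝ) < 2 * Real.pi),
    abs_of_pos (by positivity : (0 : ℝ) < 2 * σ)] at hnorm
  have hE' : ‖E‖ ≤ 2 * K * ((1 + R) * √(1 + R)) / (R ^ 2 - σ ^ 2) := by
    have hc : 0 < 2 * Real.pi * (2 * σ) := by positivity
    refine le_of_mul_le_mul_left ?_ hc
    calc 2 * Real.pi * (2 * σ) * ‖E‖ = 2 * Real.pi * 1 * (2 * σ * ‖E‖) := by ring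
      _ ≤ _ := hnorm
      _ = _ := by
        field_simp
  have hsq : √(1 + R) ≤ 2 * √R := by
    rw [show (2 : ℝ) = √4 by rw [show (4 : ℝ) = 2 ^ 2 by norm_num]; simp, ← Real.sqrt_mul (by norm_num)]
    exact Real.sqrt_le_sqrt (by linarith)
  have hsR : 0 < √R := Real.sqrt_pos.mpr hR
  rw [hDE]
  refine (Complex.abs_re_le_norm E).trans (hE'.trans ?_)
  calc 2 * K * ((1 + R) * √(1 + R)) / (R ^ 2 - σ ^ 2)
      ≤ 2 * K * (2 * R * (2 * √R)) / (R ^ 2 / 2) := by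
        gcongr
        · linarith
        · nlinarith
    _ = 16 * K * (√R / R) := by
        field_simp
        ring
    _ = 16 * K / √R := by
        rw [Real.sqrt_div_self']
        ring

end SignHypothesis

end XiContour

section ZeroSums

namespace SignHypothesis

variable {ε C : ℝ} (h : SignHypothesis ε C)
include h

theorem exists_seq_zeros : ∃ (R : ℕ → ℝ) (A : ℕ → Finset ℝ), Tendsto R atTop atTop ∧
    (∀ n, 0 < R n) ∧ (∀ n γ, γ ∈ A n ↔ zetaMult γ ≠ 0 ∧ |γ| ≤ R n) ∧
    ∀ σ : ℝ, 0 < σ → Tendsto (fun n ↦ ∑ γ ∈ A n, zetaMult γ * (1 - γ ^ 2 / R n ^ 2) /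
      (σ ^ 2 + γ ^ 2)) atTop (𝓝 ((logDeriv xiFun σ).re / σ)) := by
  obtain ⟨K, hK, hb⟩ := h.exists_abs_sum_sub_le
  choose R hR hgood using fun n : ℕ ↦ exists_zetaMult_eq_zero (n + 1)
  have hRt : Tendsto R atTop atTop :=
    tendsto_atTop_mono (fun n ↦ (le_add_of_nonneg_right zero_le_one).trans (hR n))
      tendsto_natCast_atTop_atTop
  have hR1 : ∀ n, 1 ≤ R n := fun n ↦ by linarith [hR n, (Nat.cast_nonneg n : (0 : ℝ) ≤ n)]
  have hA : ∀ n γ, γ ∈ (finite_zetaMult_ne_zero (R n)).toFinset ↔ zetaMult γ ≠ 0 ∧ |γ| ≤ R n :=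
    fun n γ ↦ by simp
  refine ⟨R, fun n ↦ (finite_zetaMult_ne_zero (R n)).toFinset, hRt,
    fun n ↦ by linarith [hR1 n], hA, fun σ hσ ↦ ?_⟩
  set L := (logDeriv xiFun σ).re / σ
  have h1 : Tendsto (fun n ↦ (1 + σ ^ 2 / R n ^ 2) * L) atTop (𝓝 L) := by
    have : Tendsto (fun n ↦ σ ^ 2 / R n ^ 2) atTop (𝓝 0) :=
      tendsto_const_nhds.div_atTop ((tendsto_pow_atTop two_ne_zero).comp hRt)
    simpa using (this.const_add 1).mul_const L
  have h2 : Tendsto (fun n ↦ K / √(R n)) atTop (𝓝 0) :=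
    tendsto_const_nhds.div_atTop (Real.tendsto_sqrt_atTop.comp hRt)
  have h3 := squeeze_zero_norm' (a := fun n ↦ K / √(R n)) (f := fun n ↦
    (1 + σ ^ 2 / R n ^ 2) * L - ∑ γ ∈ (finite_zetaMult_ne_zero (R n)).toFinset,
      zetaMult γ * (1 - γ ^ 2 / R n ^ 2) / (σ ^ 2 + γ ^ 2)) (t₀ := atTop) (by
    filter_upwards [hRt.eventually_ge_atTop (2 * σ)] with n hn
    exact hb (R n) σ hσ hn (hR1 n) (hgood n) _ (hA n)) h2
  simpa using h1.sub h3

theorem sum_zetaMult_le {σ : ℝ} (hσ : 0 < σ) (T : Finset ℝ) :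
    ∑ γ ∈ T, zetaMult γ / (σ ^ 2 + γ ^ 2) ≤ (logDeriv xiFun σ).re / σ := by
  obtain ⟨R, A, hRt, hR0, hA, hlim⟩ := h.exists_seq_zeros
  have h1 : Tendsto (fun n ↦ ∑ γ ∈ T, zetaMult γ * (1 - γ ^ 2 / R n ^ 2) / (σ ^ 2 + γ ^ 2)) atTop
      (𝓝 (∑ γ ∈ T, zetaMult γ / (σ ^ 2 + γ ^ 2))) := by
    refine tendsto_finsetSum _ fun γ _ ↦ ?_
    have : Tendsto (fun n ↦ γ ^ 2 / R n ^ 2) atTop (𝓝 0) :=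
      tendsto_const_nhds.div_atTop ((tendsto_pow_atTop two_ne_zero).comp hRt)
    simpa using ((this.const_sub 1).const_mul (zetaMult γ : ℝ)).div_const (σ ^ 2 + γ ^ 2)
  refine le_of_tendsto_of_tendsto h1 (hlim σ hσ) ?_
  have hT : ∀ᶠ n in atTop, ∀ γ ∈ T, |γ| ≤ R n :=
    (Filter.eventually_all_finset T).mpr fun γ _ ↦ hRt.eventually_ge_atTop _
  filter_upwards [hT] with n hn
  rw [← Finset.sum_filter_ne_zero]
  refine Finset.sum_le_sum_of_subset_of_nonneg (fun γ hγ ↦ ?_) fun γ hγ _ ↦ ?_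
  · rw [Finset.mem_filter] at hγ
    refine (hA n γ).mpr ⟨fun h0 ↦ hγ.2 (by simp [h0]), hn γ hγ.1⟩
  · have : γ ^ 2 / R n ^ 2 ≤ 1 := by
      refine div_le_one_of_le₀ ?_ (by positivity)
      rw [← sq_abs]
      have := ((hA n γ).mp hγ).2
      gcongr
    have : 0 ≤ 1 - γ ^ 2 / R n ^ 2 := by linarith
    positivity

theorem re_logDeriv_xiFun_le {σ K : ℝ} (hσ : 0 < σ)
    (hK : ∀ T : Finset ℝ, ∑ γ ∈ T, zetaMult γ / (σ ^ 2 + γ ^ 2) ≤ K) :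
    (logDeriv xiFun σ).re / σ ≤ K := by
  obtain ⟨R, A, hRt, hR0, hA, hlim⟩ := h.exists_seq_zeros
  refine le_of_tendsto' (hlim σ hσ) fun n ↦ (Finset.sum_le_sum fun γ _ ↦ ?_).trans (hK (A n))
  gcongr
  refine mul_le_of_le_one_right (by positivity) ?_
  have : 0 ≤ γ ^ 2 / R n ^ 2 := by positivity
  linarith

end SignHypothesis

end ZeroSums

section Positivity

open Set MeasureTheory ProbabilityTheory

theorem sum_cexp_sub_eq (A : Finset ℝ) (t : ℝ) :
    ∑ a ∈ A, ∑ b ∈ A, Complex.exp (Complex.I * ((a - b : ℝ) : ℂ) * t) =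
      ((Complex.normSq (∑ a ∈ A, Complex.exp (Complex.I * a * t)) : ℝ) : ℂ) := by
  rw [← Complex.mul_conj, map_sum, Finset.sum_mul_sum]
  refine Finset.sum_congr rfl fun a _ ↦ Finset.sum_congr rfl fun b _ ↦ ?_
  rw [← Complex.exp_conj, ← Complex.exp_add]
  congr 1
  simp
  ring

theorem integral_mul_exp_Ioi {σ τ : ℝ} (hσ : 0 < σ) :
    IntegrableOn (fun y : ℝ ↦ ((σ * Real.exp (-σ * y) : ℝ) : ℂ) * Complex.exp (Complex.I * τ * y))
      (Ioi 0) ∧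
    ∫ y in Ioi (0 : ℝ), ((σ * Real.exp (-σ * y) : ℝ) : ℂ) * Complex.exp (Complex.I * τ * y) =
      σ / (σ - Complex.I * τ) := by
  have ha : (-(σ : ℂ) + Complex.I * τ).re < 0 := by simpa using hσ
  have e : (fun y : ℝ ↦ ((σ * Real.exp (-σ * y) : ℝ) : ℂ) * Complex.exp (Complex.I * τ * y)) =
      fun y : ℝ ↦ (σ : ℂ) * Complex.exp ((-(σ : ℂ) + Complex.I * τ) * y) := by
    funext y
    push_cast
    rw [mul_assoc, ← Complex.exp_add]
    ring_nf
  rw [e]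
  refine ⟨(integrableOn_exp_mul_complex_Ioi ha 0).const_mul _, ?_⟩
  rw [integral_const_mul, integral_exp_mul_complex_Ioi ha]
  have h1 : -(σ : ℂ) + Complex.I * τ ≠ 0 := fun h ↦ by simp [h] at ha
  have h2 : (σ : ℂ) - Complex.I * τ ≠ 0 := fun h ↦ h1 (by linear_combination -h)
  simp only [Complex.ofReal_zero, mul_zero, Complex.exp_zero]
  rw [show -(σ : ℂ) + Complex.I * τ = -(σ - Complex.I * τ) by ring, neg_div_neg_eq, mul_one_div]

/-- The limit `lim δ M(-1/2 + δ + iτ)` of the Mellin transform on its abscissa of convergence. -/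
noncomputable def boundaryCoeff (τ : ℝ) : ℂ :=
  (zetaMult τ + if τ = 0 then 1 / 2 else 0) / (1 / 2 - Complex.I * τ)

theorem re_boundaryCoeff_mul {σ : ℝ} (hσ : 1 ≤ σ) (τ : ℝ) :
    (boundaryCoeff τ * (σ / (σ - Complex.I * τ))).re =
      (if τ = 0 then 1 else 0) + σ / (σ - 1 / 2) *
        (zetaMult τ / ((1 / 2) ^ 2 + τ ^ 2) / 2 - σ * (zetaMult τ / (σ ^ 2 + τ ^ 2))) := by
  have h1 : σ - 1 / 2 ≠ 0 := by linarith
  have h2 : (1 / 2 : ℝ) ^ 2 + τ ^ 2 ≠ 0 := by positivity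
  have h3 : σ ^ 2 + τ ^ 2 ≠ 0 := by positivity
  have h4 : (1 / 2 - Complex.I * τ : ℂ) ≠ 0 := fun h ↦ by
    simpa using congrArg Complex.re h
  have h5 : (σ - Complex.I * τ : ℂ) ≠ 0 := fun h ↦ by
    have : σ = 0 := by simpa using congrArg Complex.re h
    linarith
  rcases eq_or_ne τ 0 with rfl | hτ
  · have : (boundaryCoeff 0 * (σ / (σ - Complex.I * (0 : ℝ)))) =
        ((2 * zetaMult 0 + 1 : ℝ) : ℂ) := by
      have h6 : (σ : ℂ) ≠ 0 := by simpa using h5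
      simp only [boundaryCoeff, if_true, Complex.ofReal_zero, mul_zero, sub_zero, div_self h6]
      push_cast
      ring
    rw [this, Complex.ofReal_re, if_pos rfl]
    have h7 : σ ≠ 0 := by linarith
    have h8 : 2 * σ - 1 ≠ 0 := by linarith
    field_simp
    ring
  · have e : (boundaryCoeff τ * (σ / (σ - Complex.I * τ))) =
        ((zetaMult τ * σ / (((1 / 2) ^ 2 + τ ^ 2) * (σ ^ 2 + τ ^ 2)) : ℝ) : ℂ) *
          ((σ / 2 - τ ^ 2 : ℝ) + Complex.I * ((σ + 1 / 2) * τ : ℝ)) := by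
      have h2' : ((1 / 2 : ℂ) ^ 2 + (τ : ℂ) ^ 2) ≠ 0 := by
        have : ((1 / 2 : ℂ) ^ 2 + (τ : ℂ) ^ 2) = (((1 / 2) ^ 2 + τ ^ 2 : ℝ) : ℂ) := by
          push_cast
          ring
        rw [this]
        exact Complex.ofReal_ne_zero.mpr h2
      have h3' : ((σ : ℂ) ^ 2 + (τ : ℂ) ^ 2) ≠ 0 := by exact_mod_cast h3
      have f1 : (1 / 2 - Complex.I * τ : ℂ)⁻¹ =
          (1 / 2 + Complex.I * τ) / ((1 / 2 : ℂ) ^ 2 + (τ : ℂ) ^ 2) := by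
        rw [eq_div_iff h2', inv_mul_eq_iff_eq_mul₀ h4]
        linear_combination (τ : ℂ) ^ 2 * Complex.I_sq
      have f2 : (σ - Complex.I * τ : ℂ)⁻¹ =
          (σ + Complex.I * τ) / ((σ : ℂ) ^ 2 + (τ : ℂ) ^ 2) := by
        rw [eq_div_iff h3', inv_mul_eq_iff_eq_mul₀ h5]
        linear_combination (τ : ℂ) ^ 2 * Complex.I_sq
      rw [boundaryCoeff, if_neg hτ, add_zero, div_eq_mul_inv, div_eq_mul_inv (σ : ℂ), f1, f2]
      push_cast
      generalize (1 / 2 : ℂ) ^ 2 + (τ : ℂ) ^ 2 = p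
      generalize (σ : ℂ) ^ 2 + (τ : ℂ) ^ 2 = q
      linear_combination ((zetaMult τ : ℂ) * σ * (τ : ℂ) ^ 2 / (p * q)) * Complex.I_sq
    rw [e, Complex.re_ofReal_mul]
    simp only [Complex.add_re, Complex.ofReal_re, Complex.I_mul_re, Complex.ofReal_im, neg_zero,
      add_zero, if_neg hτ, zero_add]
    have e2 : zetaMult τ / ((1 / 2) ^ 2 + τ ^ 2) / 2 - σ * (zetaMult τ / (σ ^ 2 + τ ^ 2)) =
        (σ - 1 / 2) * (zetaMult τ * (σ / 2 - τ ^ 2) /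
          (((1 / 2) ^ 2 + τ ^ 2) * (σ ^ 2 + τ ^ 2))) := by
      field_simp
      ring
    rw [e2, ← mul_assoc, div_mul_cancel₀ _ h1]
    ring

namespace SignHypothesis

variable {ε C : ℝ} (h : SignHypothesis ε C)
include h

theorem tendsto_mul_mellinMGF_boundaryCoeff (τ : ℝ) :
    Tendsto (fun δ : ℝ ↦ (δ : ℂ) * mellinMGF (shiftedDelta ε C) (-1 / 2 + δ + Complex.I * τ))
      (𝓝[>] 0) (𝓝 (boundaryCoeff τ)) := by
  simpa [boundaryCoeff, h.eq_one] using h.tendsto_mul_mellinMGF τ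

theorem re_sum_mellinMGF_nonneg (A : Finset ℝ) (y : ℝ) {δ : ℝ} (hδ : 0 < δ) :
    0 ≤ (∑ a ∈ A, ∑ b ∈ A, Complex.exp (Complex.I * ((a - b : ℝ) : ℂ) * y) *
      mellinMGF (shiftedDelta ε C) (-1 / 2 + δ + Complex.I * ((a - b : ℝ) : ℂ))).re := by
  set μ := mellinMeasure (shiftedDelta ε C)
  have hi : ∀ τ : ℝ, Integrable (fun x : ℝ ↦ Complex.exp (Complex.I * τ * y) *
      Complex.exp ((-1 / 2 + δ + Complex.I * τ) * ((-Real.log x : ℝ) : ℂ))) μ := fun τ ↦ by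
    refine Integrable.const_mul (integrable_cexp_mul_of_re_mem_integrableExpSet
      (X := fun x ↦ -Real.log x) (by fun_prop) (h.Ioi_subset ?_)) _
    simp [hδ]
  have e : ∑ a ∈ A, ∑ b ∈ A, Complex.exp (Complex.I * ((a - b : ℝ) : ℂ) * y) *
      mellinMGF (shiftedDelta ε C) (-1 / 2 + δ + Complex.I * ((a - b : ℝ) : ℂ)) =
      ∫ x, ((Real.exp ((-1 / 2 + δ) * -Real.log x) * Complex.normSq (∑ a ∈ A,
        Complex.exp (Complex.I * a * ((y - Real.log x : ℝ) : ℂ))) : ℝ) : ℂ) ∂μ := by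
    have e1 : ∀ x : ℝ, ((Real.exp ((-1 / 2 + δ) * -Real.log x) * Complex.normSq (∑ a ∈ A,
        Complex.exp (Complex.I * a * ((y - Real.log x : ℝ) : ℂ))) : ℝ) : ℂ) =
        ∑ a ∈ A, ∑ b ∈ A, Complex.exp (Complex.I * ((a - b : ℝ) : ℂ) * y) *
      Complex.exp ((-1 / 2 + δ + Complex.I * ((a - b : ℝ) : ℂ)) * ((-Real.log x : ℝ) : ℂ)) := by
      intro x
      rw [Complex.ofReal_mul, ← sum_cexp_sub_eq, Finset.mul_sum]
      refine Finset.sum_congr rfl fun a _ ↦ ?_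
      rw [Finset.mul_sum]
      refine Finset.sum_congr rfl fun b _ ↦ ?_
      push_cast
      rw [← Complex.exp_add, ← Complex.exp_add]
      ring_nf
    simp_rw [e1]
    rw [integral_finsetSum _ fun a _ ↦ integrable_finsetSum _ fun b _ ↦ hi _]
    refine Finset.sum_congr rfl fun a _ ↦ ?_
    rw [integral_finsetSum _ fun b _ ↦ hi _]
    refine Finset.sum_congr rfl fun b _ ↦ ?_
    rw [integral_const_mul]
    rfl
  rw [e, integral_complex_ofReal, Complex.ofReal_re]
  exact integral_nonneg fun x ↦ mul_nonneg (Real.exp_pos _).le (Complex.normSq_nonneg _)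

theorem re_sum_boundaryCoeff_nonneg (A : Finset ℝ) (y : ℝ) :
    0 ≤ (∑ a ∈ A, ∑ b ∈ A, boundaryCoeff (a - b) *
      Complex.exp (Complex.I * ((a - b : ℝ) : ℂ) * y)).re := by
  have hlim : Tendsto (fun δ : ℝ ↦ ∑ a ∈ A, ∑ b ∈ A,
      ((δ : ℂ) * mellinMGF (shiftedDelta ε C) (-1 / 2 + δ + Complex.I * ((a - b : ℝ) : ℂ))) *
      Complex.exp (Complex.I * ((a - b : ℝ) : ℂ) * y)) (𝓝[>] 0) (𝓝 (∑ a ∈ A, ∑ b ∈ A,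
      boundaryCoeff (a - b) * Complex.exp (Complex.I * ((a - b : ℝ) : ℂ) * y))) :=
    tendsto_finsetSum _ fun a _ ↦ tendsto_finsetSum _ fun b _ ↦
      (h.tendsto_mul_mellinMGF_boundaryCoeff (a - b)).mul_const _
  refine ge_of_tendsto ((Complex.continuous_re.tendsto _).comp hlim) ?_
  filter_upwards [self_mem_nhdsWithin] with δ hδ
  have h1 := mul_nonneg (le_of_lt hδ) (h.re_sum_mellinMGF_nonneg A y hδ)
  rw [← Complex.re_ofReal_mul, Finset.mul_sum] at h1
  refine h1.trans_eq ?_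
  rw [Function.comp_apply]
  congr 1
  refine Finset.sum_congr rfl fun a _ ↦ ?_
  rw [Finset.mul_sum]
  refine Finset.sum_congr rfl fun b _ ↦ ?_
  ring

theorem re_sum_boundaryCoeff_mul_nonneg (A : Finset ℝ) {σ : ℝ} (hσ : 0 < σ) :
    0 ≤ ∑ a ∈ A, ∑ b ∈ A,
      (boundaryCoeff (a - b) * (σ / (σ - Complex.I * ((a - b : ℝ) : ℂ)))).re := by
  have hi : ∀ τ : ℝ, IntegrableOn (fun y : ℝ ↦ boundaryCoeff τ *
      (((σ * Real.exp (-σ * y) : ℝ) : ℂ) * Complex.exp (Complex.I * τ * y))) (Ioi 0) := fun τ ↦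
    (integral_mul_exp_Ioi hσ).1.const_mul _
  have e : ∫ y in Ioi (0 : ℝ), ∑ a ∈ A, ∑ b ∈ A, boundaryCoeff (a - b) *
      (((σ * Real.exp (-σ * y) : ℝ) : ℂ) * Complex.exp (Complex.I * ((a - b : ℝ) : ℂ) * y)) =
      ∑ a ∈ A, ∑ b ∈ A, boundaryCoeff (a - b) * (σ / (σ - Complex.I * ((a - b : ℝ) : ℂ))) := by
    rw [integral_finsetSum _ fun a _ ↦ integrable_finsetSum _ fun b _ ↦ hi _]
    refine Finset.sum_congr rfl fun a _ ↦ ?_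
    rw [integral_finsetSum _ fun b _ ↦ hi _]
    refine Finset.sum_congr rfl fun b _ ↦ ?_
    rw [integral_const_mul, (integral_mul_exp_Ioi hσ).2]
  have hI : Integrable (fun y : ℝ ↦ ∑ a ∈ A, ∑ b ∈ A, boundaryCoeff (a - b) *
      (((σ * Real.exp (-σ * y) : ℝ) : ℂ) * Complex.exp (Complex.I * ((a - b : ℝ) : ℂ) * y)))
      (volume.restrict (Ioi 0)) :=
    integrable_finsetSum _ fun a _ ↦ integrable_finsetSum _ fun b _ ↦ hi _
  have hr := integral_re hI
  simp only [← Complex.re_sum]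
  rw [← e]
  refine le_trans (integral_nonneg fun y ↦ ?_) (le_of_eq hr)
  have h1 := mul_nonneg (mul_nonneg hσ.le (Real.exp_pos (-σ * y)).le)
    (h.re_sum_boundaryCoeff_nonneg A y)
  rw [← Complex.re_ofReal_mul, Finset.mul_sum] at h1
  refine h1.trans_eq ?_
  change _ = Complex.re _
  congr 1
  refine Finset.sum_congr rfl fun a _ ↦ ?_
  rw [Finset.mul_sum]
  refine Finset.sum_congr rfl fun b _ ↦ ?_
  ring

end SignHypothesis

end Positivity

section Folner

open Set

/-- Finite subsets of an abelian group admit almost invariant finite sets. -/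
theorem exists_almost_invariant (T : Finset ℝ) {η : ℝ} (hη : 0 < η) :
    ∃ A : Finset ℝ, A.Nonempty ∧ ∀ γ ∈ T,
      (1 - η) * (A.card : ℝ) ≤ ((A.filter fun a ↦ a - γ ∈ A).card : ℝ) := by
  set A : ℕ → Finset ℝ := fun N ↦ (Fintype.piFinset fun _ : T ↦ Finset.range (N + 1)).image
    fun n : T → ℕ ↦ ∑ t : T, (n t : ℝ) * (t : ℝ) with hA
  have hne : ∀ N, (A N).Nonempty := fun N ↦ by
    refine Finset.Nonempty.image ⟨0, ?_⟩ _
    simp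
  have hmono : ∀ N, A N ⊆ A (N + 1) := fun N ↦ by
    refine Finset.image_subset_image (Fintype.piFinset_subset _ _ fun _ ↦ ?_)
    exact Finset.range_subset_range.mpr (by omega)
  have hshift : ∀ N, ∀ γ ∈ T, (A N).image (fun a ↦ a + γ) ⊆ A (N + 1) := fun N γ hγ ↦ by
    intro x hx
    obtain ⟨a, ha, rfl⟩ := Finset.mem_image.mp hx
    obtain ⟨n, hn, rfl⟩ := Finset.mem_image.mp ha
    refine Finset.mem_image.mpr ⟨n + Pi.single ⟨γ, hγ⟩ 1, ?_, ?_⟩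
    · rw [Fintype.mem_piFinset] at hn ⊢
      intro t
      have h1 := Finset.mem_range.mp (hn t)
      rw [Finset.mem_range, Pi.add_apply]
      have : (Pi.single (⟨γ, hγ⟩ : T) 1 : T → ℕ) t ≤ 1 := by
        rw [Pi.single_apply]
        split_ifs <;> simp
      omega
    · simp only [Pi.add_apply, Nat.cast_add, add_mul, Finset.sum_add_distrib]
      congr 1
      rw [Finset.sum_eq_single ⟨γ, hγ⟩]
      · simp
      · intro t _ ht
        simp [ht]
      · simp
  have hcard : ∀ N, ((A N).card : ℝ) ≤ ((N : ℝ) + 1) ^ T.card := fun N ↦ by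
    have : (A N).card ≤ (N + 1) ^ T.card := by
      refine Finset.card_image_le.trans ?_
      simp [Fintype.card_piFinset]
    exact_mod_cast this
  obtain ⟨N, hN⟩ : ∃ N, ((A (N + 1)).card : ℝ) ≤ (1 + η) * (A N).card := by
    by_contra! hcon
    have hgrow : ∀ N, (1 + η) ^ N ≤ ((A N).card : ℝ) := by
      intro N
      induction N with
      | zero =>
        rw [pow_zero]
        exact_mod_cast Finset.card_pos.mpr (hne 0)
      | succ N ih =>
        refine le_trans ?_ (hcon N).le
        rw [pow_succ']
        gcongr
    have hlim := (tendsto_pow_const_div_const_pow_of_one_lt T.card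
      (show 1 < 1 + η by linarith)).comp (tendsto_add_atTop_nat 1)
    have h1 : ∀ᶠ N : ℕ in atTop, ((N + 1 : ℕ) : ℝ) ^ T.card / (1 + η) ^ (N + 1) < 1 / (1 + η) :=
      hlim.eventually_lt_const (by positivity)
    obtain ⟨N, hN⟩ := h1.exists
    rw [div_lt_div_iff₀ (by positivity) (by positivity), one_mul, pow_succ] at hN
    have h2 := (hgrow N).trans (hcard N)
    push_cast at hN
    have h3 := mul_le_mul_of_nonneg_right h2 (show 0 ≤ 1 + η by linarith)
    linarith
  refine ⟨A N, hne N, fun γ hγ ↦ ?_⟩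
  have e : (A N).filter (fun a ↦ a - γ ∈ A N) = A N ∩ (A N).image (fun a ↦ a + γ) := by
    ext a
    simp only [Finset.mem_filter, Finset.mem_inter, Finset.mem_image]
    refine and_congr_right fun _ ↦ ⟨fun h ↦ ⟨_, h, by ring⟩, ?_⟩
    rintro ⟨b, hb, rfl⟩
    simpa using hb
  have h1 := Finset.card_union_add_card_inter (A N) ((A N).image (fun a ↦ a + γ))
  have h2 : ((A N).image (fun a ↦ a + γ)).card = (A N).card :=
    Finset.card_image_of_injective _ (add_left_injective γ)
  have h3 := Finset.card_le_card (Finset.union_subset (hmono N) (hshift N γ hγ))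
  rw [h2] at h1
  rw [e]
  have h1' : (((A N ∪ (A N).image fun a ↦ a + γ).card : ℕ) : ℝ) +
      ((A N ∩ (A N).image fun a ↦ a + γ).card : ℕ) = (A N).card + (A N).card := by exact_mod_cast h1
  have h3' : (((A N ∪ (A N).image fun a ↦ a + γ).card : ℕ) : ℝ) ≤ (A (N + 1)).card := by
    exact_mod_cast h3
  linarith

theorem mul_sum_le_sum_sum {Q : ℝ → ℝ} (hQ : ∀ x, 0 ≤ Q x) {T A : Finset ℝ} {c : ℝ}
    (hA : ∀ γ ∈ T, c ≤ ((A.filter fun a ↦ a - γ ∈ A).card : ℝ)) :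
    c * ∑ γ ∈ T, Q γ ≤ ∑ a ∈ A, ∑ b ∈ A, Q (a - b) := by
  calc c * ∑ γ ∈ T, Q γ = ∑ γ ∈ T, c * Q γ := Finset.mul_sum _ _ _
    _ ≤ ∑ γ ∈ T, ∑ a ∈ A, if a - γ ∈ A then Q γ else 0 := by
        refine Finset.sum_le_sum fun γ hγ ↦ ?_
        rw [← Finset.sum_filter, Finset.sum_const, nsmul_eq_mul]
        exact mul_le_mul_of_nonneg_right (hA γ hγ) (hQ γ)
    _ = ∑ a ∈ A, ∑ γ ∈ T.filter (fun γ ↦ a - γ ∈ A), Q γ := by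
        rw [Finset.sum_comm]
        exact Finset.sum_congr rfl fun a _ ↦ (Finset.sum_filter _ _).symm
    _ ≤ ∑ a ∈ A, ∑ b ∈ A, Q (a - b) := by
        refine Finset.sum_le_sum fun a _ ↦ ?_
        have hinj : Function.Injective fun b : ℝ ↦ a - b := sub_right_injective
        rw [← Finset.sum_image (f := Q) (g := fun b ↦ a - b) (s := A) hinj.injOn]
        refine Finset.sum_le_sum_of_subset_of_nonneg (fun γ hγ ↦ ?_) fun _ _ _ ↦ hQ _
        rw [Finset.mem_filter] at hγ
        exact Finset.mem_image.mpr ⟨a - γ, hγ.2, by ring⟩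

namespace SignHypothesis

variable {ε C : ℝ} (h : SignHypothesis ε C)
include h

theorem mul_sum_zetaMult_le {σ : ℝ} (hσ : 1 ≤ σ) (T : Finset ℝ) :
    σ * ∑ γ ∈ T, zetaMult γ / (σ ^ 2 + γ ^ 2) ≤ 1 + (logDeriv xiFun ((1 / 2 : ℝ) : ℂ)).re := by
  set B := (logDeriv xiFun ((1 / 2 : ℝ) : ℂ)).re with hB
  set P : ℝ → ℝ := fun τ ↦ zetaMult τ / ((1 / 2) ^ 2 + τ ^ 2) / 2 with hP
  set Q : ℝ → ℝ := fun τ ↦ σ * (zetaMult τ / (σ ^ 2 + τ ^ 2)) with hQdef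
  have hQ : ∀ x, 0 ≤ Q x := fun x ↦ by
    have hσ0 : 0 < σ := by linarith
    simp only [hQdef]
    positivity
  have hPB : ∀ U : Finset ℝ, ∑ γ ∈ U, P γ ≤ B := fun U ↦ by
    have := h.sum_zetaMult_le (σ := 1 / 2) (by norm_num) U
    rw [hP, ← Finset.sum_div]
    linarith
  have hB0 : 0 ≤ B := by simpa using hPB ∅
  have key : ∀ A : Finset ℝ, ∑ a ∈ A, ∑ b ∈ A, Q (a - b) ≤ A.card * (1 + B) := fun A ↦ by
    have h1 := h.re_sum_boundaryCoeff_mul_nonneg A (show 0 < σ by linarith)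
    simp only [re_boundaryCoeff_mul hσ, Finset.sum_add_distrib, ← Finset.mul_sum,
      Finset.sum_sub_distrib] at h1
    have h2 : ∑ a ∈ A, ∑ b ∈ A, (if a - b = 0 then 1 else 0 : ℝ) = A.card := by
      simp [sub_eq_zero]
    have h3 : ∑ a ∈ A, ∑ b ∈ A, P (a - b) ≤ A.card * B := by
      rw [← nsmul_eq_mul, ← Finset.sum_const]
      refine Finset.sum_le_sum fun a _ ↦ ?_
      have hinj : Function.Injective fun b : ℝ ↦ a - b := sub_right_injective
      rw [← Finset.sum_image (f := P) (g := fun b ↦ a - b) (s := A) hinj.injOn]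
      exact hPB _
    rw [h2] at h1
    have h4 : 0 < σ - 1 / 2 := by linarith
    have h5 : 0 ≤ (A.card : ℝ) * ((σ - 1 / 2) / σ) + (∑ a ∈ A, ∑ b ∈ A, P (a - b) -
        ∑ a ∈ A, ∑ b ∈ A, Q (a - b)) := by
      have h6 : 0 ≤ (σ - 1 / 2) / σ := by positivity
      refine (mul_nonneg h6 h1).trans_eq ?_
      simp only [hP, hQdef, ← Finset.mul_sum]
      have h9 : (σ - 1 / 2) / σ * (σ / (σ - 1 / 2)) = 1 := by
        rw [div_mul_div_comm, mul_comm σ, div_self (mul_ne_zero h4.ne' (by linarith))]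
      rw [mul_add, ← mul_assoc, h9, one_mul, mul_comm]
    have h7 : (A.card : ℝ) * ((σ - 1 / 2) / σ) ≤ A.card * 1 := by
      gcongr
      exact (div_le_one (by linarith)).mpr (by linarith)
    linarith
  rw [Finset.mul_sum]
  change ∑ γ ∈ T, Q γ ≤ 1 + B
  have h8 : ∀ η : ℝ, 0 < η → (1 - η) * ∑ γ ∈ T, Q γ ≤ 1 + B := fun η hη ↦ by
    obtain ⟨A, hAne, hA⟩ := exists_almost_invariant T hη
    have h1 := (mul_sum_le_sum_sum hQ hA).trans (key A)
    have h2 : (0 : ℝ) < A.card := by exact_mod_cast hAne.card_pos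
    refine le_of_mul_le_mul_left ?_ h2
    linarith
  have hlim : Tendsto (fun η : ℝ ↦ (1 - η) * ∑ γ ∈ T, Q γ) (𝓝[>] 0) (𝓝 (∑ γ ∈ T, Q γ)) := by
    have : Continuous fun η : ℝ ↦ (1 - η) * ∑ γ ∈ T, Q γ := by fun_prop
    simpa using (this.tendsto 0).mono_left nhdsWithin_le_nhds
  refine le_of_tendsto hlim ?_
  filter_upwards [self_mem_nhdsWithin] with η hη using h8 η hη

theorem elim : False := by
  set B := (logDeriv xiFun ((1 / 2 : ℝ) : ℂ)).re
  obtain ⟨σ, h1, h2⟩ :=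
    ((h.tendsto_re_logDeriv_xiFun.eventually_gt_atTop (1 + B)).and (eventually_ge_atTop 1)).exists
  have hσ : 0 < σ := by linarith
  have h3 := h.re_logDeriv_xiFun_le hσ (K := (1 + B) / σ) fun T ↦ by
    rw [le_div_iff₀' hσ]
    exact h.mul_sum_zetaMult_le h2 T
  rw [div_le_div_iff_of_pos_right hσ] at h3
  linarith

end SignHypothesis

end Folner

section Translation

/-- The partial sums `γ + ∑_{i<r} log p_i / (p_i - 1)`. -/
noncomputable def eulerPartial (r : ℕ) : ℝ :=
  Real.eulerMascheroniConstant + ∑ i ∈ Finset.range r, primeCoeff (Nat.nth Nat.Prime i)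

theorem prime_nth (i : ℕ) : (Nat.nth Nat.Prime i).Prime :=
  Nat.nth_mem_of_infinite Nat.infinite_setOfPred_prime i

theorem nth_prime_strictMono : StrictMono (Nat.nth Nat.Prime) :=
  Nat.nth_strictMono Nat.infinite_setOfPred_prime

theorem eulerPartial_succ (r : ℕ) :
    eulerPartial (r + 1) = eulerPartial r + primeCoeff (Nat.nth Nat.Prime r) := by
  rw [eulerPartial, eulerPartial, Finset.sum_range_succ, add_assoc]

theorem primeCoeff_of_prime {p : ℕ} (hp : p.Prime) :
    primeCoeff p = Real.log p / ((p : ℝ) - 1) := by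
  rw [primeCoeff, if_pos hp]

theorem gammaR_eq (r : ℕ) : gammaR r =
    (∏ i ∈ Finset.range r, (1 - 1 / (Nat.nth Nat.Prime i : ℝ))) * eulerPartial r := by
  have hinj : Set.InjOn (Nat.nth Nat.Prime) (Finset.range r : Set ℕ) :=
    nth_prime_strictMono.injective.injOn
  rw [gammaR, gammaP, eulerPartial, Finset.prod_image hinj, Finset.sum_image hinj]
  simp only [primeCoeff_of_prime (prime_nth _)]

theorem exists_gammaR_succ_sub (r : ℕ) : ∃ k : ℝ, 0 < k ∧ gammaR (r + 1) - gammaR r =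
    k * (Real.log (Nat.nth Nat.Prime r) - eulerPartial r) := by
  have hp : ∀ i, (1 : ℝ) < Nat.nth Nat.Prime i := fun i ↦ by
    exact_mod_cast (prime_nth i).one_lt
  have hprod : 0 < ∏ i ∈ Finset.range r, (1 - 1 / (Nat.nth Nat.Prime i : ℝ)) :=
    Finset.prod_pos fun i _ ↦ by
      rw [sub_pos, div_lt_one (by linarith [hp i])]
      exact hp i
  refine ⟨_, div_pos hprod (zero_lt_one.trans (hp r)), ?_⟩
  rw [gammaR_eq, gammaR_eq, Finset.prod_range_succ, eulerPartial_succ,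
    primeCoeff_of_prime (prime_nth r)]
  have h1 : (Nat.nth Nat.Prime r : ℝ) ≠ 0 := by linarith [hp r]
  have h2 : (Nat.nth Nat.Prime r : ℝ) - 1 ≠ 0 := by linarith [hp r]
  field_simp
  ring

theorem gammaR_lt_succ_iff (r : ℕ) :
    gammaR r < gammaR (r + 1) ↔ eulerPartial r < Real.log (Nat.nth Nat.Prime r) := by
  obtain ⟨k, hk, e⟩ := exists_gammaR_succ_sub r
  rw [← sub_pos, e, mul_pos_iff_of_pos_left hk, sub_pos]

theorem gammaR_succ_lt_iff (r : ℕ) :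
    gammaR (r + 1) < gammaR r ↔ Real.log (Nat.nth Nat.Prime r) < eulerPartial r := by
  obtain ⟨k, hk, e⟩ := exists_gammaR_succ_sub r
  rw [← sub_neg, e, ← neg_pos, ← mul_neg, mul_pos_iff_of_pos_left hk, neg_sub, sub_pos]

theorem sum_primeCoeff_Icc (m : ℕ) : ∑ n ∈ Finset.Icc 1 m, primeCoeff n =
    ∑ i ∈ Finset.range (Nat.count Nat.Prime (m + 1)), primeCoeff (Nat.nth Nat.Prime i) := by
  rw [← Finset.sum_image nth_prime_strictMono.injective.injOn]
  symm
  refine Finset.sum_subset (fun n hn ↦ ?_) fun n hn hn' ↦ ?_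
  · obtain ⟨i, hi, rfl⟩ := Finset.mem_image.mp hn
    have := Nat.nth_lt_of_lt_count (Finset.mem_range.mp hi)
    exact Finset.mem_Icc.mpr ⟨(prime_nth i).one_lt.le, by omega⟩
  · rw [primeCoeff, if_neg]
    intro hp
    refine hn' (Finset.mem_image.mpr ⟨Nat.count Nat.Prime n, ?_, Nat.nth_count hp⟩)
    rw [Finset.mem_range]
    exact Nat.count_strict_mono hp (by have := (Finset.mem_Icc.mp hn).2; omega)

theorem primeDelta_eq (x : ℝ) : primeDelta x =
    eulerPartial (Nat.count Nat.Prime (⌊x⌋₊ + 1)) - Real.log x := by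
  rw [primeDelta, eulerPartial, sum_primeCoeff_Icc]

theorem tendsto_count_prime : Tendsto (Nat.count Nat.Prime) atTop atTop :=
  (Nat.count_monotone _).tendsto_atTop_atTop fun n ↦
    ⟨Nat.nth Nat.Prime n, (Nat.count_nth_of_infinite Nat.infinite_setOfPred_prime n).ge⟩

theorem tendsto_count_prime_floor :
    Tendsto (fun x : ℝ ↦ Nat.count Nat.Prime (⌊x⌋₊ + 1)) atTop atTop :=
  tendsto_count_prime.comp ((tendsto_add_atTop_nat 1).comp tendsto_nat_floor_atTop)

theorem lt_nth_count_floor {x : ℝ} :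
    x < Nat.nth Nat.Prime (Nat.count Nat.Prime (⌊x⌋₊ + 1)) := by
  refine (Nat.lt_floor_add_one x).trans_le ?_
  exact_mod_cast Nat.le_nth_count Nat.infinite_setOfPred_prime (⌊x⌋₊ + 1)

/-- A one-sided bound for large arguments suffices for the sign hypothesis. -/
theorem exists_signHypothesis {ε K : ℝ} (hε : |ε| = 1)
    (h : ∀ᶠ x in atTop, -(K * x ^ (-(3 / 4) : ℝ)) ≤ ε * primeDelta x) :
    ∃ C, SignHypothesis ε C := by
  obtain ⟨x₀, hx₀⟩ := (h.and (eventually_ge_atTop 1)).exists_forall_of_atTop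
  have h1 : 1 ≤ x₀ := (hx₀ x₀ le_rfl).2
  set M : ℝ := (|Real.eulerMascheroniConstant| + 2) * x₀ ^ (7 / 4 : ℝ) with hM
  have hM0 : 0 ≤ M := by positivity
  refine ⟨|K| + M, hε, by positivity, fun x hx ↦ ?_⟩
  have hx0 : 0 < x := by linarith
  have hpow : 0 < x ^ (-(3 / 4) : ℝ) := Real.rpow_pos_of_pos hx0 _
  rw [shiftedDelta]
  rcases le_total x₀ x with hle | hle
  · have h2 := (hx₀ x hle).1
    have h3 : K * x ^ (-(3 / 4) : ℝ) ≤ (|K| + M) * x ^ (-(3 / 4) : ℝ) := by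
      gcongr
      linarith [le_abs_self K]
    linarith
  · have h2 : |ε * primeDelta x| ≤ M * x ^ (-(3 / 4) : ℝ) := by
      rw [abs_mul, hε, one_mul]
      refine (abs_primeDelta_le hx).trans ?_
      have : x ^ (1 : ℝ) = x ^ (7 / 4 : ℝ) * x ^ (-(3 / 4) : ℝ) := by
        rw [← Real.rpow_add hx0]; norm_num
      rw [hM, mul_assoc, this]
      gcongr
    have h3 := neg_abs_le (ε * primeDelta x)
    have h4 := mul_nonneg (abs_nonneg K) hpow.le
    linarith

theorem infinite_gammaR_lt : {r : ℕ | gammaR r < gammaR (r + 1)}.Infinite := by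
  rw [← Nat.frequently_atTop_iff_infinite]
  intro hev
  have h1 : ∀ᶠ x : ℝ in atTop, -((0 : ℝ) * x ^ (-(3 / 4) : ℝ)) ≤ 1 * primeDelta x := by
    filter_upwards [tendsto_count_prime_floor.eventually hev, eventually_gt_atTop 0] with x hx hx0
    rw [gammaR_lt_succ_iff, not_lt] at hx
    have := Real.log_le_log hx0 (lt_nth_count_floor (x := x)).le
    rw [primeDelta_eq]
    linarith
  obtain ⟨C, hC⟩ := exists_signHypothesis abs_one h1
  exact hC.elim

theorem log_div_sub_one_le {y : ℝ} (hy : 2 ≤ y) :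
    Real.log y / (y - 1) ≤ 8 * y ^ (-(3 / 4) : ℝ) := by
  have h0 : 0 < y := by linarith
  have h1 := Real.log_le_rpow_div h0.le (show (0 : ℝ) < 1 / 4 by norm_num)
  have h2 : y ^ (1 / 4 : ℝ) = y * y ^ (-(3 / 4) : ℝ) := by
    nth_rewrite 2 [← Real.rpow_one y]
    rw [← Real.rpow_add h0]
    norm_num
  have h3 : 0 < y ^ (-(3 / 4) : ℝ) := Real.rpow_pos_of_pos h0 _
  rw [div_le_iff₀ (by linarith)]
  rw [h2] at h1
  nlinarith

theorem primeCoeff_le_of_le {p : ℕ} (hp : p.Prime) {x : ℝ} (hx : 0 < x) (hxp : x ≤ 2 * p) :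
    primeCoeff p ≤ 16 * x ^ (-(3 / 4) : ℝ) := by
  have hp2 : (2 : ℝ) ≤ p := by exact_mod_cast hp.two_le
  rw [primeCoeff_of_prime hp]
  refine (log_div_sub_one_le hp2).trans ?_
  have h1 : ((p : ℝ)) ^ (-(3 / 4) : ℝ) ≤ (x / 2) ^ (-(3 / 4) : ℝ) :=
    Real.rpow_le_rpow_of_nonpos (by positivity) (by linarith) (by norm_num)
  have h2 : (x / 2) ^ (-(3 / 4) : ℝ) = x ^ (-(3 / 4) : ℝ) * 2 ^ (3 / 4 : ℝ) := by
    rw [Real.div_rpow hx.le zero_le_two, Real.rpow_neg zero_le_two, div_inv_eq_mul]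
  have h3 : (2 : ℝ) ^ (3 / 4 : ℝ) ≤ 2 := by
    simpa using Real.rpow_le_rpow_of_exponent_le (one_le_two (α := ℝ)) (show (3 / 4 : ℝ) ≤ 1 by norm_num)
  have h4 : 0 < x ^ (-(3 / 4) : ℝ) := Real.rpow_pos_of_pos hx _
  rw [h2] at h1
  nlinarith

theorem infinite_gammaR_succ_lt : {r : ℕ | gammaR (r + 1) < gammaR r}.Infinite := by
  rw [← Nat.frequently_atTop_iff_infinite]
  intro hev
  have h1 : ∀ᶠ x : ℝ in atTop, -((16 : ℝ) * x ^ (-(3 / 4) : ℝ)) ≤ -1 * primeDelta x := by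
    filter_upwards [((tendsto_sub_atTop_nat 1).comp tendsto_count_prime_floor).eventually hev,
      eventually_ge_atTop 2] with x hx hx2
    have hfl : 2 ≤ ⌊x⌋₊ := Nat.le_floor (by exact_mod_cast hx2)
    set m := ⌊x⌋₊ with hm
    obtain ⟨r, hr⟩ : ∃ r, Nat.count Nat.Prime (m + 1) = r + 1 := by
      refine Nat.exists_eq_add_one.mpr ?_
      exact (Nat.count_monotone Nat.Prime (show 3 ≤ m + 1 by omega)).trans_lt' (by decide)
    simp only [Function.comp_apply, ← hm, hr, Nat.add_sub_cancel] at hx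
    rw [gammaR_succ_lt_iff, not_lt] at hx
    have hx0 : 0 < x := by linarith
    have hle : Nat.nth Nat.Prime r ≤ m := by
      have := Nat.nth_lt_of_lt_count (p := Nat.Prime) (n := m + 1) (k := r) (by omega)
      omega
    have hlex : (Nat.nth Nat.Prime r : ℝ) ≤ x := (Nat.le_floor_iff hx0.le).mp hle
    have h2 : x ≤ 2 * (Nat.nth Nat.Prime r : ℕ) := by
      obtain ⟨q, hq, hq1, hq2⟩ := Nat.exists_prime_lt_and_le_two_mul _ (prime_nth r).ne_zero
      have h3 : Nat.nth Nat.Prime (r + 1) ≤ q := by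
        rw [← Nat.nth_count hq]
        refine nth_prime_strictMono.monotone ?_
        have := Nat.count_strict_mono (prime_nth r) hq1
        rwa [Nat.count_nth_of_infinite Nat.infinite_setOfPred_prime] at this
      have h4 := lt_nth_count_floor (x := x)
      rw [← hm, hr] at h4
      have h5 : (Nat.nth Nat.Prime (r + 1) : ℝ) ≤ 2 * (Nat.nth Nat.Prime r : ℕ) := by
        exact_mod_cast h3.trans hq2
      linarith
    have h6 := primeCoeff_le_of_le (prime_nth r) hx0 h2
    have h7 := Real.log_le_log (by exact_mod_cast (prime_nth r).pos) hlex
    rw [primeDelta_eq, ← hm, hr, eulerPartial_succ]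
    linarith
  obtain ⟨C, hC⟩ := exists_signHypothesis (by simp) h1
  exact hC.elim

end Translation

/-- There are infinitely many `r` with `γ_{r+1} > γ_r` and infinitely many with
`γ_{r+1} < γ_r`. -/
theorem gammaR_not_monotone :
    {r : ℕ | gammaR r < gammaR (r + 1)}.Infinite ∧
    {r : ℕ | gammaR (r + 1) < gammaR r}.Infinite :=
  ⟨infinite_gammaR_lt, infinite_gammaR_succ_lt⟩
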